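/- Let n ≥ 2 and lambda = (lambda_1 > ... > lambda_n > 0) a strict partition. For every filling sigma in F(lambda), the following compression formula holds in Z[t]: the sum over all admissible pairs (w,T) in A(lambda) with f(w,T) = sigma of t^{(l(w)+l(wT)-|T|)/2} (1-t)^{|T|} equals t^{N(sigma)} (1-t)^{des(sigma)}. -/

import Mathlib

/-!
The pairs `(w, T)` of the fibre are summed one reflection of the chain at a time, and the factors of
the chain are treated in the order in which they occur.

Fix the set of column conditions already imposed, and let `acc Γ n Q N v` be the generating function
of the pairs `(w, J)` with `J` an admissible set of positions `< N` that end at the window `v`, weighted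
by `t^{(ℓ(w) - ℓ(v) - |J|)/2} (1-t)^{|J|}`. Adding one more reflection `t` to the chain acts on this
function of `v` by the transfer operator `Up t` (`acc_step`), and imposing a column condition
multiplies it by an indicator (`acc_check`). Without any condition or reflection it is constantly `1`
(`acc_zero`).

The local computation is that of a single factor: the transfer operators of `Γ'_k` or `Γ_j(k)`, applied
to the indicator of the windows starting with a column `D`, take at every window starting with the next
column `C` the value `t^{N(D,C)} (1-t)^{des(D,C)}` (`trans_P`, `trans_U`). For the reflections `(r,-j)`
with `r < j` the set of used reflections is forced by `D` and `C`, and each length drop is the statistic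
`N(D, D(r,-j))` (`N1_eq`, `push_prime`). In the remaining part of `Γ_j(k)` several choices lead to the
same entry in position `j`, and their contributions telescope into one term (`push_delta`). The
candidates for the statistics `N` and `des` are shown to be unique in `cand_eq`.

Consequently, after the last column `C_{1,1}`, which is the whole window, the generating function is
supported at that single window and equals the product of all the `t^{N} (1-t)^{des}`
(`acc_track`). The factors `Γ_1(n) ⋯ Γ_n(n)` then remain, with no further column condition, together
with the weight `t^{ℓ(v)}` of the final window `v = wT`. Passing through these reflections backwards
replaces `ℓ = ℓ₊ + ℓ₋` by `ℓ₊` plus ever smaller parts of `ℓ₋`, because the use and the non-use of `(r,-j)`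
combine as `t^e (1-t) + t^e t = t^e` (`phi_neg`, `phi_bar`, `phi_total`). What is left is
`t^{ℓ₊(C_{1,1})}`, and `compress` assembles the formula; `fMap_eq_iff` identifies the column conditions
with membership in the fibre of the filling map.
-/

open scoped BigOperators

namespace HL

/-! ### The order `≺` on nonzero integers in `[-n,n]`:
`1 ≺ 2 ≺ ... ≺ n ≺ -n ≺ -(n-1) ≺ ... ≺ -1`. -/

def slt (a b : ℤ) : Prop :=
  (0 < a ∧ b < 0) ∨ (0 < a ∧ 0 < b ∧ a < b) ∨ (a < 0 ∧ b < 0 ∧ a < b)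

instance slt.dec (a b : ℤ) : Decidable (slt a b) := by unfold slt; infer_instance

def sle (a b : ℤ) : Prop := slt a b ∨ a = b

instance sle.dec (a b : ℤ) : Decidable (sle a b) := by unfold sle; infer_instance

/-! ### Signed permutations (windows), reflections acting on the right -/

/-- The right action of a reflection on a window (or column), with 1-based
positions.  The reflection `(i, j)` with `j > 0` transposes positions `i` and
`j`; the reflection `(i, -j)` (i.e. `(i,\bar\jmath)`) with `i ≠ j` transposes
positions `i, j` and negates both entries; `(i, -i)` negates position `i`. -/
def applyRefl (l : List ℤ) (t : ℕ × ℤ) : List ℤ :=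
  if 0 < t.2 then
    (l.set (t.1 - 1) (l.getD (t.2.toNat - 1) 0)).set (t.2.toNat - 1) (l.getD (t.1 - 1) 0)
  else
    if t.1 = (-t.2).toNat then l.set (t.1 - 1) (-(l.getD (t.1 - 1) 0))
    else (l.set (t.1 - 1) (-(l.getD ((-t.2).toNat - 1) 0))).set ((-t.2).toNat - 1)
          (-(l.getD (t.1 - 1) 0))

def applyAll (w : List ℤ) (T : List (ℕ × ℤ)) : List ℤ := T.foldl applyRefl w

/-- The word `w[i,j] = w(i) w(i+1) ... w(j)`, 1-based and inclusive. -/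
def word (l : List ℤ) (i j : ℕ) : List ℤ := (l.drop (i - 1)).take (j + 1 - i)

/-- `N_{ab}(u)` = number of letters `c` of the word `u` with `a ≺ c ≺ b`. -/
def Nab (a b : ℤ) (u : List ℤ) : ℕ :=
  (u.filter (fun c => decide (slt a c ∧ slt c b))).length

/-- `ℓ₊(w) = #{(k,l) : k < l, w(k) ≻ w(l)}`. -/
def lplus (l : List ℤ) : ℕ :=
  (((Finset.range l.length) ×ˢ (Finset.range l.length)).filter
    (fun p => p.1 < p.2 ∧ slt (l.getD p.2 0) (l.getD p.1 0))).card

/-- `ℓ₋(w) = #{(k,l) : k ≤ l, w(k) ≻ -w(l)}`. -/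
def lminus (l : List ℤ) : ℕ :=
  (((Finset.range l.length) ×ˢ (Finset.range l.length)).filter
    (fun p => p.1 ≤ p.2 ∧ slt (-(l.getD p.2 0)) (l.getD p.1 0))).card

/-- The Coxeter length of a signed permutation given by its window. -/
def len (l : List ℤ) : ℕ := lplus l + lminus l

/-- The (finite) set of windows of all signed permutations in `B_n`. -/
def allWindows (n : ℕ) : Finset (List ℤ) :=
  Finset.image (fun w : Equiv.Perm (Fin n) × (Fin n → Bool) =>
    (List.finRange n).map (fun i =>
      if w.2 i then -(((w.1 i : ℕ) : ℤ) + 1) else ((w.1 i : ℕ) : ℤ) + 1)) Finset.univ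

/-- `w`-admissibility of a sequence of reflections: a strictly decreasing
chain in Bruhat order (recorded via the length function). -/
def decChain : List ℤ → List (ℕ × ℤ) → Bool
  | _, [] => true
  | w, t :: ts => (decide (len (applyRefl w t) < len w)) && decChain (applyRefl w t) ts

/-- Increasing-admissibility: a strictly increasing chain. -/
def incChain : List ℤ → List (ℕ × ℤ) → Bool
  | _, [] => true
  | w, t :: ts => (decide (len w < len (applyRefl w t))) && incChain (applyRefl w t) ts

/-- The subsequence of a chain `Γ` selected by a set `J` of (0-based) positions. -/
def selChain (Γ : List (ℕ × ℤ)) (J : Finset ℕ) : List (ℕ × ℤ) :=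
  (J.sort (· ≤ ·)).map (fun j => Γ.getD j (0, 0))

/-! ### The `λ`-chain of type `C_n` -/

/-- `Γ'_j = ((1,-j),(2,-j),...,(j-1,-j))`. -/
def gammaPrime (j : ℕ) : List (ℕ × ℤ) := (List.range (j - 1)).map (fun r => (r + 1, -(j : ℤ)))

/-- `Γ_j(k) = ((1,-j),...,(j-1,-j),(j,-(k+1)),...,(j,-n),(j,-j),(j,n),...,(j,k+1))`. -/
def gammaJK (n j k : ℕ) : List (ℕ × ℤ) :=
  gammaPrime j
    ++ (List.range (n - k)).map (fun r => (j, -((k + 1 + r : ℕ) : ℤ)))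
    ++ [(j, -(j : ℤ))]
    ++ (List.range (n - k)).map (fun r => (j, ((n - r : ℕ) : ℤ)))

/-- `Γ(k) = Γ'_2 ⋯ Γ'_k Γ_1(k) ⋯ Γ_k(k)` (type `C_n`). -/
def gammaChain (n k : ℕ) : List (ℕ × ℤ) :=
  ((List.range (k - 1)).map (fun r => gammaPrime (r + 2))).flatten
    ++ ((List.range k).map (fun r => gammaJK n (r + 1) k)).flatten

/-- `λ'_i = #{j : λ_j ≥ i}`, the conjugate partition. -/
def conj (n : ℕ) (lam : Fin n → ℕ) (i : ℕ) : ℕ :=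
  (Finset.univ.filter (fun j : Fin n => i ≤ lam j)).card

/-- `λ_1`, the largest part. -/
def lamOne (n : ℕ) (lam : Fin n → ℕ) : ℕ := Finset.univ.sup lam

/-- The fixed `λ`-chain `Γ = Γ^{λ_1} Γ^{λ_1-1} ⋯ Γ^1` with `Γ^i = Γ(λ'_i)`. -/
def lambdaChain (n : ℕ) (lam : Fin n → ℕ) : List (ℕ × ℤ) :=
  ((List.range (lamOne n lam)).map
    (fun r => gammaChain n (conj n lam (lamOne n lam - r)))).flatten

/-- The set `A(λ)` of admissible pairs `(w, J)`. -/
def ASet (n : ℕ) (lam : Fin n → ℕ) : Set (List ℤ × Finset ℕ) :=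
  {p | p.1 ∈ allWindows n ∧ p.2 ⊆ Finset.range (lambdaChain n lam).length ∧
    decChain p.1 (selChain (lambdaChain n lam) p.2) = true}

/-! ### Roots, coroots, affine reflections, and the weight `μ(T)` -/

/-- The root of type `C_n` corresponding to a symbol: `(i,j) ↦ ε_i - ε_j`,
`(i,-j) ↦ ε_i + ε_j` for `i < j`, and `(i,-i) ↦ 2ε_i`. -/
def rootVec (n : ℕ) (β : ℕ × ℤ) : Fin n → ℤ := fun r =>
  (if ((r : ℕ) + 1 : ℤ) = (β.1 : ℤ) then 1 else 0) +
  (if 0 < β.2 then (if ((r : ℕ) + 1 : ℤ) = β.2 then -1 else 0)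
   else (if ((r : ℕ) + 1 : ℤ) = -β.2 then 1 else 0))

/-- The coroot (type `C_n`): `(2ε_i)^∨ = ε_i`, the long rootss are unchanged. -/
def corootVec (n : ℕ) (β : ℕ × ℤ) : Fin n → ℤ :=
  if β.2 = -(β.1 : ℤ) then (fun r => if ((r : ℕ) + 1 : ℤ) = (β.1 : ℤ) then 1 else 0)
  else rootVec n β

/-- Standard inner product on `ℤ^n`. -/
def ip (n : ℕ) (u v : Fin n → ℤ) : ℤ := ∑ r, u r * v r

/-- The affine reflection in the hyperplane `{v : ⟨v, β^∨⟩ = c}`. -/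
def affRefl (n : ℕ) (β : ℕ × ℤ) (c : ℤ) (v : Fin n → ℤ) : Fin n → ℤ :=
  fun r => v r - (ip n v (corootVec n β) - c) * rootVec n β r

/-- `l_k = #{j ≤ k : β_j = β_k}` (here `k` is 0-based). -/
def lCount (Γ : List (ℕ × ℤ)) (k : ℕ) : ℕ := (Γ.take (k + 1)).count (Γ.getD k (0, 0))

/-- `μ(J) = \hat r_{j_1} ⋯ \hat r_{j_s}(λ)` for `J = {j_1 < ... < j_s}`. -/
def muJ (n : ℕ) (Γ : List (ℕ × ℤ)) (lamVec : Fin n → ℤ) (J : Finset ℕ) : Fin n → ℤ :=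
  (J.sort (· ≤ ·)).foldr (fun j v => affRefl n (Γ.getD j (0, 0)) ((lCount Γ j : ℕ) : ℤ) v) lamVec

/-- The linear action of a signed permutation (given by its window) on `ℤ^n`:
`w(ε_i) = ε_{w(i)}` with `ε_{-i} = -ε_i`. -/
def wAct (n : ℕ) (w : List ℤ) (v : Fin n → ℤ) : Fin n → ℤ := fun r =>
  ∑ i : Fin n, ((if w.getD i 0 = ((r : ℕ) + 1 : ℤ) then v i else 0) +
    (if w.getD i 0 = -(((r : ℕ) + 1 : ℤ)) then -(v i) else 0))

def lamVec (n : ℕ) (lam : Fin n → ℕ) : Fin n → ℤ := fun i => (lam i : ℤ)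

/-! ### Fillings of the doubled shape `\hat λ` -/

/-- A filling of the doubled shape, recorded by its primed columns `C'_{i,k}`
(`Cp i k`) and unprimed columns `C_{i,j}` (`Cu i j`). -/
structure Filling where
  Cp : ℕ → ℕ → List ℤ
  Cu : ℕ → ℕ → List ℤ

def validP (n : ℕ) (lam : Fin n → ℕ) (i k : ℕ) : Prop :=
  1 ≤ i ∧ i ≤ lamOne n lam ∧ 2 ≤ k ∧ k ≤ conj n lam i

def validU (n : ℕ) (lam : Fin n → ℕ) (i j : ℕ) : Prop :=
  1 ≤ i ∧ i ≤ lamOne n lam ∧ 1 ≤ j ∧ j ≤ conj n lam i ∧ (i = 1 → j = 1)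

instance validP.dec (n : ℕ) (lam : Fin n → ℕ) (i k : ℕ) : Decidable (validP n lam i k) := by
  unfold validP; infer_instance

instance validU.dec (n : ℕ) (lam : Fin n → ℕ) (i j : ℕ) : Decidable (validU n lam i j) := by
  unfold validU; infer_instance

/-- The right neighbour `C'_{i,k+1}` of `C'_{i,k}`, with the convention
`C'_{i,λ'_i+1} = C_{i,1}`. -/
def CpNxt (n : ℕ) (lam : Fin n → ℕ) (F : Filling) (i k : ℕ) : List ℤ :=
  if k < conj n lam i then F.Cp i (k + 1) else F.Cu i 1

/-- The right neighbour `C_{i,j+1}` of `C_{i,j}`, with the conventions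
`C_{i,λ'_i+1} = C'_{i-1,2}` (if `λ'_{i-1} > 1`) and `C_{i,λ'_i+1} = C_{i-1,1}`
(if `λ'_{i-1} = 1`). -/
def CuNxt (n : ℕ) (lam : Fin n → ℕ) (F : Filling) (i j : ℕ) : List ℤ :=
  if j < conj n lam i then F.Cu i (j + 1)
  else if 2 ≤ conj n lam (i - 1) then F.Cp (i - 1) 2 else F.Cu (i - 1) 1

/-- No two entries `a, b` of a column with `a = ±b`. -/
def colDistinct (c : List ℤ) : Prop :=
  ∀ p q : ℕ, p < q → q < c.length →
    c.getD p 0 ≠ c.getD q 0 ∧ c.getD p 0 ≠ -(c.getD q 0)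

/-- `R = (r_1 < r_2 < ... < r_p)` with `1 ≤ r_t < j ≤ d`. -/
def sortedR (R : List ℕ) (j d : ℕ) : Prop :=
  List.Chain' (· < ·) R ∧ (∀ r ∈ R, 1 ≤ r ∧ r < j) ∧ 1 ≤ j ∧ j ≤ d

/-- `D (r_1,-j) (r_2,-j) ⋯ (r_p,-j)`. -/
def cycleApply (D : List ℤ) (R : List ℕ) (j : ℕ) : List ℤ :=
  R.foldl (fun E r => applyRefl E (r, -(j : ℤ))) D

/-- The relation between `C_{i,j+1}[1,λ'_i] = E` and `C_{i,j} = D` in a filling: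
`E` differs from `D' = D(r_1,-j)⋯(r_p,-j)` only in position `j`,
`E(j) ∉ {±D'(r) : r ≠ j}` and `E(j) ⪯ D'(j)`. -/
def unprimedTrans (D E : List ℤ) (R : List ℕ) (j d : ℕ) : Prop :=
  (∀ r, 1 ≤ r → r ≤ d → r ≠ j →
    E.getD (r - 1) 0 = (cycleApply D R j).getD (r - 1) 0) ∧
  (∀ r, 1 ≤ r → r ≤ d → r ≠ j →
    E.getD (j - 1) 0 ≠ (cycleApply D R j).getD (r - 1) 0 ∧
    E.getD (j - 1) 0 ≠ -((cycleApply D R j).getD (r - 1) 0)) ∧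
  sle (E.getD (j - 1) 0) ((cycleApply D R j).getD (j - 1) 0)

/-- The set `F(λ)` of fillings of the doubled shape `\hat λ`. -/
def FSet (n : ℕ) (lam : Fin n → ℕ) : Set Filling :=
  {F |
    -- shape
    (∀ i k, (validP n lam i k → (F.Cp i k).length = conj n lam i) ∧
      (¬ validP n lam i k → F.Cp i k = [])) ∧
    (∀ i j, (validU n lam i j → (F.Cu i j).length = conj n lam i) ∧
      (¬ validU n lam i j → F.Cu i j = [])) ∧
    -- entries lie in `{±1, ..., ±n}`
    (∀ i k, validP n lam i k → ∀ a ∈ F.Cp i k, 1 ≤ a.natAbs ∧ a.natAbs ≤ n) ∧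
    (∀ i j, validU n lam i j → ∀ a ∈ F.Cu i j, 1 ≤ a.natAbs ∧ a.natAbs ≤ n) ∧
    -- (1) rows weakly decrease from left to right
    (∀ i k, validP n lam i k → ∀ r, 1 ≤ r → r ≤ conj n lam i →
      sle ((CpNxt n lam F i k).getD (r - 1) 0) ((F.Cp i k).getD (r - 1) 0)) ∧
    (∀ i j, 2 ≤ i → validU n lam i j → ∀ r, 1 ≤ r → r ≤ conj n lam i →
      sle ((CuNxt n lam F i j).getD (r - 1) 0) ((F.Cu i j).getD (r - 1) 0)) ∧
    -- (2) no column contains `a, b` with `a = ±b`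
    (∀ i k, validP n lam i k → colDistinct (F.Cp i k)) ∧
    (∀ i j, validU n lam i j → colDistinct (F.Cu i j)) ∧
    -- (3) primed transitions: `C'_{i,k+1} = C'_{i,k}(r_1,-k)⋯(r_p,-k)`
    (∀ i k, validP n lam i k → ∃ R : List ℕ, sortedR R k (conj n lam i) ∧
      CpNxt n lam F i k = cycleApply (F.Cp i k) R k) ∧
    -- (3) unprimed transitions
    (∀ i j, 2 ≤ i → validU n lam i j → ∃ R : List ℕ, sortedR R j (conj n lam i) ∧
      unprimedTrans (F.Cu i j) ((CuNxt n lam F i j).take (conj n lam i)) R j (conj n lam i))}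

/-! ### The filling map `f` -/

/-- Offset in `Γ` of the beginning of block `Γ^i` (the blocks are listed for
`i = λ_1` down to `1`). -/
def offsetBlock (n : ℕ) (lam : Fin n → ℕ) (i : ℕ) : ℕ :=
  ∑ r ∈ Finset.Ico (i + 1) (lamOne n lam + 1), (gammaChain n (conj n lam r)).length

/-- Offset in `Γ` of the beginning of the factor `Γ'_{i,k}`.-/
def offsetP (n : ℕ) (lam : Fin n → ℕ) (i k : ℕ) : ℕ :=
  offsetBlock n lam i + ∑ j ∈ Finset.Ico 2 k, (gammaPrime j).length

/-- Offset in `Γ` of the beginning of the factor `Γ_{i,j}`.-/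
def offsetU (n : ℕ) (lam : Fin n → ℕ) (i j : ℕ) : ℕ :=
  offsetBlock n lam i + (∑ k ∈ Finset.Ico 2 (conj n lam i + 1), (gammaPrime k).length)
    + ∑ j' ∈ Finset.Ico 1 j, (gammaJK n j' (conj n lam i)).length

/-- `π = w ⋅ (all selected reflections at positions < off)`. -/
def piW (n : ℕ) (lam : Fin n → ℕ) (w : List ℤ) (J : Finset ℕ) (off : ℕ) : List ℤ :=
  applyAll w (selChain (lambdaChain n lam) (J.filter (fun x => x < off)))

/-- The filling map `f`, sending an (admissible) pair `(w, J)` to a filling of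
the doubled shape `\hat λ`. -/
def fMap (n : ℕ) (lam : Fin n → ℕ) (w : List ℤ) (J : Finset ℕ) : Filling where
  Cp := fun i k => if validP n lam i k
    then (piW n lam w J (offsetP n lam i k)).take (conj n lam i) else []
  Cu := fun i j => if validU n lam i j
    then (piW n lam w J (offsetU n lam i j)).take (conj n lam i) else []

/-! ### Content of a filling -/

/-- The columns `\bar{C}^i = C'_{i,2} C_{i,1}` (left to right, `i = λ_1, ..., 1`)
of the compressed filling `\barσ` of shape `2λ`; by the conventions,
`C'_{i,2} = C_{i,1}` when `λ'_i = 1`. -/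
def compCols (n : ℕ) (lam : Fin n → ℕ) (F : Filling) : List (List ℤ) :=
  ((List.range (lamOne n lam)).map (fun t =>
    [(if 2 ≤ conj n lam (lamOne n lam - t) then F.Cp (lamOne n lam - t) 2
      else F.Cu (lamOne n lam - t) 1), F.Cu (lamOne n lam - t) 1])).flatten

/-- The content of a list of columns: the `i`-th coordinate is half the
difference between the numbers of occurrences of `i` and of `-i`. -/
def ctCols (n : ℕ) (cols : List (List ℤ)) : Fin n → ℚ := fun r =>
  ((cols.flatten.count (((r : ℕ) + 1 : ℕ) : ℤ) : ℚ) -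
    (cols.flatten.count (-(((r : ℕ) + 1 : ℕ) : ℤ)) : ℚ)) / 2

/-- The content `ct(σ)` of a filling `σ` of `\hatλ`. -/
def ctQ (n : ℕ) (lam : Fin n → ℕ) (F : Filling) : Fin n → ℚ :=
  ctCols n (compCols n lam F)

/-! ### The statistics `N(D,C)` and `des(D,C)` -/

/-- `σ_{ab} = 1` if `a` and `b` are both negative, else `0`. -/
def sigmaAB (a b : ℤ) : ℕ := if a < 0 ∧ b < 0 then 1 else 0

def allEntries (n : ℕ) : List ℤ :=
  (List.range n).map (fun r => ((r + 1 : ℕ) : ℤ)) ++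
    (List.range n).map (fun r => -((r + 1 : ℕ) : ℤ))

/-- Case 1: `N(D, D(r,-j)) = N_{\bar b, a}(D[r+1,j-1]) +
#{c : \bar b ≺ c ≺ a, c ∉ ±D[1,j]} + σ_{ab}` where `a = D(r)`, `b = D(j)`. -/
def N1 (n : ℕ) (D : List ℤ) (r j : ℕ) : ℕ :=
  Nab (-(D.getD (j - 1) 0)) (D.getD (r - 1) 0) (word D (r + 1) (j - 1)) +
  ((allEntries n).filter (fun c => decide (slt (-(D.getD (j - 1) 0)) c ∧
    slt c (D.getD (r - 1) 0) ∧ c ∉ D.take j ∧ c ∉ (D.take j).map (fun x => -x)))).length +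
  sigmaAB (D.getD (r - 1) 0) (D.getD (j - 1) 0)

/-- Case 2: `N(D, D(r_1,-j)⋯(r_p,-j)) = ∑ N(D_{t-1}, D_t)`. -/
def cycleN (n : ℕ) : List ℤ → List ℕ → ℕ → ℕ
  | _, [], _ => 0
  | D, r :: rs, j => N1 n D r j + cycleN n (applyRefl D (r, -(j : ℤ))) rs j

/-- The possible values `(N(D,C), des(D,C))` arising from the case-by-case
definition of the statistics (cases 0, 2, 3; case 1 is case 2 with `p = 1`).
If `C` is one box taller than `D`, `C` is replaced by `C[1,d]`. -/
def NdesCand (n : ℕ) (D C : List ℤ) : Set (ℕ × ℕ) :=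
  {x |
    (C.take D.length = D ∧ x = (0, 0)) ∨
    (∃ j R, sortedR R j D.length ∧ R ≠ [] ∧ C.take D.length = cycleApply D R j ∧
      x = (cycleN n D R j, R.length)) ∨
    (∃ j R, sortedR R j D.length ∧
      (∀ r, 1 ≤ r → r ≤ D.length → r ≠ j →
        (C.take D.length).getD (r - 1) 0 = (cycleApply D R j).getD (r - 1) 0) ∧
      (∀ r, 1 ≤ r → r ≤ D.length → r ≠ j →
        (C.take D.length).getD (j - 1) 0 ≠ (cycleApply D R j).getD (r - 1) 0 ∧
        (C.take D.length).getD (j - 1) 0 ≠ -((cycleApply D R j).getD (r - 1) 0)) ∧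
      slt ((C.take D.length).getD (j - 1) 0) ((cycleApply D R j).getD (j - 1) 0) ∧
      x = (cycleN n D R j +
        Nab ((C.take D.length).getD (j - 1) 0) ((cycleApply D R j).getD (j - 1) 0)
          (word D (j + 1) D.length), R.length + 1))}

noncomputable def Nstat (n : ℕ) (D C : List ℤ) : ℕ :=
  sInf {v | ∃ d, (v, d) ∈ NdesCand n D C}

noncomputable def desStat (n : ℕ) (D C : List ℤ) : ℕ :=
  sInf {d | ∃ v, (v, d) ∈ NdesCand n D C}

/-- All columns of a filling of `\hatλ`, listed from left to right. -/
def colList (n : ℕ) (lam : Fin n → ℕ) (F : Filling) : List (List ℤ) :=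
  ((List.range (lamOne n lam)).map (fun t =>
    ((List.range (conj n lam (lamOne n lam - t) - 1)).map
      (fun s => F.Cp (lamOne n lam - t) (s + 2))) ++
    (if lamOne n lam - t = 1 then [F.Cu 1 1]
     else (List.range (conj n lam (lamOne n lam - t))).map
      (fun s => F.Cu (lamOne n lam - t) (s + 1))))).flatten

/-- Sum of a binary statistic over adjacent pairs of a list. -/
def adjSumN (f : List ℤ → List ℤ → ℕ) : List (List ℤ) → ℕ
  | a :: b :: rest => f a b + adjSumN f (b :: rest)
  | _ => 0

/-- `N(σ) = ∑_{i=1}^{m-1} N(C_{i+1}, C_i) + ℓ₊(C_1)`. -/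
noncomputable def Nsigma (n : ℕ) (lam : Fin n → ℕ) (F : Filling) : ℕ :=
  adjSumN (Nstat n) (colList n lam F) + lplus ((colList n lam F).getLastD [])

/-- `des(σ) = ∑_{i=1}^{m-1} des(C_{i+1}, C_i)`. -/
noncomputable def desSigma (n : ℕ) (lam : Fin n → ℕ) (F : Filling) : ℕ :=
  adjSumN (desStat n) (colList n lam F)

/-! ### Statistics on fillings of the plain shape `λ` (for Proposition 2.2) -/

/-- The descent statistic of a filling of the Young diagram of `λ`, whose
columns are listed from left to right. -/
def desTau (cols : List (List ℤ)) : ℕ :=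
  adjSumN (fun L R => ((Finset.range L.length).filter
    (fun r => slt (R.getD r 0) (L.getD r 0))).card) cols

/-- The complementary inversion statistic `cinv = n(λ) - inv` of a filling of
the Young diagram of `λ` (columns listed from left to right, `C_k` being the
`k`-th column from the right). -/
def cinvTau (cols : List (List ℤ)) : ℕ :=
  ∑ q ∈ Finset.range cols.length,
    (((Finset.range (cols.getD q []).length) ×ˢ (Finset.range (cols.getD q []).length)).filter
      (fun pp => pp.1 < pp.2 ∧
        (((1 ≤ q ∧ pp.2 < (cols.getD (q - 1) []).length) ∧
            slt ((cols.getD q []).getD pp.2 0) ((cols.getD q []).getD pp.1 0) ∧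
            slt ((cols.getD q []).getD pp.1 0) ((cols.getD (q - 1) []).getD pp.2 0)) ∨
          (¬ (1 ≤ q ∧ pp.2 < (cols.getD (q - 1) []).length) ∧
            slt ((cols.getD q []).getD pp.2 0) ((cols.getD q []).getD pp.1 0))))).card

/-! ### Chains for the root systems `C_n` and `B_n` and the conditions (R1), (R2) -/

def isPosRootC (n : ℕ) (β : ℕ × ℤ) : Prop :=
  (1 ≤ β.1 ∧ (β.1 : ℤ) < β.2 ∧ β.2 ≤ (n : ℤ)) ∨
  (1 ≤ β.1 ∧ 0 < -β.2 ∧ (β.1 : ℤ) ≤ -β.2 ∧ -β.2 ≤ (n : ℤ))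

/-- Positive roots of `B_n` use the same symbols; `(i,-i)` encodes `ε_i`. -/
def isPosRootB (n : ℕ) (β : ℕ × ℤ) : Prop := isPosRootC n β

/-- The root of type `B_n` of a symbol: as in type `C` except `(i,-i) ↦ ε_i`. -/
def rootVecB (n : ℕ) (β : ℕ × ℤ) : Fin n → ℤ :=
  if β.2 = -(β.1 : ℤ) then (fun r => if ((r : ℕ) + 1 : ℤ) = (β.1 : ℤ) then 1 else 0)
  else rootVec n β

/-- The coroot of type `B_n`: `ε_i^∨ = 2ε_i`, long roots unchanged. -/
def corootVecB (n : ℕ) (β : ℕ × ℤ) : Fin n → ℤ :=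
  if β.2 = -(β.1 : ℤ) then (fun r => if ((r : ℕ) + 1 : ℤ) = (β.1 : ℤ) then 2 else 0)
  else rootVec n β

/-- `ω_k` in type `C_n`. -/
def omegaC (n k : ℕ) : Fin n → ℤ := fun r => if (r : ℕ) + 1 ≤ k then 1 else 0

/-- `ω_k` in type `B_n` (`ω_n` is half the sum of the `ε_i`). -/
def omegaB (n k : ℕ) : Fin n → ℚ :=
  if k = n then (fun _ => 1/2) else (fun r => if (r : ℕ) + 1 ≤ k then 1 else 0)

/-- type `B`: `Γ'_j = ((1,-j),...,(j-1,-j),(j))`. -/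
def gammaPrimeB (j : ℕ) : List (ℕ × ℤ) := gammaPrime j ++ [(j, -(j : ℤ))]

/-- type `B`: `Γ(k) = Γ'_1 ⋯ Γ'_k Γ_1(k) ⋯ Γ_k(k)` for `k < n`, and
`Γ(n) = Γ'_1 ⋯ Γ'_n`. -/
def gammaChainB (n k : ℕ) : List (ℕ × ℤ) :=
  ((List.range k).map (fun r => gammaPrimeB (r + 1))).flatten
    ++ (if k = n then [] else ((List.range k).map (fun r => gammaJK n (r + 1) k)).flatten)

/-- `(R2)`: the subsequence of all occurrences of `α, β, γ` is a concatenation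
of consecutive pairs `(γ, α)` or `(γ, β)`. -/
def altPairs (g a b : ℕ × ℤ) : List (ℕ × ℤ) → Prop
  | [] => True
  | [_] => False
  | x :: y :: rest => x = g ∧ (y = a ∨ y = b) ∧ altPairs g a b rest

/-! ### Real vector space versions (for hyperplanes) -/

def ipR (n : ℕ) (u v : Fin n → ℝ) : ℝ := ∑ r, u r * v r

def affReflR (n : ℕ) (β : ℕ × ℤ) (c : ℝ) (v : Fin n → ℝ) : Fin n → ℝ :=
  fun r => v r - (ipR n v (fun s => ((corootVec n β s : ℤ) : ℝ)) - c) *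
    ((rootVec n β r : ℤ) : ℝ)

def wActR (n : ℕ) (w : List ℤ) (v : Fin n → ℝ) : Fin n → ℝ := fun r =>
  ∑ i : Fin n, ((if w.getD i 0 = ((r : ℕ) + 1 : ℤ) then v i else 0) +
    (if w.getD i 0 = -(((r : ℕ) + 1 : ℤ)) then -(v i) else 0))

/-- `γ^∨ = (2/⟨γ,γ⟩) γ`. -/
noncomputable def corootOfR (n : ℕ) (v : Fin n → ℝ) : Fin n → ℝ :=
  fun r => (2 / ipR n v v) * v r

/-- The part of the compressed filling of shape `2λ` consisting of the columns
numbered `2λ_1, 2λ_1 - 1, ..., q` (`\barσ[q]`); column `2i` is `C'_{i,2}` and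
column `2i-1` is `C_{i,1}`. -/
def compColsGe (n : ℕ) (lam : Fin n → ℕ) (F : Filling) (q : ℕ) : List (List ℤ) :=
  ((List.range (lamOne n lam)).map (fun t =>
    (if q ≤ 2 * (lamOne n lam - t) then
      [(if 2 ≤ conj n lam (lamOne n lam - t) then F.Cp (lamOne n lam - t) 2
        else F.Cu (lamOne n lam - t) 1)] else []) ++
    (if q ≤ 2 * (lamOne n lam - t) - 1 then [F.Cu (lamOne n lam - t) 1] else []))).flatten

/-! ### The chains `Δ` and `Φ` of Section 6 -/

/-- `Δ = ((1,p+1),...,(1,n),(1,-1),(1,-n),(1,-(n-1)),...,(1,-(p+1)))`. -/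
def deltaChain (n p : ℕ) : List (ℕ × ℤ) :=
  (List.range (n - p)).map (fun r => (1, ((p + 1 + r : ℕ) : ℤ)))
    ++ [(1, (-1 : ℤ))]
    ++ (List.range (n - p)).map (fun r => (1, -((n - r : ℕ) : ℤ)))

/-- The suffix `Δ_{\bar s}` of `Δ` beginning with `(1,-s)`. -/
def deltaSuffixNeg (p s : ℕ) : List (ℕ × ℤ) :=
  (List.range (s - p)).map (fun r => (1, -((s - r : ℕ) : ℤ)))

/-- The suffix `Δ_{\bar 1}` of `Δ` beginning with `(1,-1)`. -/
def deltaSuffixBar1 (n p : ℕ) : List (ℕ × ℤ) :=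
  [(1, (-1 : ℤ))] ++ (List.range (n - p)).map (fun r => (1, -((n - r : ℕ) : ℤ)))

/-- The suffix `Δ_s` of `Δ` beginning with `(1,s)` (for `p < s ≤ n`). -/
def deltaSuffixPos (n p s : ℕ) : List (ℕ × ℤ) :=
  (List.range (n + 1 - s)).map (fun r => (1, ((s + r : ℕ) : ℤ)))
    ++ [(1, (-1 : ℤ))]
    ++ (List.range (n - p)).map (fun r => (1, -((n - r : ℕ) : ℤ)))

/-- `Φ = ((1,-1),(1,-2),(2,-2),...,(1,-n),...,(n-1,-n),(n,-n))`. -/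
def phiChain (n : ℕ) : List (ℕ × ℤ) :=
  ((List.range n).map (fun jm =>
    (List.range (jm + 1)).map (fun im => (im + 1, -((jm + 1 : ℕ) : ℤ))))).flatten

/-- The suffix `Φ_{ij}` of `Φ` beginning with `(i,-j)`. -/
def phiSuffix (n i j : ℕ) : List (ℕ × ℤ) := (phiChain n).drop ((j - 1) * j / 2 + (i - 1))

/-- `ℓ^{ij}_-(w) = #{(k,l) : k ≤ l, (k,-l)` strictly precedes `(i,-j)` in `Φ`,
`w(k) ≻ -w(l)}`. -/
def lminusBefore (w : List ℤ) (i j : ℕ) : ℕ :=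
  (((Finset.range w.length) ×ˢ (Finset.range w.length)).filter
    (fun p => p.1 ≤ p.2 ∧ (p.2 + 1 < j ∨ (p.2 + 1 = j ∧ p.1 + 1 < i)) ∧
      slt (-(w.getD p.2 0)) (w.getD p.1 0))).card

section

open Polynomial

/-! ### Entries of windows and the rank form of `≺` -/

/-- The entry of a word in the 0-based position `p`. -/
def ent (v : List ℤ) (p : ℕ) : ℤ := v.getD p 0

lemma ent_def (v : List ℤ) (p : ℕ) : v.getD p 0 = ent v p := rfl

lemma ent_set (v : List ℤ) (i p : ℕ) (a : ℤ) (hi : i < v.length) :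
    ent (v.set i a) p = if p = i then a else ent v p := by
  unfold ent
  by_cases h : p = i
  · subst h; simp [List.getD_eq_getElem?_getD, hi]
  · have h' : i ≠ p := fun e => h e.symm
    simp [List.getD_eq_getElem?_getD, h, h']

lemma ent_ext {u v : List ℤ} (hl : u.length = v.length)
    (h : ∀ p, p < v.length → ent u p = ent v p) : u = v := by
  apply List.ext_getElem hl
  intro p h1 h2
  have := h p h2
  simpa [ent, List.getD_eq_getElem?_getD, h1, h2] using this

lemma ent_take (v : List ℤ) (d p : ℕ) (hp : p < d) : ent (v.take d) p = ent v p := by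
  simp [ent, List.getD_eq_getElem?_getD, hp]

/-- The entries are pairwise distinct up to sign. -/
def Dist (v : List ℤ) : Prop :=
  ∀ p q, p < v.length → q < v.length → p ≠ q → ent v p ≠ ent v q ∧ ent v p ≠ - ent v q

/-- `v` is the window of an element of `B_n`. -/
structure Win (n : ℕ) (v : List ℤ) : Prop where
  length : v.length = n
  ne : ∀ p, p < n → ent v p ≠ 0
  lo : ∀ p, p < n → -(n : ℤ) ≤ ent v p
  hi : ∀ p, p < n → ent v p ≤ n
  dist : ∀ p q, p < n → q < n → p ≠ q → ent v p ≠ ent v q ∧ ent v p ≠ - ent v q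

/-- The rank of a letter in the order `1 ≺ ⋯ ≺ n ≺ -n ≺ ⋯ ≺ -1`, an integer in `[1, 2n]`. -/
def rk (n : ℕ) (a : ℤ) : ℤ := if 0 < a then a else a + 2 * n + 1

lemma rk_neg {n : ℕ} {a : ℤ} (h : a ≠ 0) : rk n (-a) = 2 * n + 1 - rk n a := by
  unfold rk; split_ifs <;> omega

lemma slt_rk (n : ℕ) {a b : ℤ} (_ : a ≠ 0) (hb : b ≠ 0) (ha1 : -(n : ℤ) ≤ a) (ha2 : a ≤ n)
    (hb1 : -(n : ℤ) ≤ b) (hb2 : b ≤ n) : slt a b ↔ rk n a < rk n b := by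
  unfold slt rk; split_ifs <;> omega

lemma neg_rk (n : ℕ) {a : ℤ} (_ : a ≠ 0) (ha1 : -(n : ℤ) ≤ a) (ha2 : a ≤ n) :
    a < 0 ↔ (n : ℤ) < rk n a := by
  unfold rk; split_ifs <;> omega

lemma pos_rk (n : ℕ) {a : ℤ} (_ : a ≠ 0) (ha1 : -(n : ℤ) ≤ a) (ha2 : a ≤ n) :
    0 < a ↔ rk n a ≤ (n : ℤ) := by
  unfold rk; split_ifs <;> omega

lemma rk_inj {n : ℕ} {a b : ℤ} (_ : a ≠ 0) (_ : b ≠ 0) (ha1 : -(n : ℤ) ≤ a) (ha2 : a ≤ n)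
    (hb1 : -(n : ℤ) ≤ b) (hb2 : b ≤ n) : a = b ↔ rk n a = rk n b := by
  unfold rk; split_ifs <;> omega

/-! ### Reflections on windows -/

lemma length_applyRefl (v : List ℤ) (t : ℕ × ℤ) : (applyRefl v t).length = v.length := by
  unfold applyRefl; split_ifs <;> simp

lemma ent_neg {v : List ℤ} {r j : ℕ} (hrj : r < j) (hj : j < v.length) (p : ℕ) :
    ent (applyRefl v (r + 1, -((j + 1 : ℕ) : ℤ))) p =
      if p = r then - ent v j else if p = j then - ent v r else ent v p := by
  have h1 : ¬ ((0 : ℤ) < -((j + 1 : ℕ) : ℤ)) := by push_cast; omega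
  have h2 : (-(-((j + 1 : ℕ) : ℤ))).toNat = j + 1 := by omega
  unfold applyRefl
  simp only [h1, if_false, h2, ent_def]
  rw [if_neg (by omega), ent_set _ _ _ _ (by simp; omega), ent_set _ _ _ _ (by omega)]
  simp only [Nat.add_sub_cancel]
  split_ifs <;> first | rfl | omega

lemma ent_pos {v : List ℤ} {r j : ℕ} (hrj : r < j) (hj : j < v.length) (p : ℕ) :
    ent (applyRefl v (r + 1, ((j + 1 : ℕ) : ℤ))) p =
      if p = r then ent v j else if p = j then ent v r else ent v p := by
  have h1 : ((0 : ℤ) < ((j + 1 : ℕ) : ℤ)) := by push_cast; omega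
  have h2 : (((j + 1 : ℕ) : ℤ)).toNat = j + 1 := by omega
  unfold applyRefl
  simp only [h1, if_true, h2, ent_def]
  rw [ent_set _ _ _ _ (by simp; omega), ent_set _ _ _ _ (by omega)]
  simp only [Nat.add_sub_cancel]
  split_ifs <;> first | rfl | omega

lemma ent_bar {v : List ℤ} {j : ℕ} (hj : j < v.length) (p : ℕ) :
    ent (applyRefl v (j + 1, -((j + 1 : ℕ) : ℤ))) p =
      if p = j then - ent v j else ent v p := by
  have h1 : ¬ ((0 : ℤ) < -((j + 1 : ℕ) : ℤ)) := by push_cast; omega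
  have h2 : (-(-((j + 1 : ℕ) : ℤ))).toNat = j + 1 := by omega
  unfold applyRefl
  simp only [h1, if_false, h2, ent_def, if_true]
  rw [ent_set _ _ _ _ (by omega)]
  simp only [Nat.add_sub_cancel]

/-- The reflections of `B_n`, encoded as `(r+1, ±(j+1))` with `r, j` 0-based positions. -/
inductive GoodR (n : ℕ) : ℕ × ℤ → Prop
  | pos (r j : ℕ) : r < j → j < n → GoodR n (r + 1, ((j + 1 : ℕ) : ℤ))
  | neg (r j : ℕ) : r < j → j < n → GoodR n (r + 1, -((j + 1 : ℕ) : ℤ))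
  | bar (j : ℕ) : j < n → GoodR n (j + 1, -((j + 1 : ℕ) : ℤ))

lemma applyRefl_invol {n : ℕ} {v : List ℤ} (hv : v.length = n) {t : ℕ × ℤ} (ht : GoodR n t) :
    applyRefl (applyRefl v t) t = v := by
  apply ent_ext
  · simp [length_applyRefl]
  intro p _
  have hl : ∀ j, j < n → ∀ t, j < (applyRefl v t).length := by
    intro j hj t; rw [length_applyRefl]; omega
  cases ht with
  | pos r j h1 h2 =>
    simp only [ent_pos h1 (hl j h2 _),
      ent_pos h1 (show j < v.length by omega)]
    split_ifs <;> simp_all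
  | neg r j h1 h2 =>
    simp only [ent_neg h1 (hl j h2 _),
      ent_neg h1 (show j < v.length by omega)]
    split_ifs <;> simp_all
  | bar j h2 =>
    simp only [ent_bar (hl j h2 _),
      ent_bar (show j < v.length by omega)]
    split_ifs <;> simp_all

lemma Win.refl {n : ℕ} {v : List ℤ} (hv : Win n v) {t : ℕ × ℤ} (ht : GoodR n t) :
    Win n (applyRefl v t) := by
  have hl := hv.length
  -- each entry of the new window is, up to sign, the entry of `v` in a permuted position
  have key : ∃ π : ℕ → ℕ, (∀ p, p < n → π p < n) ∧ (∀ p q, π p = π q → p = q) ∧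
      ∀ p, ent (applyRefl v t) p = ent v (π p) ∨ ent (applyRefl v t) p = - ent v (π p) := by
    cases ht with
    | pos r j h1 h2 =>
      refine ⟨fun p => if p = r then j else if p = j then r else p, ?_, ?_, ?_⟩
      · intro p hp; dsimp only; split_ifs <;> omega
      · intro p q; dsimp only; split_ifs <;> omega
      · intro p; rw [ent_pos h1 (by omega)]; dsimp only; split_ifs <;> simp
    | neg r j h1 h2 =>
      refine ⟨fun p => if p = r then j else if p = j then r else p, ?_, ?_, ?_⟩
      · intro p hp; dsimp only; split_ifs <;> omega
      · intro p q; dsimp only; split_ifs <;> omega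
      · intro p; rw [ent_neg h1 (by omega)]; dsimp only; split_ifs <;> simp
    | bar j h2 =>
      refine ⟨fun p => p, fun p hp => hp, fun p q h => h, ?_⟩
      intro p; rw [ent_bar (by omega)]; split_ifs with h <;> simp [h]
  obtain ⟨π, h1, h2, h3⟩ := key
  refine ⟨by rw [length_applyRefl, hl], ?_, ?_, ?_, ?_⟩
  · intro p hp; have := hv.ne _ (h1 p hp); rcases h3 p with h | h <;> omega
  · intro p hp; have := hv.lo _ (h1 p hp); have := hv.hi _ (h1 p hp); rcases h3 p with h | h <;> omega
  · intro p hp; have := hv.lo _ (h1 p hp); have := hv.hi _ (h1 p hp); rcases h3 p with h | h <;> omega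
  · intro p q hp hq hpq
    have := hv.dist _ _ (h1 p hp) (h1 q hq) (fun e => hpq (h2 _ _ e))
    rcases h3 p with h | h <;> rcases h3 q with h' | h' <;> rw [h, h'] <;> constructor <;> omega

/-! ### Length as a double sum, and its change under a reflection -/

/-- Contribution of an ordered pair of positions to `ℓ₊`. -/
def Fpl (p q : ℕ) (a b : ℤ) : ℤ := if p < q ∧ slt b a then 1 else 0

/-- Contribution of an ordered pair of positions to `ℓ₋`. -/
def Fmi (p q : ℕ) (a b : ℤ) : ℤ := if p ≤ q ∧ slt (-b) a then 1 else 0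

lemma lplus_sum (v : List ℤ) : (lplus v : ℤ) =
    ∑ p ∈ Finset.range v.length, ∑ q ∈ Finset.range v.length, Fpl p q (ent v p) (ent v q) := by
  unfold lplus Fpl
  rw [Finset.card_filter]
  push_cast
  rw [Finset.sum_product]
  rfl

lemma lminus_sum (v : List ℤ) : (lminus v : ℤ) =
    ∑ p ∈ Finset.range v.length, ∑ q ∈ Finset.range v.length, Fmi p q (ent v p) (ent v q) := by
  unfold lminus Fmi
  rw [Finset.card_filter]
  push_cast
  rw [Finset.sum_product]
  rfl

lemma lminusBefore_sum (v : List ℤ) (i j : ℕ) : (lminusBefore v i j : ℤ) =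
    ∑ p ∈ Finset.range v.length, ∑ q ∈ Finset.range v.length,
      (if q + 1 < j ∨ (q + 1 = j ∧ p + 1 < i) then Fmi p q (ent v p) (ent v q) else 0) := by
  unfold lminusBefore Fmi
  rw [Finset.card_filter]
  push_cast
  rw [Finset.sum_product]
  refine Finset.sum_congr rfl fun p _ => Finset.sum_congr rfl fun q _ => ?_
  rw [← ite_and]
  exact if_congr (by unfold ent; tauto) rfl rfl

lemma len_sum (v : List ℤ) : (len v : ℤ) =
    ∑ p ∈ Finset.range v.length, ∑ q ∈ Finset.range v.length,
      (Fpl p q (ent v p) (ent v q) + Fmi p q (ent v p) (ent v q)) := by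
  unfold len
  push_cast
  rw [lplus_sum, lminus_sum]
  simp only [Finset.sum_add_distrib]

lemma sum_split1 {M : Type*} [AddCommMonoid M] (f : ℕ → M) {n j : ℕ} (hj : j < n) :
    ∑ m ∈ Finset.range n, f m = (∑ m ∈ Finset.range n, if m = j then 0 else f m) + f j := by
  have : ∀ m, f m = (if m = j then 0 else f m) + (if m = j then f j else 0) := by
    intro m; split_ifs with h <;> simp [h]
  rw [Finset.sum_congr rfl (fun m _ => this m), Finset.sum_add_distrib]
  simp [hj]

lemma sum_split2 {M : Type*} [AddCommMonoid M] (f : ℕ → M) {n r j : ℕ} (hrj : r < j) (hj : j < n) :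
    ∑ m ∈ Finset.range n, f m =
      (∑ m ∈ Finset.range n, if m = r ∨ m = j then 0 else f m) + f r + f j := by
  rw [sum_split1 f hj, sum_split1 (fun m => if m = j then 0 else f m) (show r < n by omega)]
  simp only [show r ≠ j by omega, if_false]
  congr 2
  refine Finset.sum_congr rfl fun m _ => ?_
  split_ifs <;> first | rfl | omega

/-- A double sum only affected along the rows and columns of the two positions `r < j`. -/
lemma dsum_diff2 (F G : ℕ → ℕ → ℤ) {n r j : ℕ} (hrj : r < j) (hj : j < n)
    (h : ∀ p q, p ≠ r → p ≠ j → q ≠ r → q ≠ j → F p q = G p q) :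
    (∑ p ∈ Finset.range n, ∑ q ∈ Finset.range n, F p q)
      - (∑ p ∈ Finset.range n, ∑ q ∈ Finset.range n, G p q) =
    (∑ m ∈ Finset.range n, if m = r ∨ m = j then 0 else
      (F r m + F m r + F j m + F m j) - (G r m + G m r + G j m + G m j))
      + ((F r r + F r j + F j r + F j j) - (G r r + G r j + G j r + G j j)) := by
  have e : ∀ p, ∑ q ∈ Finset.range n, (F p q - G p q) =
      (∑ q ∈ Finset.range n, if q = r ∨ q = j then 0 else (F p q - G p q))
        + (F p r - G p r) + (F p j - G p j) := fun p => sum_split2 (fun q => F p q - G p q) hrj hj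
  have e0 : ∀ p, p ≠ r → p ≠ j →
      (∑ q ∈ Finset.range n, if q = r ∨ q = j then 0 else (F p q - G p q)) = 0 := by
    intro p h1 h2
    refine Finset.sum_eq_zero fun q _ => ?_
    split_ifs with h3
    · rfl
    · push Not at h3; rw [h p q h1 h2 h3.1 h3.2]; ring
  rw [← Finset.sum_sub_distrib]
  simp only [← Finset.sum_sub_distrib]
  rw [sum_split2 _ hrj hj, e r, e j]
  have e1 : (∑ m ∈ Finset.range n, if m = r ∨ m = j then 0 else
      ∑ q ∈ Finset.range n, (F m q - G m q)) =
      ∑ m ∈ Finset.range n, if m = r ∨ m = j then 0 else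
        ((F m r - G m r) + (F m j - G m j)) := by
    refine Finset.sum_congr rfl fun m _ => ?_
    split_ifs with h3
    · rfl
    · push Not at h3; rw [e m, e0 m h3.1 h3.2]; ring
  have e2 : (∑ m ∈ Finset.range n, if m = r ∨ m = j then 0 else
      (F r m + F m r + F j m + F m j) - (G r m + G m r + G j m + G m j)) =
      (∑ m ∈ Finset.range n, if m = r ∨ m = j then 0 else
        ((F m r - G m r) + (F m j - G m j)))
      + (∑ m ∈ Finset.range n, if m = r ∨ m = j then 0 else (F r m - G r m))
      + (∑ m ∈ Finset.range n, if m = r ∨ m = j then 0 else (F j m - G j m)) := by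
    rw [← Finset.sum_add_distrib, ← Finset.sum_add_distrib]
    refine Finset.sum_congr rfl fun m _ => ?_
    split_ifs <;> ring
  rw [e1, e2]
  ring

lemma dsum_diff1 (F G : ℕ → ℕ → ℤ) {n j : ℕ} (hj : j < n)
    (h : ∀ p q, p ≠ j → q ≠ j → F p q = G p q) :
    (∑ p ∈ Finset.range n, ∑ q ∈ Finset.range n, F p q)
      - (∑ p ∈ Finset.range n, ∑ q ∈ Finset.range n, G p q) =
    (∑ m ∈ Finset.range n, if m = j then 0 else (F j m + F m j) - (G j m + G m j))
      + (F j j - G j j) := by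
  have e : ∀ p, ∑ q ∈ Finset.range n, (F p q - G p q) =
      (∑ q ∈ Finset.range n, if q = j then 0 else (F p q - G p q))
        + (F p j - G p j) := fun p => sum_split1 (fun q => F p q - G p q) hj
  have e0 : ∀ p, p ≠ j →
      (∑ q ∈ Finset.range n, if q = j then 0 else (F p q - G p q)) = 0 := by
    intro p h1
    refine Finset.sum_eq_zero fun q _ => ?_
    split_ifs with h3
    · rfl
    · rw [h p q h1 h3]; ring
  rw [← Finset.sum_sub_distrib]
  simp only [← Finset.sum_sub_distrib]
  rw [sum_split1 _ hj, e j]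
  have e1 : (∑ m ∈ Finset.range n, if m = j then 0 else
      ∑ q ∈ Finset.range n, (F m q - G m q)) =
      ∑ m ∈ Finset.range n, if m = j then 0 else (F m j - G m j) := by
    refine Finset.sum_congr rfl fun m _ => ?_
    split_ifs with h3
    · rfl
    · rw [e m, e0 m h3]; ring
  have e2 : (∑ m ∈ Finset.range n, if m = j then 0 else (F j m + F m j) - (G j m + G m j)) =
      (∑ m ∈ Finset.range n, if m = j then 0 else (F m j - G m j))
      + (∑ m ∈ Finset.range n, if m = j then 0 else (F j m - G j m)) := by
    rw [← Finset.sum_add_distrib]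
    refine Finset.sum_congr rfl fun m _ => ?_
    split_ifs <;> ring
  rw [e1, e2]
  ring

/-! ### Length drops of the three kinds of reflections -/

/-- A letter of the alphabet `{±1, …, ±n}`. -/
def Ok (n : ℕ) (a : ℤ) : Prop := a ≠ 0 ∧ -(n : ℤ) ≤ a ∧ a ≤ n

lemma Ok.neg {n : ℕ} {a : ℤ} (h : Ok n a) : Ok n (-a) := by
  unfold Ok at *; omega

lemma Win.ok {n : ℕ} {v : List ℤ} (hv : Win n v) {p : ℕ} (hp : p < n) : Ok n (ent v p) :=
  ⟨hv.ne p hp, hv.lo p hp, hv.hi p hp⟩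

lemma Ok.slt {n : ℕ} {a b : ℤ} (ha : Ok n a) (hb : Ok n b) : slt a b ↔ rk n a < rk n b :=
  slt_rk n ha.1 hb.1 ha.2.1 ha.2.2 hb.2.1 hb.2.2

lemma Ok.rk_neg {n : ℕ} {a : ℤ} (ha : Ok n a) : rk n (-a) = 2 * n + 1 - rk n a := HL.rk_neg ha.1

lemma Ok.lt0 {n : ℕ} {a : ℤ} (ha : Ok n a) : a < 0 ↔ (n : ℤ) < rk n a :=
  neg_rk n ha.1 ha.2.1 ha.2.2

lemma Ok.gt0 {n : ℕ} {a : ℤ} (ha : Ok n a) : 0 < a ↔ rk n a ≤ (n : ℤ) :=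
  pos_rk n ha.1 ha.2.1 ha.2.2

lemma Ok.eq {n : ℕ} {a b : ℤ} (ha : Ok n a) (hb : Ok n b) : a = b ↔ rk n a = rk n b :=
  rk_inj ha.1 hb.1 ha.2.1 ha.2.2 hb.2.1 hb.2.2

lemma Ok.ne {n : ℕ} {a b : ℤ} (ha : Ok n a) (hb : Ok n b) (h : a ≠ b ∧ a ≠ -b) :
    rk n a ≠ rk n b ∧ rk n a ≠ 2 * n + 1 - rk n b := by
  rw [← hb.rk_neg]
  exact ⟨fun e => h.1 ((ha.eq hb).2 e), fun e => h.2 ((ha.eq hb.neg).2 e)⟩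

/-- Indicator of `x ≺ c ≺ y`. -/
def bt (x c y : ℤ) : ℕ := if slt x c ∧ slt c y then 1 else 0

/-- `(ℓ(v) - ℓ(v t) - 1) / 2` for a length-decreasing `t = (r, -j)`. -/
def eNeg (n : ℕ) (v : List ℤ) (r j : ℕ) : ℕ :=
  (∑ m ∈ Finset.range n,
    (if r < m ∧ m < j then bt (-ent v j) (ent v m) (ent v r)
     else if j < m then bt (-ent v j) (ent v m) (ent v r) + bt (-ent v j) (-ent v m) (ent v r)
     else 0)) + sigmaAB (ent v r) (ent v j)

/-- `(ℓ(v) - ℓ(v t) - 1) / 2` for a length-decreasing `t = (j, -j)`. -/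
def eBar (n : ℕ) (v : List ℤ) (j : ℕ) : ℕ :=
  ∑ m ∈ Finset.range n, (if j < m then bt (-ent v j) (ent v m) (ent v j) else 0)

/-- `(ℓ(v) - ℓ(v t) - 1) / 2` for a length-decreasing `t = (r, j)`. -/
def ePos (n : ℕ) (v : List ℤ) (r j : ℕ) : ℕ :=
  ∑ m ∈ Finset.range n, (if r < m ∧ m < j then bt (ent v j) (ent v m) (ent v r) else 0)

lemma len_neg {n : ℕ} {v : List ℤ} (hv : Win n v) {r j : ℕ} (hrj : r < j) (hj : j < n)
    (hs : slt (-ent v j) (ent v r)) :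
    len v = len (applyRefl v (r + 1, -((j + 1 : ℕ) : ℤ))) + 2 * eNeg n v r j + 1 := by
  have hl := hv.length
  have hr : r < n := by omega
  have hE := ent_neg (v := v) hrj (by omega)
  generalize hu : applyRefl v (r + 1, -((j + 1 : ℕ) : ℤ)) = u at *
  have hul : u.length = n := by rw [← hu, length_applyRefl, hl]
  have ha := hv.ok hr
  have hb := hv.ok hj
  have hab := ha.ne hb (hv.dist r j hr hj (by omega))
  rw [hb.neg.slt ha, hb.rk_neg] at hs
  have h1 := len_sum v
  have h2 := len_sum u
  rw [hl] at h1; rw [hul] at h2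
  have D := dsum_diff2 (fun p q => Fpl p q (ent v p) (ent v q) + Fmi p q (ent v p) (ent v q))
    (fun p q => Fpl p q (ent u p) (ent u q) + Fmi p q (ent u p) (ent u q)) hrj hj
    (by intro p q e1 e2 e3 e4; simp only [hE, e1, e2, e3, e4, if_false])
  have hloc : (∑ m ∈ Finset.range n, if m = r ∨ m = j then (0 : ℤ) else
      ((Fpl r m (ent v r) (ent v m) + Fmi r m (ent v r) (ent v m)) +
       (Fpl m r (ent v m) (ent v r) + Fmi m r (ent v m) (ent v r)) +
       (Fpl j m (ent v j) (ent v m) + Fmi j m (ent v j) (ent v m)) +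
       (Fpl m j (ent v m) (ent v j) + Fmi m j (ent v m) (ent v j))) -
      ((Fpl r m (ent u r) (ent u m) + Fmi r m (ent u r) (ent u m)) +
       (Fpl m r (ent u m) (ent u r) + Fmi m r (ent u m) (ent u r)) +
       (Fpl j m (ent u j) (ent u m) + Fmi j m (ent u j) (ent u m)) +
       (Fpl m j (ent u m) (ent u j) + Fmi m j (ent u m) (ent u j)))) =
      ∑ m ∈ Finset.range n, 2 * (((if r < m ∧ m < j then bt (-ent v j) (ent v m) (ent v r)
     else if j < m then bt (-ent v j) (ent v m) (ent v r) + bt (-ent v j) (-ent v m) (ent v r)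
     else 0) : ℕ) : ℤ) := by
    refine Finset.sum_congr rfl fun m hm => ?_
    have hm := Finset.mem_range.1 hm
    have hc := hv.ok hm
    by_cases hmr : m = r
    · simp [hmr, show ¬ j < r by omega]
    by_cases hmj : m = j
    · simp [hmj]
    have hca := hc.ne ha (hv.dist m r hm hr hmr)
    have hcb := hc.ne hb (hv.dist m j hm hj hmj)
    simp only [hE, hmr, hmj, show j ≠ r by omega, if_true, if_false, or_self, Fpl, Fmi, bt,
      ha.slt hc, hc.slt ha, hb.slt hc, hc.slt hb, ha.neg.slt hc, hc.slt ha.neg, hb.neg.slt hc,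
      hc.slt hb.neg, hc.neg.slt ha, hc.neg.slt hb, hc.neg.slt ha.neg, hc.neg.slt hb.neg,
      hb.neg.slt hc.neg, ha.rk_neg, hb.rk_neg, hc.rk_neg, neg_neg]
    rcases lt_or_gt_of_ne hmr with h | h
    · simp only [h, show m < j by omega, show ¬ r < m by omega, show ¬ r ≤ m by omega,
        show m ≤ r by omega, show m ≤ j by omega, show ¬ j < m by omega, show ¬ j ≤ m by omega,
        true_and, false_and, if_false]
      push_cast; omega
    rcases lt_or_gt_of_ne hmj with h' | h'
    · simp only [h, h', show ¬ m < r by omega, show r ≤ m by omega, show ¬ m ≤ r by omega,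
        show m ≤ j by omega, show ¬ j < m by omega, show ¬ j ≤ m by omega,
        true_and, false_and, if_false, true_and, if_true]
      push_cast; omega
    · simp only [h, h', show ¬ m < r by omega, show r ≤ m by omega, show ¬ m ≤ r by omega,
        show ¬ m ≤ j by omega, show ¬ m < j by omega, show j ≤ m by omega,
        true_and, false_and, if_false, and_false, if_true]
      push_cast; omega
  have hcst : ((Fpl r r (ent v r) (ent v r) + Fmi r r (ent v r) (ent v r)) +
       (Fpl r j (ent v r) (ent v j) + Fmi r j (ent v r) (ent v j)) +
       (Fpl j r (ent v j) (ent v r) + Fmi j r (ent v j) (ent v r)) +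
       (Fpl j j (ent v j) (ent v j) + Fmi j j (ent v j) (ent v j))) -
      ((Fpl r r (ent u r) (ent u r) + Fmi r r (ent u r) (ent u r)) +
       (Fpl r j (ent u r) (ent u j) + Fmi r j (ent u r) (ent u j)) +
       (Fpl j r (ent u j) (ent u r) + Fmi j r (ent u j) (ent u r)) +
       (Fpl j j (ent u j) (ent u j) + Fmi j j (ent u j) (ent u j))) =
      2 * (sigmaAB (ent v r) (ent v j) : ℤ) + 1 := by
    simp only [hE, show j ≠ r by omega, if_true, if_false, Fpl, Fmi, sigmaAB,
      lt_irrefl, le_refl, hrj, hrj.le, show ¬ j < r by omega, show ¬ j ≤ r by omega, false_and,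
      true_and, ha.slt ha, hb.slt hb, ha.slt hb, hb.slt ha, ha.neg.slt ha, hb.neg.slt hb,
      ha.neg.slt hb.neg, hb.neg.slt ha, neg_neg, ha.slt ha.neg, hb.slt hb.neg, ha.slt hb.neg,
      ha.rk_neg, hb.rk_neg, ha.lt0, hb.lt0]
    push_cast; omega
  beta_reduce at D
  rw [hloc, hcst, ← h1, ← h2, ← Finset.mul_sum] at D
  unfold eNeg
  rw [← Nat.cast_inj (R := ℤ)]
  push_cast at D ⊢
  linarith

lemma len_pos {n : ℕ} {v : List ℤ} (hv : Win n v) {r j : ℕ} (hrj : r < j) (hj : j < n)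
    (hs : slt (ent v j) (ent v r)) :
    len v = len (applyRefl v (r + 1, ((j + 1 : ℕ) : ℤ))) + 2 * ePos n v r j + 1 := by
  have hl := hv.length
  have hr : r < n := by omega
  have hE := ent_pos (v := v) hrj (by omega)
  generalize hu : applyRefl v (r + 1, ((j + 1 : ℕ) : ℤ)) = u at *
  have hul : u.length = n := by rw [← hu, length_applyRefl, hl]
  have ha := hv.ok hr
  have hb := hv.ok hj
  have hab := ha.ne hb (hv.dist r j hr hj (by omega))
  rw [hb.slt ha] at hs
  have h1 := len_sum v
  have h2 := len_sum u
  rw [hl] at h1; rw [hul] at h2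
  have D := dsum_diff2 (fun p q => Fpl p q (ent v p) (ent v q) + Fmi p q (ent v p) (ent v q))
    (fun p q => Fpl p q (ent u p) (ent u q) + Fmi p q (ent u p) (ent u q)) hrj hj
    (by intro p q e1 e2 e3 e4; simp only [hE, e1, e2, e3, e4, if_false])
  have hloc : (∑ m ∈ Finset.range n, if m = r ∨ m = j then (0 : ℤ) else
      ((Fpl r m (ent v r) (ent v m) + Fmi r m (ent v r) (ent v m)) +
       (Fpl m r (ent v m) (ent v r) + Fmi m r (ent v m) (ent v r)) +
       (Fpl j m (ent v j) (ent v m) + Fmi j m (ent v j) (ent v m)) +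
       (Fpl m j (ent v m) (ent v j) + Fmi m j (ent v m) (ent v j))) -
      ((Fpl r m (ent u r) (ent u m) + Fmi r m (ent u r) (ent u m)) +
       (Fpl m r (ent u m) (ent u r) + Fmi m r (ent u m) (ent u r)) +
       (Fpl j m (ent u j) (ent u m) + Fmi j m (ent u j) (ent u m)) +
       (Fpl m j (ent u m) (ent u j) + Fmi m j (ent u m) (ent u j)))) =
      ∑ m ∈ Finset.range n, 2 * (((if r < m ∧ m < j then bt (ent v j) (ent v m) (ent v r)
     else 0) : ℕ) : ℤ) := by
    refine Finset.sum_congr rfl fun m hm => ?_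
    have hm := Finset.mem_range.1 hm
    have hc := hv.ok hm
    by_cases hmr : m = r
    · simp [hmr]
    by_cases hmj : m = j
    · simp [hmj]
    have hca := hc.ne ha (hv.dist m r hm hr hmr)
    have hcb := hc.ne hb (hv.dist m j hm hj hmj)
    simp only [hE, hmr, hmj, show j ≠ r by omega, if_true, if_false, or_self, Fpl, Fmi, bt,
      ha.slt hc, hc.slt ha, hb.slt hc, hc.slt hb, ha.neg.slt hc, hb.neg.slt hc,
      hc.neg.slt ha, hc.neg.slt hb, ha.rk_neg, hb.rk_neg, hc.rk_neg]
    rcases lt_or_gt_of_ne hmr with h | h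
    · simp only [h, show m < j by omega, show ¬ r < m by omega, show ¬ r ≤ m by omega,
        show m ≤ r by omega, show m ≤ j by omega, show ¬ j < m by omega, show ¬ j ≤ m by omega,
        true_and, false_and, if_false]
      push_cast; omega
    rcases lt_or_gt_of_ne hmj with h' | h'
    · simp only [h, h', show ¬ m < r by omega, show r ≤ m by omega, show ¬ m ≤ r by omega,
        show m ≤ j by omega, show ¬ j < m by omega, show ¬ j ≤ m by omega,
        true_and, false_and, if_false, true_and, if_true]
      push_cast; omega
    · simp only [h, h', show ¬ m < r by omega, show r ≤ m by omega, show ¬ m ≤ r by omega,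
        show ¬ m ≤ j by omega, show ¬ m < j by omega, show j ≤ m by omega,
        true_and, false_and, if_false, and_false]
      push_cast; omega
  have hcst : ((Fpl r r (ent v r) (ent v r) + Fmi r r (ent v r) (ent v r)) +
       (Fpl r j (ent v r) (ent v j) + Fmi r j (ent v r) (ent v j)) +
       (Fpl j r (ent v j) (ent v r) + Fmi j r (ent v j) (ent v r)) +
       (Fpl j j (ent v j) (ent v j) + Fmi j j (ent v j) (ent v j))) -
      ((Fpl r r (ent u r) (ent u r) + Fmi r r (ent u r) (ent u r)) +
       (Fpl r j (ent u r) (ent u j) + Fmi r j (ent u r) (ent u j)) +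
       (Fpl j r (ent u j) (ent u r) + Fmi j r (ent u j) (ent u r)) +
       (Fpl j j (ent u j) (ent u j) + Fmi j j (ent u j) (ent u j))) = 1 := by
    simp only [hE, show j ≠ r by omega, if_true, if_false, Fpl, Fmi,
      lt_irrefl, le_refl, hrj, hrj.le, show ¬ j < r by omega, show ¬ j ≤ r by omega, false_and,
      true_and, ha.slt hb, hb.slt ha, ha.neg.slt ha, hb.neg.slt hb,
      hb.neg.slt ha, ha.neg.slt hb, ha.rk_neg, hb.rk_neg]
    push_cast; omega
  beta_reduce at D
  rw [hloc, hcst, ← h1, ← h2, ← Finset.mul_sum] at D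
  unfold ePos
  rw [← Nat.cast_inj (R := ℤ)]
  push_cast at D ⊢
  linarith

lemma len_bar {n : ℕ} {v : List ℤ} (hv : Win n v) {j : ℕ} (hj : j < n)
    (hs : ent v j < 0) :
    len v = len (applyRefl v (j + 1, -((j + 1 : ℕ) : ℤ))) + 2 * eBar n v j + 1 := by
  have hl := hv.length
  have hE := ent_bar (v := v) (j := j) (by omega)
  generalize hu : applyRefl v (j + 1, -((j + 1 : ℕ) : ℤ)) = u at *
  have hul : u.length = n := by rw [← hu, length_applyRefl, hl]
  have hb := hv.ok hj
  rw [hb.lt0] at hs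
  have h1 := len_sum v
  have h2 := len_sum u
  rw [hl] at h1; rw [hul] at h2
  have D := dsum_diff1 (fun p q => Fpl p q (ent v p) (ent v q) + Fmi p q (ent v p) (ent v q))
    (fun p q => Fpl p q (ent u p) (ent u q) + Fmi p q (ent u p) (ent u q)) hj
    (by intro p q e1 e2; simp only [hE, e1, e2, if_false])
  have hloc : (∑ m ∈ Finset.range n, if m = j then (0 : ℤ) else
      ((Fpl j m (ent v j) (ent v m) + Fmi j m (ent v j) (ent v m)) +
       (Fpl m j (ent v m) (ent v j) + Fmi m j (ent v m) (ent v j))) -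
      ((Fpl j m (ent u j) (ent u m) + Fmi j m (ent u j) (ent u m)) +
       (Fpl m j (ent u m) (ent u j) + Fmi m j (ent u m) (ent u j)))) =
      ∑ m ∈ Finset.range n, 2 * (((if j < m then bt (-ent v j) (ent v m) (ent v j)
        else 0) : ℕ) : ℤ) := by
    refine Finset.sum_congr rfl fun m hm => ?_
    have hm := Finset.mem_range.1 hm
    have hc := hv.ok hm
    by_cases hmj : m = j
    · simp [hmj]
    have hcb := hc.ne hb (hv.dist m j hm hj hmj)
    simp only [hE, hmj, if_true, if_false, Fpl, Fmi, bt,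
      hb.slt hc, hc.slt hb, hb.neg.slt hc, hc.slt hb.neg,
      hc.neg.slt hb, hc.neg.slt hb.neg, hb.rk_neg, hc.rk_neg, neg_neg]
    rcases lt_or_gt_of_ne hmj with h' | h'
    · simp only [h', show m ≤ j by omega, show ¬ j < m by omega, show ¬ j ≤ m by omega,
        true_and, false_and, if_false]
      push_cast; omega
    · simp only [h', show ¬ m ≤ j by omega, show ¬ m < j by omega, show j ≤ m by omega,
        true_and, false_and, if_false, if_true]
      push_cast; omega
  have hcst : (Fpl j j (ent v j) (ent v j) + Fmi j j (ent v j) (ent v j)) -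
       (Fpl j j (ent u j) (ent u j) + Fmi j j (ent u j) (ent u j)) = 1 := by
    simp only [hE, if_true, if_false, Fpl, Fmi, lt_irrefl, le_refl, false_and,
      true_and, hb.neg.slt hb, hb.slt hb.neg, neg_neg, hb.rk_neg]
    push_cast; omega
  beta_reduce at D
  rw [hloc, hcst, ← h1, ← h2, ← Finset.mul_sum] at D
  unfold eBar
  rw [← Nat.cast_inj (R := ℤ)]
  push_cast at D ⊢
  linarith

/-! ### The partial length statistics interpolating between `ℓ₊` and `ℓ` -/

/-- The statistic `ℓ₊ + ℓ₋^{rj}`, where `ℓ₋^{rj}` counts only the pairs preceding `(r, -j)`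
(here `r`, `j` are 0-based). -/
def stat (v : List ℤ) (r j : ℕ) : ℕ := lplus v + lminusBefore v (r + 1) (j + 1)

/-- Contribution of an ordered pair of positions to `ℓ₋^{rj}`. -/
def Fmb (r j p q : ℕ) (a b : ℤ) : ℤ :=
  if (q < j ∨ (q = j ∧ p < r)) ∧ p ≤ q ∧ slt (-b) a then 1 else 0

lemma stat_sum (v : List ℤ) (r j : ℕ) : (stat v r j : ℤ) =
    ∑ p ∈ Finset.range v.length, ∑ q ∈ Finset.range v.length,
      (Fpl p q (ent v p) (ent v q) + Fmb r j p q (ent v p) (ent v q)) := by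
  unfold stat
  push_cast
  rw [lplus_sum, lminusBefore_sum]
  simp only [Finset.sum_add_distrib, Nat.add_lt_add_iff_right, Nat.add_right_cancel_iff, Fmb, Fmi,
    ite_and]

/-- A length-decreasing `(r,-j)` lowers `ℓ₊ + ℓ₋^{rj}` by exactly `(d - 1) / 2`, where `d` is the drop
in length; this is what makes the sum over the last factors of the chain collapse. -/
lemma stat_neg {n : ℕ} {v : List ℤ} (hv : Win n v) {r j : ℕ} (hrj : r < j) (hj : j < n)
    (hs : slt (-ent v j) (ent v r)) :
    stat v r j =
      stat (applyRefl v (r + 1, -((j + 1 : ℕ) : ℤ))) r j + eNeg n v r j := by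
  have hl := hv.length
  have hr : r < n := by omega
  have hE := ent_neg (v := v) hrj (by omega)
  generalize hu : applyRefl v (r + 1, -((j + 1 : ℕ) : ℤ)) = u at *
  have hul : u.length = n := by rw [← hu, length_applyRefl, hl]
  have ha := hv.ok hr
  have hb := hv.ok hj
  have hab := ha.ne hb (hv.dist r j hr hj (by omega))
  rw [hb.neg.slt ha, hb.rk_neg] at hs
  have h1 := stat_sum v r j
  have h2 := stat_sum u r j
  rw [hl] at h1; rw [hul] at h2
  have D := dsum_diff2 (fun p q => Fpl p q (ent v p) (ent v q) + Fmb r j p q (ent v p) (ent v q))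
    (fun p q => Fpl p q (ent u p) (ent u q) + Fmb r j p q (ent u p) (ent u q)) hrj hj
    (by intro p q e1 e2 e3 e4; simp only [hE, e1, e2, e3, e4, if_false])
  have hloc : (∑ m ∈ Finset.range n, if m = r ∨ m = j then (0 : ℤ) else
      ((Fpl r m (ent v r) (ent v m) + Fmb r j r m (ent v r) (ent v m)) +
       (Fpl m r (ent v m) (ent v r) + Fmb r j m r (ent v m) (ent v r)) +
       (Fpl j m (ent v j) (ent v m) + Fmb r j j m (ent v j) (ent v m)) +
       (Fpl m j (ent v m) (ent v j) + Fmb r j m j (ent v m) (ent v j))) -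
      ((Fpl r m (ent u r) (ent u m) + Fmb r j r m (ent u r) (ent u m)) +
       (Fpl m r (ent u m) (ent u r) + Fmb r j m r (ent u m) (ent u r)) +
       (Fpl j m (ent u j) (ent u m) + Fmb r j j m (ent u j) (ent u m)) +
       (Fpl m j (ent u m) (ent u j) + Fmb r j m j (ent u m) (ent u j)))) =
      ∑ m ∈ Finset.range n, (((if r < m ∧ m < j then bt (-ent v j) (ent v m) (ent v r)
     else if j < m then bt (-ent v j) (ent v m) (ent v r) + bt (-ent v j) (-ent v m) (ent v r)
     else 0) : ℕ) : ℤ) := by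
    refine Finset.sum_congr rfl fun m hm => ?_
    have hm := Finset.mem_range.1 hm
    have hc := hv.ok hm
    by_cases hmr : m = r
    · simp [hmr, show ¬ j < r by omega]
    by_cases hmj : m = j
    · simp [hmj]
    have hca := hc.ne ha (hv.dist m r hm hr hmr)
    have hcb := hc.ne hb (hv.dist m j hm hj hmj)
    simp only [hE, hmr, hmj, show j ≠ r by omega, if_true, if_false, or_self, Fpl, Fmb, bt,
      ha.slt hc, hc.slt ha, hb.slt hc, hc.slt hb, ha.neg.slt hc, hc.slt ha.neg, hb.neg.slt hc,
      hc.slt hb.neg, hc.neg.slt ha, hc.neg.slt hb, hc.neg.slt ha.neg, hc.neg.slt hb.neg,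
      hb.neg.slt hc.neg, ha.rk_neg, hb.rk_neg, hc.rk_neg, neg_neg]
    rcases lt_or_gt_of_ne hmr with h | h
    · simp only [h, show m < j by omega, show ¬ r < m by omega, show ¬ r ≤ m by omega,
        show m ≤ r by omega, show m ≤ j by omega, show ¬ j < m by omega, show ¬ j ≤ m by omega,
        true_and, false_and, true_or, or_true, or_false, false_or, lt_irrefl, and_false, if_false]
      push_cast; omega
    rcases lt_or_gt_of_ne hmj with h' | h'
    · simp only [h, h', show ¬ m < r by omega, show r ≤ m by omega, show ¬ m ≤ r by omega,
        show m ≤ j by omega, show ¬ j < m by omega, show ¬ j ≤ m by omega,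
        true_and, false_and, true_or, or_true, or_false, false_or, lt_irrefl, and_false, if_false, true_and, if_true]
      push_cast; omega
    · simp only [h, h', show ¬ m < r by omega, show r ≤ m by omega, show ¬ m ≤ r by omega,
        show ¬ m ≤ j by omega, show ¬ m < j by omega, show j ≤ m by omega,
        true_and, false_and, true_or, or_true, or_false, false_or, lt_irrefl, and_false, if_false, if_true]
      push_cast; omega
  have hcst : ((Fpl r r (ent v r) (ent v r) + Fmb r j r r (ent v r) (ent v r)) +
       (Fpl r j (ent v r) (ent v j) + Fmb r j r j (ent v r) (ent v j)) +
       (Fpl j r (ent v j) (ent v r) + Fmb r j j r (ent v j) (ent v r)) +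
       (Fpl j j (ent v j) (ent v j) + Fmb r j j j (ent v j) (ent v j))) -
      ((Fpl r r (ent u r) (ent u r) + Fmb r j r r (ent u r) (ent u r)) +
       (Fpl r j (ent u r) (ent u j) + Fmb r j r j (ent u r) (ent u j)) +
       (Fpl j r (ent u j) (ent u r) + Fmb r j j r (ent u j) (ent u r)) +
       (Fpl j j (ent u j) (ent u j) + Fmb r j j j (ent u j) (ent u j))) =
      (sigmaAB (ent v r) (ent v j) : ℤ) := by
    simp only [hE, show j ≠ r by omega, if_true, if_false, Fpl, Fmb, sigmaAB,
      lt_irrefl, le_refl, true_or, or_true, or_false, and_true, and_false, hrj, hrj.le, show ¬ j < r by omega, show ¬ j ≤ r by omega, false_and,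
      true_and, ha.slt ha, hb.slt hb, ha.slt hb, hb.slt ha, ha.neg.slt ha, hb.neg.slt hb,
      ha.neg.slt hb.neg, hb.neg.slt ha, neg_neg, ha.slt ha.neg, hb.slt hb.neg, ha.slt hb.neg,
      ha.rk_neg, hb.rk_neg, ha.lt0, hb.lt0]
    push_cast; omega
  beta_reduce at D
  rw [hloc, hcst, ← h1, ← h2] at D
  unfold eNeg
  rw [← Nat.cast_inj (R := ℤ)]
  push_cast at D ⊢
  linarith

lemma stat_bar {n : ℕ} {v : List ℤ} (hv : Win n v) {j : ℕ} (hj : j < n)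
    (hs : ent v j < 0) :
    stat v j j =
      stat (applyRefl v (j + 1, -((j + 1 : ℕ) : ℤ))) j j + eBar n v j := by
  have hl := hv.length
  have hE := ent_bar (v := v) (j := j) (by omega)
  generalize hu : applyRefl v (j + 1, -((j + 1 : ℕ) : ℤ)) = u at *
  have hul : u.length = n := by rw [← hu, length_applyRefl, hl]
  have hb := hv.ok hj
  rw [hb.lt0] at hs
  have h1 := stat_sum v j j
  have h2 := stat_sum u j j
  rw [hl] at h1; rw [hul] at h2
  have D := dsum_diff1 (fun p q => Fpl p q (ent v p) (ent v q) + Fmb j j p q (ent v p) (ent v q))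
    (fun p q => Fpl p q (ent u p) (ent u q) + Fmb j j p q (ent u p) (ent u q)) hj
    (by intro p q e1 e2; simp only [hE, e1, e2, if_false])
  have hloc : (∑ m ∈ Finset.range n, if m = j then (0 : ℤ) else
      ((Fpl j m (ent v j) (ent v m) + Fmb j j j m (ent v j) (ent v m)) +
       (Fpl m j (ent v m) (ent v j) + Fmb j j m j (ent v m) (ent v j))) -
      ((Fpl j m (ent u j) (ent u m) + Fmb j j j m (ent u j) (ent u m)) +
       (Fpl m j (ent u m) (ent u j) + Fmb j j m j (ent u m) (ent u j)))) =
      ∑ m ∈ Finset.range n, (((if j < m then bt (-ent v j) (ent v m) (ent v j)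
        else 0) : ℕ) : ℤ) := by
    refine Finset.sum_congr rfl fun m hm => ?_
    have hm := Finset.mem_range.1 hm
    have hc := hv.ok hm
    by_cases hmj : m = j
    · simp [hmj]
    have hcb := hc.ne hb (hv.dist m j hm hj hmj)
    simp only [hE, hmj, if_true, if_false, Fpl, Fmb, bt,
      hb.slt hc, hc.slt hb, hb.neg.slt hc, hc.slt hb.neg,
      hc.neg.slt hb, hc.neg.slt hb.neg, hb.rk_neg, hc.rk_neg, neg_neg]
    rcases lt_or_gt_of_ne hmj with h' | h'
    · simp only [h', show m ≤ j by omega, show ¬ j < m by omega, show ¬ j ≤ m by omega,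
        true_and, false_and, true_or, or_true, or_false, false_or, lt_irrefl, and_false, if_false]
      push_cast; omega
    · simp only [h', show ¬ m ≤ j by omega, show ¬ m < j by omega, show j ≤ m by omega,
        true_and, false_and, true_or, or_true, or_false, false_or, lt_irrefl, and_false, if_false, if_true]
      push_cast; omega
  have hcst : (Fpl j j (ent v j) (ent v j) + Fmb j j j j (ent v j) (ent v j)) -
       (Fpl j j (ent u j) (ent u j) + Fmb j j j j (ent u j) (ent u j)) = 0 := by
    simp only [hE, if_true, if_false, Fpl, Fmb, lt_irrefl, le_refl, or_false, and_false, false_and,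
      true_and, hb.neg.slt hb, hb.slt hb.neg, neg_neg, hb.rk_neg]
    simp
  beta_reduce at D
  rw [hloc, hcst, ← h1, ← h2] at D
  unfold eBar
  rw [← Nat.cast_inj (R := ℤ)]
  push_cast at D ⊢
  linarith

/-! ### Transfer operators -/

/-- A reflection that does not satisfy the decrease condition of `len_neg` increases the length. -/
lemma len_neg' {n : ℕ} {v : List ℤ} (hv : Win n v) {r j : ℕ} (hrj : r < j) (hj : j < n)
    (hs : slt (ent v r) (-ent v j)) :
    len (applyRefl v (r + 1, -((j + 1 : ℕ) : ℤ))) =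
      len v + 2 * eNeg n (applyRefl v (r + 1, -((j + 1 : ℕ) : ℤ))) r j + 1 := by
  have hg := GoodR.neg (n := n) r j hrj hj
  have h := len_neg (hv.refl hg) hrj hj (by
    rw [ent_neg hrj (by rw [hv.length]; exact hj), ent_neg hrj (by rw [hv.length]; exact hj)]
    simpa [show j ≠ r by omega] using hs)
  rwa [applyRefl_invol hv.length hg] at h

lemma len_pos' {n : ℕ} {v : List ℤ} (hv : Win n v) {r j : ℕ} (hrj : r < j) (hj : j < n)
    (hs : slt (ent v r) (ent v j)) :
    len (applyRefl v (r + 1, ((j + 1 : ℕ) : ℤ))) =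
      len v + 2 * ePos n (applyRefl v (r + 1, ((j + 1 : ℕ) : ℤ))) r j + 1 := by
  have hg := GoodR.pos (n := n) r j hrj hj
  have h := len_pos (hv.refl hg) hrj hj (by
    rw [ent_pos hrj (by rw [hv.length]; exact hj), ent_pos hrj (by rw [hv.length]; exact hj)]
    simpa [show j ≠ r by omega] using hs)
  rwa [applyRefl_invol hv.length hg] at h

lemma len_bar' {n : ℕ} {v : List ℤ} (hv : Win n v) {j : ℕ} (hj : j < n)
    (hs : 0 < ent v j) :
    len (applyRefl v (j + 1, -((j + 1 : ℕ) : ℤ))) =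
      len v + 2 * eBar n (applyRefl v (j + 1, -((j + 1 : ℕ) : ℤ))) j + 1 := by
  have hg := GoodR.bar (n := n) j hj
  have h := len_bar (hv.refl hg) hj (by
    rw [ent_bar (by rw [hv.length]; exact hj)]
    simpa using hs)
  rwa [applyRefl_invol hv.length hg] at h

lemma Ok.tri {n : ℕ} {a b : ℤ} (ha : Ok n a) (hb : Ok n b) (h : a ≠ b) :
    HL.slt a b ∨ HL.slt b a := by
  rw [ha.slt hb, hb.slt ha]
  exact lt_or_gt_of_ne fun e => h ((ha.eq hb).2 e)

lemma slt_asymm {a b : ℤ} (h : slt a b) : ¬ slt b a := by unfold slt at *; omega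

lemma slt_irrefl (a : ℤ) : ¬ slt a a := by unfold slt; omega

lemma slt_trans {a b c : ℤ} (h : slt a b) (h' : slt b c) : slt a c := by unfold slt at *; omega

/-- Every reflection changes the length by an odd number. -/
lemma len_parity {n : ℕ} {v : List ℤ} (hv : Win n v) {t : ℕ × ℤ} (ht : GoodR n t) :
    ∃ e, len v = len (applyRefl v t) + 2 * e + 1 ∨ len (applyRefl v t) = len v + 2 * e + 1 := by
  cases ht with
  | pos r j h1 h2 =>
    rcases (hv.ok (show r < n by omega)).tri (hv.ok h2)
      (hv.dist r j (by omega) h2 (by omega)).1 with h | h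
    · exact ⟨_, Or.inr (len_pos' hv h1 h2 h)⟩
    · exact ⟨_, Or.inl (len_pos hv h1 h2 h)⟩
  | neg r j h1 h2 =>
    rcases (hv.ok (show r < n by omega)).tri (hv.ok h2).neg
      (hv.dist r j (by omega) h2 (by omega)).2 with h | h
    · exact ⟨_, Or.inr (len_neg' hv h1 h2 h)⟩
    · exact ⟨_, Or.inl (len_neg hv h1 h2 h)⟩
  | bar j h2 =>
    rcases lt_or_gt_of_ne (hv.ne j h2) with h | h
    · exact ⟨_, Or.inl (len_bar hv h2 h)⟩
    · exact ⟨_, Or.inr (len_bar' hv h2 h)⟩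

/-- The transfer operator of one reflection: `Up t g v` collects `g v` (not using `t`) and the
weighted value of `g` at the longer element `v t` (using `t`). -/
noncomputable def Up (t : ℕ × ℤ) (g : List ℤ → ℤ[X]) (v : List ℤ) : ℤ[X] :=
  g v + if len v < len (applyRefl v t) then
    X ^ ((len (applyRefl v t) - len v - 1) / 2) * (1 - X) * g (applyRefl v t) else 0

/-- The composite of the transfer operators of a sequence of reflections. -/
noncomputable def push (Γ : List (ℕ × ℤ)) (g : List ℤ → ℤ[X]) : List ℤ → ℤ[X] :=
  Γ.foldl (fun g t => Up t g) g

@[simp] lemma push_nil (g : List ℤ → ℤ[X]) : push [] g = g := rfl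

lemma push_append (Γ Δ : List (ℕ × ℤ)) (g : List ℤ → ℤ[X]) :
    push (Γ ++ Δ) g = push Δ (push Γ g) := by simp [push]

lemma push_snoc (Γ : List (ℕ × ℤ)) (t : ℕ × ℤ) (g : List ℤ → ℤ[X]) :
    push (Γ ++ [t]) g = Up t (push Γ g) := by simp [push]

lemma push_single (t : ℕ × ℤ) (g : List ℤ → ℤ[X]) : push [t] g = Up t g := rfl

lemma push_cons (t : ℕ × ℤ) (Γ : List (ℕ × ℤ)) (g : List ℤ → ℤ[X]) :
    push (t :: Γ) g = push Γ (Up t g) := rfl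

lemma Up_congr {n : ℕ} {t : ℕ × ℤ} (ht : GoodR n t) {g g' : List ℤ → ℤ[X]}
    (h : ∀ v, Win n v → g v = g' v) {v : List ℤ} (hv : Win n v) : Up t g v = Up t g' v := by
  unfold Up; rw [h v hv, h _ (hv.refl ht)]

lemma push_congr {n : ℕ} {Γ : List (ℕ × ℤ)} (hΓ : ∀ t ∈ Γ, GoodR n t) :
    ∀ {g g' : List ℤ → ℤ[X]}, (∀ v, Win n v → g v = g' v) →
    ∀ v, Win n v → push Γ g v = push Γ g' v := by
  induction Γ with
  | nil => intro g g' h v hv; exact h v hv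
  | cons t Γ ih =>
    intro g g' h
    exact ih (fun s hs => hΓ s (by simp [hs])) (fun v hv => Up_congr (hΓ t (by simp)) h hv)

/-- If none of the reflections touches position `p` and `g` is supported on the windows with entry
`c` there, then so is `push Γ g`. -/
lemma push_zero {n : ℕ} {Γ : List (ℕ × ℤ)} {p : ℕ} {c : ℤ}
    (hΓ : ∀ t ∈ Γ, GoodR n t ∧ ∀ v : List ℤ, v.length = n → ent (applyRefl v t) p = ent v p) :
    ∀ {g : List ℤ → ℤ[X]}, (∀ v, Win n v → ent v p ≠ c → g v = 0) →
    ∀ v, Win n v → ent v p ≠ c → push Γ g v = 0 := by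
  induction Γ with
  | nil => intro g h v hv; exact h v hv
  | cons t Γ ih =>
    intro g h
    refine ih (fun s hs => hΓ s (by simp [hs])) fun v hv hc => ?_
    have ht := hΓ t (by simp)
    show Up t g v = 0
    unfold Up
    rw [h v hv hc, h _ (hv.refl ht.1) (by rwa [ht.2 v hv.length])]
    simp

lemma Up_neg (g : List ℤ → ℤ[X]) {n : ℕ} {v : List ℤ} (hv : Win n v) {r j : ℕ} (hrj : r < j)
    (hj : j < n) :
    Up (r + 1, -((j + 1 : ℕ) : ℤ)) g v = g v + if slt (ent v r) (-ent v j) then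
      X ^ (eNeg n (applyRefl v (r + 1, -((j + 1 : ℕ) : ℤ))) r j) * (1 - X) *
        g (applyRefl v (r + 1, -((j + 1 : ℕ) : ℤ))) else 0 := by
  unfold Up
  congr 1
  by_cases h : slt (ent v r) (-ent v j)
  · have := len_neg' hv hrj hj h
    rw [if_pos h, if_pos (by omega)]
    congr 3; omega
  · have h' := ((hv.ok (show r < n by omega)).tri (hv.ok hj).neg
      (hv.dist r j (by omega) hj (by omega)).2).resolve_left h
    have := len_neg hv hrj hj h'
    rw [if_neg h, if_neg (by omega)]

lemma Up_pos (g : List ℤ → ℤ[X]) {n : ℕ} {v : List ℤ} (hv : Win n v) {r j : ℕ} (hrj : r < j)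
    (hj : j < n) :
    Up (r + 1, ((j + 1 : ℕ) : ℤ)) g v = g v + if slt (ent v r) (ent v j) then
      X ^ (ePos n (applyRefl v (r + 1, ((j + 1 : ℕ) : ℤ))) r j) * (1 - X) *
        g (applyRefl v (r + 1, ((j + 1 : ℕ) : ℤ))) else 0 := by
  unfold Up
  congr 1
  by_cases h : slt (ent v r) (ent v j)
  · have := len_pos' hv hrj hj h
    rw [if_pos h, if_pos (by omega)]
    congr 3; omega
  · have h' := ((hv.ok (show r < n by omega)).tri (hv.ok hj)
      (hv.dist r j (by omega) hj (by omega)).1).resolve_left h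
    have := len_pos hv hrj hj h'
    rw [if_neg h, if_neg (by omega)]

lemma Up_bar (g : List ℤ → ℤ[X]) {n : ℕ} {v : List ℤ} (hv : Win n v) {j : ℕ} (hj : j < n) :
    Up (j + 1, -((j + 1 : ℕ) : ℤ)) g v = g v + if 0 < ent v j then
      X ^ (eBar n (applyRefl v (j + 1, -((j + 1 : ℕ) : ℤ))) j) * (1 - X) *
        g (applyRefl v (j + 1, -((j + 1 : ℕ) : ℤ))) else 0 := by
  unfold Up
  congr 1
  by_cases h : 0 < ent v j
  · have := len_bar' hv hj h
    rw [if_pos h, if_pos (by omega)]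
    congr 3; omega
  · have h' := hv.ne j hj
    have := len_bar hv hj (by omega)
    rw [if_neg h, if_neg (by omega)]

/-! ### The columns `D(r₁,-j)⋯(r_p,-j)` -/

lemma Dist.neg {D : List ℤ} (h : Dist D) {r j : ℕ} (hrj : r < j) (hj : j < D.length) :
    Dist (applyRefl D (r + 1, -((j + 1 : ℕ) : ℤ))) := by
  intro p q hp hq hpq
  rw [length_applyRefl] at hp hq
  have hE := ent_neg (v := D) hrj hj
  rw [hE p, hE q]
  have hr : r < D.length := by omega
  have c1 := h p q hp hq hpq
  have c2 := h r j hr hj (by omega)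
  have c3 : p ≠ r → _ := h p r hp hr
  have c4 : p ≠ j → _ := h p j hp hj
  have c5 : q ≠ r → _ := h q r hq hr
  have c6 : q ≠ j → _ := h q j hq hj
  split_ifs <;> constructor <;> omega

lemma colDistinct_dist {D : List ℤ} : colDistinct D → Dist D := by
  intro h p q hp hq hpq
  rcases lt_or_gt_of_ne hpq with h' | h'
  · exact h p q h' hq
  · have := h q p h' hp
    simp only [ent_def] at this
    constructor <;> omega

/-- `R = (r₁ < ⋯ < r_p)` with `1 ≤ r_i ≤ s`. -/
def SortedTo (R : List ℕ) (s : ℕ) : Prop := R.Pairwise (· < ·) ∧ ∀ r ∈ R, 1 ≤ r ∧ r ≤ s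

lemma sortedR_to {R : List ℕ} {j d : ℕ} (h : sortedR R (j + 1) d) : SortedTo R j ∧ j < d := by
  obtain ⟨h1, h2, h3, h4⟩ := h
  refine ⟨⟨List.isChain_iff_pairwise.1 h1, fun r hr => ?_⟩, by omega⟩
  have := h2 r hr; omega

lemma cyc_snoc (D : List ℤ) (R : List ℕ) (s j : ℕ) :
    cycleApply D (R ++ [s]) j = applyRefl (cycleApply D R j) (s, -(j : ℤ)) := by
  simp [cycleApply]

lemma cyc_length (D : List ℤ) (R : List ℕ) (j : ℕ) : (cycleApply D R j).length = D.length := by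
  induction R using List.reverseRecOn with
  | nil => rfl
  | append_singleton R s ih => rw [cyc_snoc, length_applyRefl, ih]

lemma cycleN_snoc (n : ℕ) (R : List ℕ) (s j : ℕ) : ∀ D : List ℤ,
    cycleN n D (R ++ [s]) j = cycleN n D R j + N1 n (cycleApply D R j) s j := by
  induction R with
  | nil => intro D; simp [cycleN, cycleApply]
  | cons r R ih =>
    intro D
    simp only [List.cons_append, cycleN, ih, cycleApply, List.foldl_cons]
    ring

lemma SortedTo.snoc {R : List ℕ} {s r : ℕ} (h : SortedTo (R ++ [r]) s) :
    SortedTo R (r - 1) ∧ 1 ≤ r ∧ r ≤ s := by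
  obtain ⟨h1, h2⟩ := h
  rw [List.pairwise_append] at h1
  have h3 := h2 r (by simp)
  refine ⟨⟨h1.1, fun a ha => ?_⟩, h3⟩
  have := h1.2.2 a ha r (by simp)
  have := h2 a (by simp [ha])
  omega

lemma SortedTo.mono {R : List ℕ} {s s' : ℕ} (h : SortedTo R s) (hs : s ≤ s') : SortedTo R s' :=
  ⟨h.1, fun r hr => ⟨(h.2 r hr).1, (h.2 r hr).2.trans hs⟩⟩

/-- Basic properties of `E = D(r₁,-j)⋯(r_p,-j)`: it has distinct letters, outside position
`j` it differs from `D` exactly in the positions `r_i`, and the letter `-D(j)` ends up in one of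
these positions (if there are any). -/
lemma cyc_props {D : List ℤ} (hD : Dist D) {j : ℕ} (hj : j < D.length) (R : List ℕ) :
    ∀ {s}, SortedTo R s → s ≤ j →
    Dist (cycleApply D R (j + 1)) ∧
    (∀ p, p ≠ j → p + 1 ∉ R → ent (cycleApply D R (j + 1)) p = ent D p) ∧
    (∀ p, p + 1 ∈ R → ent (cycleApply D R (j + 1)) p ≠ ent D p) ∧
    (R = [] ∨ ∃ p, p + 1 ∈ R ∧ ent (cycleApply D R (j + 1)) p = - ent D j) := by
  induction R using List.reverseRecOn with
  | nil => intro s _ _; exact ⟨hD, fun p _ _ => rfl, by simp, Or.inl rfl⟩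
  | append_singleton R r ih =>
    intro s hR hs
    obtain ⟨h1, h2, h3⟩ := hR.snoc
    obtain ⟨r, rfl⟩ : ∃ a, r = a + 1 := ⟨r - 1, by omega⟩
    obtain ⟨i1, i2, i3, i4⟩ := ih h1 (by omega)
    have hrj : r < j := by omega
    have hjl : j < (cycleApply D R (j + 1)).length := by rw [cyc_length]; exact hj
    have hE := ent_neg hrj hjl
    have hrR : r + 1 ∉ R := fun h => by have := (h1.2 _ h).2; omega
    rw [cyc_snoc]
    refine ⟨i1.neg hrj hjl, ?_, ?_, Or.inr ?_⟩
    · intro p hp hpR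
      simp only [List.mem_append, List.mem_singleton, not_or] at hpR
      rw [hE, if_neg (by omega), if_neg hp, i2 p hp hpR.1]
    · intro p hp
      simp only [List.mem_append, List.mem_singleton] at hp
      rw [hE]
      by_cases hpr : p = r
      · subst hpr
        rw [if_pos rfl, ← i2 p (by omega) hrR]
        have := i1 p j (by omega) hjl (by omega)
        omega
      · have hp' := hp.resolve_right (by omega)
        have := (h1.2 _ hp').2
        rw [if_neg hpr, if_neg (by omega)]
        exact i3 p hp'
    · rcases i4 with rfl | ⟨p, hp, hp'⟩
      · exact ⟨r, by simp, by rw [hE, if_pos rfl]; rfl⟩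
      · have := (h1.2 _ hp).2
        refine ⟨p, by simp [hp], ?_⟩
        rw [hE, if_neg (by omega), if_neg (by omega), hp']

/-! ### The statistic `N` in terms of windows -/

lemma Nab_snoc (x y c : ℤ) (u : List ℤ) : Nab x y (u ++ [c]) = Nab x y u + bt x c y := by
  unfold Nab bt
  by_cases h : slt x c ∧ slt c y <;> simp [List.filter_append, h]

lemma Nab_slice (x y : ℤ) (D : List ℤ) (s n : ℕ) : ∀ k, s + k ≤ D.length → s + k ≤ n →
    Nab x y ((D.drop s).take k) =
      ∑ m ∈ Finset.range n, if s ≤ m ∧ m < s + k then bt x (ent D m) y else 0 := by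
  intro k
  induction k with
  | zero =>
    intro _ _
    rw [Finset.sum_eq_zero (fun m _ => if_neg (by omega))]
    simp [Nab]
  | succ k ih =>
    intro h1 h2
    have e1 : (D.drop s).take (k + 1) = (D.drop s).take k ++ [ent D (s + k)] := by
      rw [List.take_add_one]
      congr 1
      have : s + k < D.length := by omega
      simp [ent, List.getD_eq_getElem?_getD, this]
    rw [e1, Nab_snoc, ih (by omega) (by omega)]
    have e2 : bt x (ent D (s + k)) y =
        ∑ m ∈ Finset.range n, if m = s + k then bt x (ent D m) y else 0 := by
      rw [Finset.sum_ite_eq' ]; simp [show s + k < n by omega]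
    rw [e2, ← Finset.sum_add_distrib]
    refine Finset.sum_congr rfl fun m _ => ?_
    split_ifs <;> first | rfl | omega

/-- The letters `±v(p)` of a window run through the alphabet `{±1, …, ±n}`. -/
lemma sum_allEntries {n : ℕ} {v : List ℤ} (hv : Win n v) (f : ℤ → ℕ) :
    ((allEntries n).map f).sum = ∑ m ∈ Finset.range n, (f (ent v m) + f (-ent v m)) := by
  have h1 : ((allEntries n).map f).sum =
      ∑ r ∈ Finset.range n, (f ((r + 1 : ℕ) : ℤ) + f (-((r + 1 : ℕ) : ℤ))) := by
    unfold allEntries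
    rw [Finset.sum_add_distrib, List.map_append, List.sum_append, List.map_map, List.map_map]
    congr 1
  have hmaps : Set.MapsTo (fun p => (ent v p).natAbs - 1) (Finset.range n : Set ℕ)
      (Finset.range n : Set ℕ) := by
    intro p hp
    simp only [Finset.coe_range, Set.mem_Iio] at hp ⊢
    have := hv.ok hp; unfold Ok at this; omega
  have hinj : Set.InjOn (fun p => (ent v p).natAbs - 1) (Finset.range n : Set ℕ) := by
    intro p hp q hq h
    simp only [Finset.coe_range, Set.mem_Iio] at hp hq h
    by_contra hpq
    have := hv.dist p q hp hq hpq
    have := hv.ne p hp; have := hv.ne q hq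
    omega
  rw [h1]
  symm
  refine Finset.sum_nbij (fun p => (ent v p).natAbs - 1) (fun p hp => hmaps hp) hinj
    (Finset.surjOn_of_injOn_of_card_le _ hmaps hinj le_rfl) ?_
  intro p hp
  have := hv.ne p (Finset.mem_range.1 hp)
  rcases lt_or_gt_of_ne this with h | h
  · have e : (((ent v p).natAbs - 1 + 1 : ℕ) : ℤ) = - ent v p := by omega
    rw [e, neg_neg, add_comm]
  · have e : (((ent v p).natAbs - 1 + 1 : ℕ) : ℤ) = ent v p := by omega
    rw [e]

lemma filter_length_sum (l : List ℤ) (p : ℤ → Prop) [DecidablePred p] :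
    (l.filter (fun c => decide (p c))).length = (l.map (fun c => if p c then 1 else 0)).sum := by
  induction l with
  | nil => rfl
  | cons a l ih => by_cases h : p a <;> simp [List.filter_cons, h, ih]; omega

lemma mem_take_ent {D : List ℤ} {k : ℕ} (hk : k ≤ D.length) {c : ℤ} :
    c ∈ D.take k ↔ ∃ p, p < k ∧ ent D p = c := by
  rw [List.mem_iff_getElem]
  constructor
  · rintro ⟨p, hp, rfl⟩
    have hp' : p < k := by simp at hp; omega
    refine ⟨p, hp', ?_⟩
    simp [ent, List.getD_eq_getElem?_getD, show p < D.length by omega]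
  · rintro ⟨p, hp, rfl⟩
    refine ⟨p, by simp; omega, ?_⟩
    simp [ent, List.getD_eq_getElem?_getD, show p < D.length by omega]

/-- On a window `v` extending the column `D`, the statistic `N(D, D(r,-j))` is half the drop
in length minus one. -/
lemma N1_eq {n : ℕ} {v D : List ℤ} (hv : Win n v) (hd : D.length ≤ n)
    (hag : ∀ p, p < D.length → ent v p = ent D p) {r j : ℕ} (hrj : r < j) (hj : j < D.length) :
    N1 n D (r + 1) (j + 1) = eNeg n v r j := by
  unfold N1 eNeg
  simp only [Nat.add_sub_cancel, ent_def]
  rw [← hag r (by omega), ← hag j hj]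
  congr 1
  have h1 : Nab (-ent v j) (ent v r) (word D (r + 1 + 1) j) =
      ∑ m ∈ Finset.range n, if r < m ∧ m < j then bt (-ent v j) (ent v m) (ent v r) else 0 := by
    unfold word
    rw [Nat.add_sub_cancel, Nab_slice _ _ _ _ n _ (by omega) (by omega)]
    refine Finset.sum_congr rfl fun m _ => ?_
    by_cases h : r < m ∧ m < j
    · rw [if_pos (by omega), if_pos h, hag m (by omega)]
    · rw [if_neg (by omega), if_neg h]
  rw [h1, filter_length_sum, sum_allEntries hv, ← Finset.sum_add_distrib]
  refine Finset.sum_congr rfl fun m hm => ?_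
  have hm := Finset.mem_range.1 hm
  have hmem : ∀ c, (c ∉ D.take (j + 1) ∧ c ∉ (D.take (j + 1)).map (fun x => -x)) ↔
      ∀ p, p < j + 1 → ent v p ≠ c ∧ ent v p ≠ -c := by
    intro c
    simp only [List.mem_map, mem_take_ent (show j + 1 ≤ D.length by omega)]
    constructor
    · rintro ⟨a, b⟩ p hp
      rw [hag p (by omega)]
      refine ⟨fun e => a ⟨p, hp, e⟩, fun e => b ⟨ent D p, ⟨p, hp, rfl⟩, by omega⟩⟩
    · intro h
      refine ⟨?_, ?_⟩
      · rintro ⟨p, hp, e⟩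
        exact (h p hp).1 (by rw [hag p (by omega), e])
      · rintro ⟨x, ⟨p, hp, rfl⟩, e⟩
        exact (h p hp).2 (by rw [hag p (by omega)]; omega)
  simp only [hmem]
  by_cases hmj : m < j + 1
  · have z1 : ¬ (slt (-ent v j) (ent v m) ∧ slt (ent v m) (ent v r) ∧
        ∀ p, p < j + 1 → ent v p ≠ ent v m ∧ ent v p ≠ -ent v m) :=
      fun h => (h.2.2 m hmj).1 rfl
    have z2 : ¬ (slt (-ent v j) (-ent v m) ∧ slt (-ent v m) (ent v r) ∧
        ∀ p, p < j + 1 → ent v p ≠ -ent v m ∧ ent v p ≠ - -ent v m) :=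
      fun h => (h.2.2 m hmj).2 (neg_neg _).symm
    rw [if_neg z1, if_neg z2]
    by_cases h : r < m ∧ m < j
    · rw [if_pos h, if_pos h]; rfl
    · rw [if_neg h, if_neg h, if_neg (by omega)]
  · rw [if_neg (show ¬ (r < m ∧ m < j) by omega), if_neg (show ¬ (r < m ∧ m < j) by omega),
      if_pos (show j < m by omega), zero_add]
    have hne : ∀ p, p < j + 1 → ent v p ≠ ent v m ∧ ent v p ≠ -ent v m := fun p hp =>
      hv.dist p m (by omega) hm (by omega)
    unfold bt
    congr 1
    · exact if_congr ⟨fun h => ⟨h.1, h.2.1⟩, fun h => ⟨h.1, h.2, hne⟩⟩ rfl rfl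
    · refine if_congr ⟨fun h => ⟨h.1, h.2.1⟩, fun h => ⟨h.1, h.2, fun p hp => ?_⟩⟩ rfl rfl
      have := hne p hp
      rw [neg_neg]; exact ⟨this.2, this.1⟩

/-! ### The factors `Γ'_j` -/

lemma take_eq_iff {n : ℕ} {v D : List ℤ} (hv : v.length = n) (hd : D.length ≤ n) :
    v.take D.length = D ↔ ∀ p, p < D.length → ent v p = ent D p := by
  constructor
  · intro h p hp
    rw [← ent_take v D.length p hp, h]
  · intro h
    apply ent_ext
    · simp; omega
    · intro p hp
      rw [ent_take _ _ _ hp, h p hp]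

/-- Transfer of the indicator of the column `D` through the first `s` reflections of `Γ'_j`,
evaluated at windows that agree outside position `j` with `D(r₁,-j)⋯(r_p,-j)`. -/
lemma push_prime {n : ℕ} {D : List ℤ} (hd : D.length ≤ n) (hD : Dist D) {j : ℕ}
    (hj : j < D.length) (c : ℤ[X]) : ∀ s, s ≤ j → ∀ R, SortedTo R s →
    (∀ p, p + 1 ∈ R → sle (ent (cycleApply D R (j + 1)) p) (ent D p)) →
    ∀ v, Win n v → (∀ p, p < D.length → p ≠ j → ent v p = ent (cycleApply D R (j + 1)) p) →
    push ((List.range s).map (fun r => (r + 1, -((j + 1 : ℕ) : ℤ))))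
      (fun v => if v.take D.length = D then c else 0) v =
    if ent v j = ent (cycleApply D R (j + 1)) j then
      c * X ^ cycleN n D R (j + 1) * (1 - X) ^ R.length else 0 := by
  intro s
  induction s with
  | zero =>
    intro _ R hR _ v hv hag
    have : R = [] := by
      rw [List.eq_nil_iff_forall_not_mem]
      intro r hr; have := hR.2 r hr; omega
    subst this
    simp only [List.range_zero, List.map_nil, push_nil, cycleN, List.length_nil, pow_zero, mul_one]
    refine if_congr ?_ rfl rfl
    rw [take_eq_iff hv.length hd]
    constructor
    · intro h; exact h j hj
    · intro h p hp
      by_cases hpj : p = j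
      · subst hpj; exact h
      · exact hag p hp hpj
  | succ s ih =>
    intro hs R hR hrow v hv hag
    have hl := hv.length
    have hsj : s < j := by omega
    have hjn : j < n := by omega
    rw [List.range_succ, List.map_append, List.map_singleton, push_snoc,
      Up_neg _ hv hsj hjn]
    set Γ := (List.range s).map (fun r => (r + 1, -((j + 1 : ℕ) : ℤ))) with hΓ
    set g : List ℤ → ℤ[X] := fun v => if v.take D.length = D then c else 0 with hg
    set u := applyRefl v (s + 1, -((j + 1 : ℕ) : ℤ)) with hu
    have hw : Win n u := hv.refl (GoodR.neg s j hsj hjn)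
    have hE : ∀ p, ent u p = _ := ent_neg (v := v) hsj (by omega)
    -- position `s` is not touched by the reflections in `Γ`
    have hz : ∀ v, Win n v → ent v s ≠ ent D s → push Γ g v = 0 := by
      apply push_zero
      · intro t ht
        simp only [hΓ, List.mem_map, List.mem_range] at ht
        obtain ⟨a, ha, rfl⟩ := ht
        refine ⟨GoodR.neg a j (by omega) hjn, fun v hv => ?_⟩
        rw [ent_neg (by omega) (by omega), if_neg (by omega), if_neg (by omega)]
      · intro v hv h
        simp only [hg]
        rw [if_neg]
        intro h'
        exact h ((take_eq_iff hv.length hd).1 h' s (by omega))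
    by_cases hlast : s + 1 ∈ R
    · obtain ⟨R', rfl⟩ : ∃ R', R = R' ++ [s + 1] := by
        rcases List.eq_nil_or_concat R with rfl | ⟨R', a, rfl⟩
        · simp at hlast
        · refine ⟨R', ?_⟩
          rw [List.concat_eq_append] at *
          have h1 := hR.snoc
          simp only [List.mem_append, List.mem_singleton] at hlast
          rcases hlast with h | h
          · have := (h1.1.2 _ h).2; omega
          · rw [h]
      obtain ⟨h1, -, -⟩ := hR.snoc
      simp only [Nat.add_sub_cancel] at h1
      obtain ⟨p1, p2, -, -⟩ := cyc_props hD hj R' h1 hsj.le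
      rw [cyc_snoc, cycleN_snoc]
      rw [cyc_snoc] at hag hrow
      set E' := cycleApply D R' (j + 1) with hE'
      have hlE : E'.length = D.length := cyc_length _ _ _
      have hF := ent_neg (v := E') hsj (by omega)
      have hsR : s + 1 ∉ R' := fun h => by have := (h1.2 _ h).2; omega
      have hEs : ent E' s = ent D s := p2 s (by omega) hsR
      have hvs : ent v s = - ent E' j := by
        rw [hag s (by omega) (by omega), hF, if_pos rfl]
      have hdis := p1 s j (by omega) (by omega) (by omega)
      rw [hz v hv (by rw [hvs, ← hEs]; omega), zero_add, hF,
        if_neg (show j ≠ s by omega), if_pos (rfl : j = j)]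
      by_cases hvj : ent v j = - ent E' s
      · have hslt : slt (ent v s) (-ent v j) := by
          have := hrow s (by simp)
          rw [hF, if_pos rfl] at this
          rw [hvs, hvj, neg_neg, hEs]
          rcases this with h | h
          · exact h
          · omega
        have huag : ∀ p, p < D.length → ent u p = ent E' p := by
          intro p hp
          rw [hE]
          split_ifs with c1 c2
          · rw [c1]; omega
          · rw [c2]; omega
          · rw [hag p hp c2, hF, if_neg c1, if_neg c2]
        rw [if_pos hslt, if_pos hvj, ih hsj.le R' h1 ?_ u hw (fun p hp _ => huag p hp),
          if_pos (huag j hj), N1_eq hw (by omega) (by rw [hlE]; exact huag) hsj (by omega)]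
        · rw [List.length_append, List.length_singleton]; ring
        · intro p hp
          have h2 := (h1.2 _ hp).2
          have := hrow p (by simp [hp])
          rwa [hF, if_neg (by omega), if_neg (by omega)] at this
      · rw [if_neg hvj, hz u hw]
        · simp
        · rw [hE, if_pos rfl]; omega
    · have hR' : SortedTo R s := by
        refine ⟨hR.1, fun r hr => ?_⟩
        have := hR.2 r hr
        have : r ≠ s + 1 := fun e => hlast (e ▸ hr)
        omega
      obtain ⟨-, p2, -, -⟩ := cyc_props hD hj R hR hs
      rw [ih hsj.le R hR' hrow v hv hag, hz u hw, mul_zero, ite_self, add_zero]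
      rw [hE, if_pos rfl, ← p2 s (by omega) hlast, ← hag s (by omega) (by omega)]
      have := hv.dist j s hjn (by omega) (by omega)
      omega

/-! ### The factors `(j,-(k+1))⋯(j,-n)(j,-j)(j,n)⋯(j,k+1)` -/

/-- The exponent of `t` with which the window `v` is reached from windows with entry `a` in position
`j` by means of the reflections `(j,-(k+1)), …, (j,-(k+s))` (here `j` is 0-based). -/
def F1 (n k j s : ℕ) (a : ℤ) (v : List ℤ) : ℕ :=
  (∑ m ∈ Finset.range n,
    ((if j < m ∧ ent v m ≠ -a then bt (ent v j) (ent v m) a else 0) +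
     (if k + s ≤ m then bt (ent v j) (-ent v m) a else 0))) +
  (if a < 0 ∧ 0 < ent v j then 1 else 0)

/-- The corresponding exponent once the reflections `(j,-(k+1)), …, (j,-n), (j,-j), (j,n), …, (j,S+1)`
are allowed; for `S = k` it is the term `N_{v(j),a}(v[j+1,k])` of the statistic `N`. -/
def F3 (n j S : ℕ) (a : ℤ) (v : List ℤ) : ℕ :=
  ∑ m ∈ Finset.range n, (if j < m ∧ m < S then bt (ent v j) (ent v m) a else 0)

/-- Comparison of two sums whose terms differ in one position only. -/
lemma sum_eq1 {n l : ℕ} (f g : ℕ → ℕ) (a b : ℕ) (hl : l < n)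
    (h : ∀ m, m < n → m ≠ l → f m = g m) (h' : f l + a = g l + b) :
    ∑ m ∈ Finset.range n, f m + a = ∑ m ∈ Finset.range n, g m + b := by
  rw [sum_split1 f hl, sum_split1 g hl, Finset.sum_congr rfl (g := fun m => if m = l then 0 else g m)]
  · omega
  · intro m hm
    by_cases e : m = l
    · rw [if_pos e, if_pos e]
    · rw [if_neg e, if_neg e, h m (Finset.mem_range.1 hm) e]

/-- Comparison of two sums whose terms differ in two positions only. -/
lemma sum_eq2 {n l L : ℕ} (f g : ℕ → ℕ) (a b : ℕ) (hl : l < L) (hL : L < n)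
    (h : ∀ m, m < n → m ≠ l → m ≠ L → f m = g m) (h' : f l + f L + a = g l + g L + b) :
    ∑ m ∈ Finset.range n, f m + a = ∑ m ∈ Finset.range n, g m + b := by
  rw [sum_split2 f hl hL, sum_split2 g hl hL,
    Finset.sum_congr rfl (g := fun m => if m = l ∨ m = L then 0 else g m)]
  · omega
  · intro m hm
    by_cases e : m = l ∨ m = L
    · rw [if_pos e, if_pos e]
    · rw [if_neg e, if_neg e, h m (Finset.mem_range.1 hm) (by omega) (by omega)]

lemma F1_succ {n k j s : ℕ} (a : ℤ) (v : List ℤ) (hL : k + s < n) :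
    F1 n k j s a v = F1 n k j (s + 1) a v + bt (ent v j) (-ent v (k + s)) a := by
  unfold F1
  rw [add_assoc]
  apply sum_eq1 _ _ _ _ hL
  · intro m _ hm
    congr 1
    exact if_congr (by omega) rfl rfl
  · simp only [le_refl, if_true, show ¬ (k + (s + 1) ≤ k + s) by omega, if_false]
    omega

/-- The exponent of a first use of `(j,-L)`. -/
lemma eNeg_first {n k j s : ℕ} {v : List ℤ} (hv : Win n v) (hjk : j < k) (hL : k + s < n) {a : ℤ}
    (ha : a = -ent v (k + s)) :
    eNeg n (applyRefl v (j + 1, -((k + s + 1 : ℕ) : ℤ))) j (k + s) = F1 n k j (s + 1) a v := by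
  have hE := ent_neg (v := v) (show j < k + s by omega) (by rw [hv.length]; exact hL)
  unfold eNeg F1 sigmaAB
  rw [hE j, hE (k + s), if_pos rfl, if_neg (show k + s ≠ j by omega), if_pos rfl, ← ha, neg_neg]
  congr 1
  · refine Finset.sum_congr rfl fun m hm => ?_
    have hm := Finset.mem_range.1 hm
    rw [hE]
    by_cases h1 : m ≤ j
    · simp only [show ¬ (j < m) by omega, show ¬ (k + s < m) by omega,
        show ¬ (k + (s + 1) ≤ m) by omega, false_and, if_false]
    · simp only [show m ≠ j by omega, show j < m by omega, true_and, if_false]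
      by_cases h2 : m = k + s
      · subst h2
        simp only [lt_irrefl, if_false, show ¬ (ent v (k + s) ≠ - a) by omega,
          show ¬ (k + (s + 1) ≤ k + s) by omega]
      · have h3 := hv.dist m (k + s) hm hL h2
        simp only [h2, if_false, show ent v m ≠ - a by omega, if_true, ne_eq, not_false_eq_true]
        by_cases h4 : m < k + s
        · simp only [h4, if_true, show ¬ (k + (s + 1) ≤ m) by omega, if_false, add_zero]
        · simp only [h4, if_false, show (k + (s + 1) ≤ m) by omega, show k + s < m by omega, if_true]
  · exact if_congr (by omega) rfl rfl

/-- The exponent of a use of `(j,-L)` followed by an earlier `(j,-l)`. -/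
lemma eNeg_second {n k j s l : ℕ} {v : List ℤ} (hv : Win n v) (hjk : j < k) (hL : k + s < n)
    {a : ℤ} (hl : k ≤ l) (hl' : l < k + s) (ha : a = -ent v l)
    (h1 : slt (ent v j) (-ent v (k + s))) (h2 : slt (-ent v (k + s)) a) :
    eNeg n (applyRefl v (j + 1, -((k + s + 1 : ℕ) : ℤ))) j (k + s) +
      F1 n k j s a (applyRefl v (j + 1, -((k + s + 1 : ℕ) : ℤ))) = F1 n k j (s + 1) a v := by
  have hE := ent_neg (v := v) (show j < k + s by omega) (by rw [hv.length]; exact hL)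
  have hx := hv.ok (show j < n by omega)
  have hy := hv.ok hL
  have hc := hv.ok (show l < n by omega)
  have d1 := hx.ne hy (hv.dist j (k + s) (by omega) hL (by omega))
  have d2 := hx.ne hc (hv.dist j l (by omega) (by omega) (by omega))
  have d3 := hy.ne hc (hv.dist (k + s) l hL (by omega) (by omega))
  have e3 := hv.dist (k + s) l hL (by omega) (by omega)
  have e2 := hv.dist j l (by omega) (by omega) (by omega)
  subst ha
  rw [hx.slt hy.neg, hy.rk_neg] at h1
  rw [hy.neg.slt hc.neg, hy.rk_neg, hc.rk_neg] at h2
  unfold eNeg F1 sigmaAB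
  rw [hE j, hE (k + s), if_pos rfl, if_neg (show k + s ≠ j by omega), if_pos rfl, neg_neg,
    add_add_add_comm, ← Finset.sum_add_distrib]
  apply sum_eq2 _ _ _ _ hl' hL
  · intro m hm m1 m2
    simp only [hE, m2, if_false]
    by_cases hmj : m ≤ j
    · simp only [show ¬ (j < m) by omega, show ¬ (k + s < m) by omega, show ¬ (k + s ≤ m) by omega,
        show ¬ (k + (s + 1) ≤ m) by omega, false_and, if_false]
    have hz := hv.ok hm
    have f1 := hv.dist m l hm (by omega) (by omega)
    have f2 := hz.ne hy (hv.dist m (k + s) hm hL (by omega))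
    have f3 := hz.ne hc f1
    simp only [show m ≠ j by omega, show j < m by omega, if_false, true_and, neg_neg, f1.1, ne_eq,
      not_false_eq_true, if_true]
    unfold bt
    simp only [hx.slt hz, hz.slt hy.neg, hx.slt hz.neg, hz.neg.slt hy.neg, hy.neg.slt hz,
      hz.slt hc.neg, hy.neg.slt hz.neg, hz.neg.slt hc.neg, hy.rk_neg, hz.rk_neg, hc.rk_neg]
    by_cases hm2 : m < k + s
    · simp only [hm2, show ¬ (k + s ≤ m) by omega, show ¬ (k + (s + 1) ≤ m) by omega, if_false,
        if_true]
      zify; omega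
    · simp only [hm2, show (k + s < m) by omega, show (k + s ≤ m) by omega,
        show (k + (s + 1) ≤ m) by omega, if_false, if_true]
      zify; omega
  · simp only [hE, hl', show l ≠ j by omega, show j < l by omega, show k + s ≠ j by omega,
      show j < k + s by omega, show l ≠ k + s by omega, show ¬ (k + s ≤ l) by omega,
      show ¬ (k + (s + 1) ≤ l) by omega, show ¬ (k + (s + 1) ≤ k + s) by omega, if_false, if_true,
      true_and, neg_neg, ne_eq, not_true_eq_false, lt_irrefl, le_refl, e3.1, not_false_eq_true,
      show - ent v j ≠ ent v l by omega]
    unfold bt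
    simp only [hx.slt hc, hc.slt hy.neg, hy.neg.slt hx.neg, hx.neg.slt hc.neg, hy.neg.slt hx,
      hx.slt hc.neg, hx.slt hy, hy.slt hc.neg, hy.rk_neg, hx.rk_neg, hc.rk_neg, hy.neg.lt0,
      hx.neg.lt0, hc.neg.lt0, hy.neg.gt0, hx.gt0]
    zify; omega

/-- `v` agrees with `E` in the first `k` positions, except possibly position `j`. -/
def Ag (k j : ℕ) (E v : List ℤ) : Prop := ∀ p, p < k → p ≠ j → ent v p = ent E p

lemma Win.surj {n : ℕ} {v : List ℤ} (hv : Win n v) {a : ℤ} (ha : Ok n a) :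
    ∃ p, p < n ∧ (a = ent v p ∨ a = -ent v p) := by
  have h := sum_allEntries hv (fun c => if c = a then 1 else 0)
  have hmem : a ∈ allEntries n := by
    unfold allEntries
    simp only [List.mem_append, List.mem_map, List.mem_range]
    have := ha.1; have := ha.2
    rcases lt_or_gt_of_ne ha.1 with h | h
    · right; exact ⟨(-a).toNat - 1, by omega, by omega⟩
    · left; exact ⟨a.toNat - 1, by omega, by omega⟩
  by_contra hc
  push Not at hc
  rw [Finset.sum_eq_zero] at h
  · rw [List.sum_eq_zero_iff] at h
    have := h 1 (List.mem_map.2 ⟨a, hmem, by simp⟩)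
    omega
  · intro m hm
    obtain ⟨h1, h2⟩ := hc m (Finset.mem_range.1 hm)
    rw [if_neg (fun e => h1 e.symm), if_neg (fun e => h2 e.symm), add_zero]

open Classical in
/-- Transfer through `(j,-(k+1)), …, (j,-(k+s))`: the ways of reaching `v` from the entry `a` in
position `j` add up to a single term. -/
lemma push_d1 {n k j : ℕ} (hjk : j < k) {E : List ℤ} {a : ℤ} {c : ℤ[X]}
    {g : List ℤ → ℤ[X]}
    (hg : ∀ v, Win n v → Ag k j E v → g v = if ent v j = a then c else 0) :
    ∀ s, k + s ≤ n → ∀ v, Win n v → Ag k j E v →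
    push ((List.range s).map (fun r => (j + 1, -((k + 1 + r : ℕ) : ℤ)))) g v =
      if ent v j = a then c
      else if slt (ent v j) a ∧ (∃ l, k ≤ l ∧ l < k + s ∧ a = -ent v l) then
        c * X ^ F1 n k j s a v * (1 - X) else 0 := by
  intro s
  induction s with
  | zero =>
    intro _ v hv hag
    simp only [List.range_zero, List.map_nil, push_nil, hg v hv hag]
    congr 1
    rw [if_neg]
    rintro ⟨-, l, h1, h2, -⟩; omega
  | succ s ih =>
    intro hs v hv hag
    have hL : k + s < n := by omega
    rw [List.range_succ, List.map_append, List.map_singleton, push_snoc,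
      show k + 1 + s = k + s + 1 by omega, Up_neg _ hv (show j < k + s by omega) hL]
    have hE := ent_neg (v := v) (show j < k + s by omega) (by rw [hv.length]; exact hL)
    have first := @eNeg_first n k j s v hv hjk hL a
    have second := fun l => @eNeg_second n k j s l v hv hjk hL a
    have hw : Win n (applyRefl v (j + 1, -((k + s + 1 : ℕ) : ℤ))) :=
      hv.refl (GoodR.neg j (k + s) (by omega) hL)
    set u := applyRefl v (j + 1, -((k + s + 1 : ℕ) : ℤ)) with hu
    have hagu : Ag k j E u := fun p hp hpj => by
      rw [hE, if_neg hpj, if_neg (by omega), hag p hp hpj]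
    have hex : (∃ l, k ≤ l ∧ l < k + s ∧ a = -ent u l) ↔ (∃ l, k ≤ l ∧ l < k + s ∧ a = -ent v l) := by
      refine exists_congr fun l => and_congr_right fun h1 => and_congr_right fun h2 => ?_
      rw [hE, if_neg (by omega), if_neg (by omega)]
    have huj : ent u j = - ent v (k + s) := by rw [hE, if_pos rfl]
    have hd := hv.dist j (k + s) (by omega) hL (by omega)
    rw [ih (by omega) v hv hag, ih (by omega) u hw hagu, hex, huj]
    by_cases hA : ent v j = a
    · rw [if_pos hA, if_pos hA, if_neg (show ¬ (-ent v (k + s) = a) by omega)]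
      split_ifs with c1 c2
      · exact absurd c1 (hA ▸ slt_asymm c2.1)
      · simp
      · simp
    rw [if_neg hA, if_neg hA]
    by_cases hB : -ent v (k + s) = a
    · have hnex : ¬ (∃ l, k ≤ l ∧ l < k + s ∧ a = -ent v l) := by
        rintro ⟨l, h1, h2, h3⟩
        have := hv.dist l (k + s) (by omega) hL (by omega)
        omega
      have hex' : (∃ l, k ≤ l ∧ l < k + (s + 1) ∧ a = -ent v l) :=
        ⟨k + s, by omega, by omega, hB.symm⟩
      rw [if_neg (fun h => hnex h.2), if_pos hB, first hB.symm, hB, zero_add]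
      by_cases h : slt (ent v j) a
      · rw [if_pos h, if_pos ⟨h, hex'⟩]; ring
      · rw [if_neg h, if_neg (fun h' => h h'.1)]
    rw [if_neg hB]
    have hex' : (∃ l, k ≤ l ∧ l < k + (s + 1) ∧ a = -ent v l) ↔
        (∃ l, k ≤ l ∧ l < k + s ∧ a = -ent v l) := by
      refine exists_congr fun l => and_congr_right fun h1 => ?_
      constructor
      · rintro ⟨h2, h3⟩
        refine ⟨?_, h3⟩
        by_contra h4
        obtain rfl : l = k + s := by omega
        exact hB h3.symm
      · rintro ⟨h2, h3⟩; exact ⟨by omega, h3⟩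
    rw [hex', F1_succ a v hL]
    by_cases hx : ∃ l, k ≤ l ∧ l < k + s ∧ a = -ent v l
    · simp only [hx, and_true]
      obtain ⟨l, hl1, hl2, hl3⟩ := hx
      unfold bt
      by_cases h1 : slt (ent v j) (-ent v (k + s)) ∧ slt (-ent v (k + s)) a
      · have h2 := slt_trans h1.1 h1.2
        have h3 := second l hl1 hl2 hl3 h1.1 h1.2
        rw [if_pos h2, if_pos h1.1, if_pos h1.2, if_pos h1, if_pos h2, ← h3]
        ring
      · rw [if_neg h1, add_zero]
        split_ifs with c1 c2 c3
        · exact absurd ⟨c2, c3⟩ h1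
        · simp
        · simp
        · exact absurd ⟨‹_›, ‹_›⟩ h1
        · simp
        · simp
    · simp only [hx, and_false, if_false]; simp

lemma F1_last {n k j l : ℕ} {v : List ℤ} (hv : Win n v) (hjk : j < k) {a : ℤ} (hl : k ≤ l)
    (hl' : l < n) (ha : a = -ent v l) :
    F1 n k j (n - k) a v + bt (ent v j) (-a) a = F3 n j n a v +
      if a < 0 ∧ 0 < ent v j then 1 else 0 := by
  unfold F1 F3
  rw [add_right_comm]
  congr 1
  rw [← add_zero (∑ m ∈ Finset.range n, (if j < m ∧ m < n then bt (ent v j) (ent v m) a else 0))]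
  apply sum_eq1 _ _ _ _ hl'
  · intro m hm hml
    have := hv.dist m l hm hl' hml
    simp only [show ¬ (k + (n - k) ≤ m) by omega, if_false, hm, and_true,
      show ent v m ≠ - a by omega, ne_eq, not_false_eq_true, add_zero]
  · simp only [show ¬ (k + (n - k) ≤ l) by omega, if_false, hl', and_true,
      ne_eq, not_true_eq_false, and_false, add_zero, show j < l by omega, if_true,
      show -a = ent v l by omega, zero_add]

/-- The exponent of a use of `(j,-j)` followed by an earlier `(j,-l)`. -/
lemma eBar_second {n k j l : ℕ} {v : List ℤ} (hv : Win n v) (hjk : j < k) {a : ℤ} (hl : k ≤ l)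
    (hl' : l < n) (ha : a = -ent v l) (h1 : 0 < ent v j) (h2 : slt (-ent v j) a) :
    eBar n (applyRefl v (j + 1, -((j + 1 : ℕ) : ℤ))) j +
      F1 n k j (n - k) a (applyRefl v (j + 1, -((j + 1 : ℕ) : ℤ))) = F3 n j n a v := by
  have hj : j < n := by omega
  have hE := ent_bar (v := v) (show j < v.length by rw [hv.length]; exact hj)
  have hx := hv.ok hj
  have hc := hv.ok hl'
  have d2 := hx.ne hc (hv.dist j l (by omega) (by omega) (by omega))
  subst ha
  rw [hx.neg.slt hc.neg, hx.rk_neg, hc.rk_neg] at h2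
  have h1' := h1
  rw [hx.gt0] at h1'
  unfold eBar F1 F3
  rw [hE j, if_pos rfl, neg_neg, if_neg (show ¬ (-ent v l < 0 ∧ 0 < -ent v j) by omega), add_zero,
    ← Finset.sum_add_distrib]
  refine Finset.sum_congr rfl fun m hm => ?_
  have hm := Finset.mem_range.1 hm
  by_cases hmj : m ≤ j
  · simp only [show ¬ (j < m) by omega, show ¬ (k + (n - k) ≤ m) by omega, false_and, if_false]
  have hz := hv.ok hm
  have f2 := hz.ne hx (hv.dist m j hm hj (by omega))
  simp only [hE, show m ≠ j by omega, show j < m by omega, hm, show ¬ (k + (n - k) ≤ m) by omega,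
    if_false, if_true, true_and, add_zero, neg_neg]
  by_cases hml : m = l
  · subst hml
    simp only [ne_eq, not_true_eq_false, if_false, add_zero]
    unfold bt
    simp only [hx.slt hc, hc.slt hx.neg, hc.slt hc.neg, hx.rk_neg, hc.rk_neg]
    zify; omega
  · have f1 := hv.dist m l hm hl' hml
    have f3 := hz.ne hc f1
    simp only [f1.1, ne_eq, not_false_eq_true, if_true]
    unfold bt
    simp only [hx.slt hz, hz.slt hx.neg, hx.neg.slt hz, hz.slt hc.neg, hx.rk_neg, hc.rk_neg]
    zify; omega

open Classical in
/-- Transfer through `(j,-(k+1)), …, (j,-n), (j,-j)`. -/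
lemma push_d2 {n k j : ℕ} (hjk : j < k) (hk : k ≤ n) {E : List ℤ} {a : ℤ} {c : ℤ[X]}
    {g : List ℤ → ℤ[X]}
    (hg : ∀ v, Win n v → Ag k j E v → g v = if ent v j = a then c else 0)
    {v : List ℤ} (hv : Win n v) (hag : Ag k j E v) :
    push ((List.range (n - k)).map (fun r => (j + 1, -((k + 1 + r : ℕ) : ℤ))) ++
      [(j + 1, -((j + 1 : ℕ) : ℤ))]) g v =
      if ent v j = a then c
      else if slt (ent v j) a ∧ (a = -ent v j ∨ ∃ l, k ≤ l ∧ l < n ∧ a = -ent v l) then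
        c * X ^ F3 n j n a v * (1 - X) else 0 := by
  have hj : j < n := by omega
  have hkn : k + (n - k) = n := by omega
  rw [push_snoc, Up_bar _ hv hj]
  have hE := ent_bar (v := v) (show j < v.length by rw [hv.length]; exact hj)
  have second := fun l => @eBar_second n k j l v hv hjk a
  have hw : Win n (applyRefl v (j + 1, -((j + 1 : ℕ) : ℤ))) := hv.refl (GoodR.bar j hj)
  have hbar : eBar n (applyRefl v (j + 1, -((j + 1 : ℕ) : ℤ))) j = F3 n j n (-ent v j) v := by
    unfold eBar F3
    refine Finset.sum_congr rfl fun m hm => ?_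
    have hm := Finset.mem_range.1 hm
    rw [hE m, hE j, if_pos rfl, neg_neg]
    by_cases h : j < m
    · simp only [h, hm, if_true, show m ≠ j by omega, if_false, and_self]
    · simp only [h, false_and, if_false]
  set u := applyRefl v (j + 1, -((j + 1 : ℕ) : ℤ)) with hu
  have hagu : Ag k j E u := fun p hp hpj => by rw [hE, if_neg hpj, hag p hp hpj]
  have hex : (∃ l, k ≤ l ∧ l < n ∧ a = -ent u l) ↔ (∃ l, k ≤ l ∧ l < n ∧ a = -ent v l) := by
    refine exists_congr fun l => and_congr_right fun h1 => and_congr_right fun h2 => ?_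
    rw [hE, if_neg (by omega)]
  have huj : ent u j = - ent v j := by rw [hE, if_pos rfl]
  have hx := hv.ok hj
  have hx0 := hx.1
  rw [push_d1 hjk hg _ (by omega) v hv hag, push_d1 hjk hg _ (by omega) u hw hagu, hkn, hex, huj]
  by_cases hA : ent v j = a
  · rw [if_pos hA, if_pos hA, if_neg (show ¬ (-ent v j = a) by omega)]
    split_ifs with c1 c2
    · have := c2.1
      rw [← hA, hx.neg.slt hx, hx.rk_neg] at this
      rw [hx.gt0] at c1
      omega
    · simp
    · simp
  rw [if_neg hA, if_neg hA]
  by_cases hB : -ent v j = a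
  · have hnex : ¬ (∃ l, k ≤ l ∧ l < n ∧ a = -ent v l) := by
      rintro ⟨l, h1, h2, h3⟩
      have := hv.dist l j (by omega) hj (by omega)
      omega
    rw [if_neg (fun h => hnex h.2), if_pos hB, hbar, hB, zero_add]
    have : 0 < ent v j ↔ slt (ent v j) a := by
      rw [← hB, hx.gt0, hx.slt hx.neg, hx.rk_neg]; omega
    by_cases h : slt (ent v j) a
    · rw [if_pos (this.2 h), if_pos ⟨h, Or.inl rfl⟩]; ring
    · rw [if_neg (fun h' => h (this.1 h')), if_neg (fun h' => h h'.1)]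
  rw [if_neg hB]
  simp only [show ¬ (a = -ent v j) by omega, false_or]
  by_cases hex' : ∃ l, k ≤ l ∧ l < n ∧ a = -ent v l
  · simp only [hex', and_true]
    obtain ⟨l, hl1, hl2, hl3⟩ := hex'
    have hc := hv.ok hl2
    have d2 := hx.ne hc (hv.dist j l hj hl2 (by omega))
    have hF := F1_last hv hjk hl1 hl2 hl3
    have ha : Ok n a := hl3 ▸ hc.neg
    have hra : rk n a = 2 * n + 1 - rk n (ent v l) := by rw [hl3, hc.rk_neg]
    by_cases h1 : 0 < ent v j ∧ slt (-ent v j) a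
    · have h3 := second l hl1 hl2 hl3 h1.1 h1.2
      have h1' := h1
      rw [hx.gt0, hx.neg.slt ha, hx.rk_neg] at h1'
      have h2 : slt (ent v j) a := by rw [hx.slt ha]; omega
      have h4 : ¬ (slt (ent v j) (-a) ∧ slt (-a) a) := by
        rw [hx.slt ha.neg, ha.rk_neg]; omega
      have h5 : a < 0 := by rw [ha.lt0]; omega
      unfold bt at hF
      rw [if_neg h4, if_pos ⟨h5, h1.1⟩, add_zero] at hF
      rw [if_pos h1.1, if_pos h2, if_pos h1.2, if_pos h2, hF]
      rw [show X ^ eBar n u j * (1 - X) * (c * X ^ F1 n k j (n - k) a u * (1 - X)) =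
        c * X ^ (eBar n u j + F1 n k j (n - k) a u) * (1 - X) * (1 - X : ℤ[X]) by ring, h3]
      ring
    · by_cases h2 : slt (ent v j) a
      · have hF' : F1 n k j (n - k) a v = F3 n j n a v := by
          unfold bt at hF
          rw [hx.gt0, hx.neg.slt ha, hx.rk_neg] at h1
          rw [hx.slt ha] at h2
          simp only [hx.slt ha.neg, ha.neg.slt ha, ha.rk_neg, ha.lt0, hx.gt0] at hF
          zify at hF
          zify
          omega
        rw [if_pos h2, if_pos h2, hF']
        split_ifs with c1 c2
        · exact absurd ⟨c1, c2⟩ h1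
        · simp
        · simp
      · rw [if_neg h2, if_neg h2]
        split_ifs with c1 c2
        · exact absurd ⟨c1, c2⟩ h1
        · simp
        · simp
  · simp only [hex', and_false, if_false]; simp

lemma F3_succ {n j L : ℕ} (hj : j < L) (hL : L < n) (a : ℤ) (v : List ℤ) :
    F3 n j (L + 1) a v = F3 n j L a v + bt (ent v j) (ent v L) a := by
  unfold F3
  rw [← add_zero (∑ m ∈ Finset.range n, (if j < m ∧ m < L + 1 then bt (ent v j) (ent v m) a else 0))]
  apply sum_eq1 _ _ _ _ hL
  · intro m _ hm
    exact if_congr (by omega) rfl rfl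
  · simp only [hj, show L < L + 1 by omega, lt_irrefl, and_false, and_self, if_true, if_false,
      zero_add, add_zero]

/-- The exponent of a first use of `(j,L)`. -/
lemma ePos_first {n j L : ℕ} {v : List ℤ} (hv : Win n v) (hj : j < L) (hL : L < n) :
    ePos n (applyRefl v (j + 1, ((L + 1 : ℕ) : ℤ))) j L = F3 n j L (ent v L) v := by
  have hE := ent_pos (v := v) hj (by rw [hv.length]; exact hL)
  unfold ePos F3
  refine Finset.sum_congr rfl fun m _ => ?_
  by_cases h : j < m ∧ m < L
  · rw [if_pos h, if_pos h, hE L, hE m, hE j, if_neg (by omega), if_pos rfl, if_neg (by omega),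
      if_neg (by omega), if_pos rfl]
  · rw [if_neg h, if_neg h]

/-- The exponent of a use of `(j,L)` followed by an earlier reflection. -/
lemma ePos_second {n j L : ℕ} {v : List ℤ} (hv : Win n v) (hj : j < L) (hL : L < n) {a : ℤ}
    (ha : Ok n a) (h1 : slt (ent v j) (ent v L)) (h2 : slt (ent v L) a) :
    ePos n (applyRefl v (j + 1, ((L + 1 : ℕ) : ℤ))) j L +
      F3 n j (L + 1) a (applyRefl v (j + 1, ((L + 1 : ℕ) : ℤ))) = F3 n j L a v := by
  have hE := ent_pos (v := v) hj (by rw [hv.length]; exact hL)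
  have hx := hv.ok (show j < n by omega)
  have hy := hv.ok hL
  rw [hx.slt hy] at h1
  rw [hy.slt ha] at h2
  unfold ePos F3
  rw [hE L, hE j, if_neg (show L ≠ j by omega), if_pos rfl, if_pos rfl, ← Finset.sum_add_distrib]
  refine Finset.sum_congr rfl fun m hm => ?_
  have hm := Finset.mem_range.1 hm
  rw [hE m]
  by_cases hmj : m ≤ j
  · simp only [show ¬ (j < m) by omega, false_and, if_false]
  have hz := hv.ok hm
  simp only [show m ≠ j by omega, show j < m by omega, if_false, true_and]
  by_cases hmL : m = L
  · subst hmL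
    simp only [lt_irrefl, show m < m + 1 by omega, if_true, if_false, zero_add, bt]
    rw [if_neg]
    rw [hy.slt hx]; omega
  simp only [hmL, if_false]
  have f2 := hz.ne hy (hv.dist m L hm hL hmL)
  by_cases h : m < L
  · simp only [h, show m < L + 1 by omega, if_true, bt, hx.slt hz, hz.slt hy, hy.slt hz, hz.slt ha]
    zify; omega
  · simp only [h, show ¬ (m < L + 1) by omega, if_false]

open Classical in
/-- Transfer through `(j,-(k+1)), …, (j,-n), (j,-j), (j,n), …, (j,n-q+1)`. -/
lemma push_d3 {n k j : ℕ} (hjk : j < k) (hk : k ≤ n) {E : List ℤ} {a : ℤ} (ha : Ok n a) {c : ℤ[X]}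
    {g : List ℤ → ℤ[X]}
    (hg : ∀ v, Win n v → Ag k j E v → g v = if ent v j = a then c else 0) :
    ∀ q S, S + q = n → k ≤ S → ∀ v, Win n v → Ag k j E v →
    push (((List.range (n - k)).map (fun r => (j + 1, -((k + 1 + r : ℕ) : ℤ))) ++
      [(j + 1, -((j + 1 : ℕ) : ℤ))]) ++
      (List.range q).map (fun r => (j + 1, ((n - r : ℕ) : ℤ)))) g v =
      if ent v j = a then c
      else if slt (ent v j) a ∧ (a = -ent v j ∨ ∃ l, k ≤ l ∧ l < n ∧
          (a = -ent v l ∨ (a = ent v l ∧ S ≤ l))) then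
        c * X ^ F3 n j S a v * (1 - X) else 0 := by
  intro q
  induction q with
  | zero =>
    intro S hS _ v hv hag
    obtain rfl : S = n := by omega
    rw [List.range_zero, List.map_nil, List.append_nil, push_d2 hjk hk hg hv hag]
    congr 1
    refine if_congr (and_congr_right fun _ => or_congr_right ?_) rfl rfl
    refine exists_congr fun l => and_congr_right fun h1 => and_congr_right fun h2 => ?_
    constructor
    · exact Or.inl
    · rintro (h | h)
      · exact h
      · omega
  | succ q ih =>
    intro L hS hkL v hv hag
    have hj : j < n := by omega
    have hjL : j < L := by omega
    have hL : L < n := by omega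
    rw [List.range_succ, List.map_append, List.map_singleton, ← List.append_assoc, push_snoc,
      show n - q = L + 1 by omega, Up_pos _ hv hjL hL]
    have hE := ent_pos (v := v) hjL (by rw [hv.length]; exact hL)
    have first := ePos_first hv hjL hL
    have second := @ePos_second n j L v hv hjL hL a ha
    have hw : Win n (applyRefl v (j + 1, ((L + 1 : ℕ) : ℤ))) := hv.refl (GoodR.pos j L hjL hL)
    set u := applyRefl v (j + 1, ((L + 1 : ℕ) : ℤ)) with hu
    have hagu : Ag k j E u := fun p hp hpj => by
      rw [hE, if_neg hpj, if_neg (by omega), hag p hp hpj]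
    have huj : ent u j = ent v L := by rw [hE, if_pos rfl]
    have hd := hv.dist j L (by omega) hL (by omega)
    have hy0 := (hv.ok hL).1
    rw [ih (L + 1) (by omega) (by omega) v hv hag, ih (L + 1) (by omega) (by omega) u hw hagu]
    by_cases hA : ent v j = a
    · rw [if_pos hA, if_pos hA, huj, if_neg (show ¬ (ent v L = a) by omega)]
      split_ifs with c1 c2
      · exact absurd c1 (hA ▸ slt_asymm c2.1)
      · simp
      · simp
    rw [if_neg hA, if_neg hA]
    by_cases hB : ent v L = a
    · have hnex : ¬ (a = -ent v j ∨ ∃ l, k ≤ l ∧ l < n ∧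
          (a = -ent v l ∨ (a = ent v l ∧ L + 1 ≤ l))) := by
        rintro (h | ⟨l, h1, h2, h3⟩)
        · omega
        · by_cases e : l = L
          · subst e; omega
          · have := hv.dist l L (by omega) hL e
            omega
      have hex' : (a = -ent v j ∨ ∃ l, k ≤ l ∧ l < n ∧
          (a = -ent v l ∨ (a = ent v l ∧ L ≤ l))) :=
        Or.inr ⟨L, hkL, hL, Or.inr ⟨hB.symm, le_rfl⟩⟩
      rw [if_neg (fun h => hnex h.2), huj, if_pos hB, first, hB, zero_add]
      by_cases h : slt (ent v j) a
      · rw [if_pos h, if_pos ⟨h, hex'⟩]; ring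
      · rw [if_neg h, if_neg (fun h' => h h'.1)]
    have hex1 : (a = -ent u j ∨ ∃ l, k ≤ l ∧ l < n ∧ (a = -ent u l ∨ (a = ent u l ∧ L + 1 ≤ l))) ↔
        (a = -ent v j ∨ ∃ l, k ≤ l ∧ l < n ∧ (a = -ent v l ∨ (a = ent v l ∧ L + 1 ≤ l))) := by
      have hul : ∀ l, k ≤ l → l ≠ L → ent u l = ent v l := fun l h1 h2 => by
        rw [hE, if_neg (by omega), if_neg h2]
      have huL : ent u L = ent v j := by rw [hE, if_neg (by omega), if_pos rfl]
      rw [huj]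
      constructor
      · rintro (h | ⟨l, h1, h2, h3⟩)
        · exact Or.inr ⟨L, hkL, hL, Or.inl h⟩
        · by_cases e : l = L
          · subst e; rw [huL] at h3; left; omega
          · rw [hul l h1 e] at h3; exact Or.inr ⟨l, h1, h2, h3⟩
      · rintro (h | ⟨l, h1, h2, h3⟩)
        · exact Or.inr ⟨L, hkL, hL, Or.inl (by rw [huL, h])⟩
        · by_cases e : l = L
          · subst e; left; omega
          · rw [← hul l h1 e] at h3; exact Or.inr ⟨l, h1, h2, h3⟩
    have hex2 : (a = -ent v j ∨ ∃ l, k ≤ l ∧ l < n ∧ (a = -ent v l ∨ (a = ent v l ∧ L ≤ l))) ↔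
        (a = -ent v j ∨ ∃ l, k ≤ l ∧ l < n ∧ (a = -ent v l ∨ (a = ent v l ∧ L + 1 ≤ l))) := by
      refine or_congr_right (exists_congr fun l => and_congr_right fun h1 =>
        and_congr_right fun h2 => or_congr_right (and_congr_right fun h3 => ?_))
      have : l ≠ L := by rintro rfl; exact hB h3.symm
      omega
    simp only [hex1, hex2]
    rw [huj, if_neg hB, F3_succ hjL hL a v]
    by_cases hx : (a = -ent v j ∨ ∃ l, k ≤ l ∧ l < n ∧ (a = -ent v l ∨ (a = ent v l ∧ L + 1 ≤ l)))
    · simp only [hx, and_true]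
      unfold bt
      by_cases h1 : slt (ent v j) (ent v L) ∧ slt (ent v L) a
      · have h2 := slt_trans h1.1 h1.2
        have h3 := second h1.1 h1.2
        rw [if_pos h2, if_pos h1.1, if_pos h1.2, if_pos h1, if_pos h2, ← h3]
        ring
      · rw [if_neg h1, add_zero]
        split_ifs with c1 c2 c3
        · exact absurd ⟨c2, c3⟩ h1
        · simp
        · simp
        · exact absurd ⟨‹_›, ‹_›⟩ h1
        · simp
        · simp
    · simp only [hx, and_false, if_false]; simp

open Classical in
/-- Transfer through the part of `Γ_j(k)` following `Γ'_j`: the entry in position `j` moves up to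
`a`, in at most one step. -/
lemma push_delta {n k j : ℕ} (hjk : j < k) (hk : k ≤ n) {E : List ℤ} {a : ℤ} (ha : Ok n a)
    (haE : ∀ p, p < k → p ≠ j → a ≠ ent E p ∧ a ≠ -ent E p) {c : ℤ[X]} {g : List ℤ → ℤ[X]}
    (hg : ∀ v, Win n v → Ag k j E v → g v = if ent v j = a then c else 0)
    {v : List ℤ} (hv : Win n v) (hag : Ag k j E v) :
    push (((List.range (n - k)).map (fun r => (j + 1, -((k + 1 + r : ℕ) : ℤ))) ++
      [(j + 1, -((j + 1 : ℕ) : ℤ))]) ++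
      (List.range (n - k)).map (fun r => (j + 1, ((n - r : ℕ) : ℤ)))) g v =
      if ent v j = a then c
      else if slt (ent v j) a then c * X ^ F3 n j k a v * (1 - X) else 0 := by
  rw [push_d3 hjk hk ha hg (n - k) k (by omega) le_rfl v hv hag]
  by_cases hA : ent v j = a
  · rw [if_pos hA, if_pos hA]
  rw [if_neg hA, if_neg hA]
  suffices key : a = -ent v j ∨ ∃ l, k ≤ l ∧ l < n ∧ (a = -ent v l ∨ (a = ent v l ∧ k ≤ l)) by
    simp only [key, and_true]
  obtain ⟨p, hp, h⟩ := hv.surj ha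
  by_cases hpj : p = j
  · subst hpj; left; omega
  by_cases hpk : p < k
  · have := haE p hpk hpj
    rw [← hag p hpk hpj] at this
    omega
  · exact Or.inr ⟨p, by omega, hp, by omega⟩

/-! ### Transitions between adjacent columns -/

/-- A transition from the column `D` to the column `C` of the same height (position `j` is
0-based): `C` agrees with `D(r_1,-j)⋯(r_p,-j)` off position `j`, and at position `j` its entry is
new up to sign and weakly smaller.  It covers all cases of the definition of `N(D,C)`. -/
structure Tr (D C : List ℤ) (j : ℕ) (R : List ℕ) : Prop where
  sorted : SortedTo R j
  lt : j < D.length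
  off : ∀ p, p < D.length → p ≠ j → ent C p = ent (cycleApply D R (j + 1)) p
  new : ∀ p, p < D.length → p ≠ j → ent C j ≠ ent (cycleApply D R (j + 1)) p ∧
    ent C j ≠ - ent (cycleApply D R (j + 1)) p
  le : sle (ent C j) (ent (cycleApply D R (j + 1)) j)

/-- The pair `(N(D,C), des(D,C))` computed from a transition. -/
def trVal (n : ℕ) (D C : List ℤ) (j : ℕ) (R : List ℕ) : ℕ × ℕ :=
  (cycleN n D R (j + 1) + if ent C j = ent (cycleApply D R (j + 1)) j then 0
      else Nab (ent C j) (ent (cycleApply D R (j + 1)) j) (word D (j + 2) D.length),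
    R.length + if ent C j = ent (cycleApply D R (j + 1)) j then 0 else 1)

lemma SortedTo.notMem {R : List ℕ} {j p : ℕ} (h : SortedTo R j) (hp : j ≤ p) : p + 1 ∉ R := by
  intro hm; have := (h.2 _ hm).2; omega

lemma Tr.nil_of_eq {D C : List ℤ} {j : ℕ} {R : List ℕ} (hD : Dist D) (h : Tr D C j R)
    (he : ent C j = ent D j) : R = [] := by
  obtain ⟨-, -, -, h4⟩ := cyc_props hD h.lt R h.sorted le_rfl
  rcases h4 with h4 | ⟨p, hp, hp'⟩
  · exact h4
  · have := h.sorted.2 _ hp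
    have := (h.new p (by have := h.lt; omega) (by omega)).2
    rw [hp', he] at this
    omega

lemma Tr.gt {D C : List ℤ} {j : ℕ} {R : List ℕ} (hD : Dist D) (h : Tr D C j R) {p : ℕ}
    (hp : p < D.length) (hj : j < p) : ent C p = ent D p := by
  obtain ⟨-, h2, -, -⟩ := cyc_props hD h.lt R h.sorted le_rfl
  rw [h.off p hp (by omega), h2 p (by omega) (h.sorted.notMem hj.le)]

lemma Tr.mem_iff {D C : List ℤ} {j : ℕ} {R : List ℕ} (hD : Dist D) (h : Tr D C j R) {p : ℕ}
    (hj : p < j) : p + 1 ∈ R ↔ ent C p ≠ ent D p := by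
  obtain ⟨-, h2, h3, -⟩ := cyc_props hD h.lt R h.sorted le_rfl
  rw [h.off p (by have := h.lt; omega) (by omega)]
  by_cases hp : p + 1 ∈ R
  · simp [hp, h3 p hp]
  · simp [hp, h2 p (by omega) hp]

/-- The largest position at which `C` and `D` differ determines `j`, and then the other positions
at which they differ determine `R`; so the value of a transition depends on `D` and `C` only. -/
lemma Tr.val_unique {n : ℕ} {D C : List ℤ} (hD : Dist D) (hl : C.length = D.length)
    {j j' : ℕ} {R R' : List ℕ} (h : Tr D C j R) (h' : Tr D C j' R') :
    trVal n D C j R = trVal n D C j' R' := by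
  by_cases he : ent C j = ent D j
  · have hR := h.nil_of_eq hD he
    subst hR
    have hCD : C = D := by
      refine ent_ext hl fun p hp => ?_
      by_cases hpj : p = j
      · rw [hpj, he]
      · exact h.off p (by omega) hpj
    subst hCD
    have hR' := h'.nil_of_eq hD rfl
    subst hR'
    simp [trVal, cycleApply, cycleN]
  · have he' : ent C j' ≠ ent D j' := by
      intro e
      have hR := h'.nil_of_eq hD e
      subst hR
      apply he
      by_cases hpj : j = j'
      · rw [hpj, e]
      · exact h'.off j h.lt hpj
    have hjj : j = j' := by
      rcases lt_trichotomy j j' with hlt | heq | hgt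
      · exact absurd (h.gt hD h'.lt hlt) he'
      · exact heq
      · exact absurd (h'.gt hD h.lt hgt) he
    subst hjj
    have : R = R' := by
      refine List.Pairwise.eq_of_mem_iff h.sorted.1 h'.sorted.1 fun r => ?_
      rcases r with _ | p
      · constructor
        · intro hr; have := h.sorted.2 _ hr; omega
        · intro hr; have := h'.sorted.2 _ hr; omega
      · by_cases hp : p < j
        · rw [h.mem_iff hD hp, h'.mem_iff hD hp]
        · constructor
          · intro hr; exact absurd hr (h.sorted.notMem (by omega))
          · intro hr; exact absurd hr (h'.sorted.notMem (by omega))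
    rw [this]

lemma SortedTo.sortedR {R : List ℕ} {j d : ℕ} (h : SortedTo R j) (hj : j < d) :
    sortedR R (j + 1) d :=
  ⟨List.isChain_iff_pairwise.2 h.1, fun r hr => by have := h.2 r hr; omega, by omega, by omega⟩

/-- The case distinction defining `N(D,C)` and `des(D,C)` leaves exactly one candidate. -/
lemma cand_eq {n : ℕ} {D C : List ℤ} (hD : Dist D) (hl : D.length ≤ C.length)
    {j : ℕ} {R : List ℕ} (h : Tr D (C.take D.length) j R) :
    NdesCand n D C = {trVal n D (C.take D.length) j R} := by
  have hl' : (C.take D.length).length = D.length := by simp [hl]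
  ext x
  simp only [Set.mem_singleton_iff]
  constructor
  · rintro (⟨h1, rfl⟩ | ⟨j', R', hs, -, h1, rfl⟩ | ⟨j', R', hs, h1, h2, h3, rfl⟩)
    · have ht : Tr D (C.take D.length) j [] := by
        rw [h1]
        refine ⟨⟨by simp, by simp⟩, h.lt, fun _ _ _ => rfl, fun p hp hj => ?_, Or.inr rfl⟩
        have := hD j p h.lt hp (Ne.symm hj)
        simpa [cycleApply] using this
      rw [h.val_unique hD hl' ht, h1]
      simp [trVal, cycleApply, cycleN]
    · obtain ⟨j', rfl⟩ : ∃ a, j' = a + 1 := ⟨j' - 1, by have := hs.2.2.1; omega⟩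
      obtain ⟨hs, hj⟩ := sortedR_to hs
      obtain ⟨c1, -, -, -⟩ := cyc_props hD hj R' hs le_rfl
      have ht : Tr D (C.take D.length) j' R' := by
        rw [h1]
        refine ⟨hs, hj, fun _ _ _ => rfl, fun p hp hj' => ?_, Or.inr rfl⟩
        have := c1 j' p (by rw [cyc_length]; exact hj) (by rw [cyc_length]; exact hp) (Ne.symm hj')
        exact this
      rw [h.val_unique hD hl' ht, h1]
      simp [trVal]
    · obtain ⟨j', rfl⟩ : ∃ a, j' = a + 1 := ⟨j' - 1, by have := hs.2.2.1; omega⟩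
      obtain ⟨hs, hj⟩ := sortedR_to hs
      simp only [ent_def, Nat.add_sub_cancel] at h1 h2 h3 ⊢
      have ht : Tr D (C.take D.length) j' R' :=
        ⟨hs, hj, fun p hp hpj => h1 (p + 1) (by omega) (by omega) (by omega),
          fun p hp hpj => h2 (p + 1) (by omega) (by omega) (by omega), Or.inl h3⟩
      rw [h.val_unique hD hl' ht]
      have : ent (C.take D.length) j' ≠ ent (cycleApply D R' (j' + 1)) j' := by
        intro e; rw [e] at h3; exact slt_irrefl _ h3
      simp [trVal, this]
  · rintro rfl
    by_cases he : ent (C.take D.length) j = ent (cycleApply D R (j + 1)) j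
    · have hc : C.take D.length = cycleApply D R (j + 1) := by
        refine ent_ext (by rw [hl', cyc_length]) fun p hp => ?_
        by_cases hpj : p = j
        · rw [hpj, he]
        · exact h.off p (by rw [cyc_length] at hp; exact hp) hpj
      by_cases hR : R = []
      · subst hR
        exact Or.inl ⟨hc, by simp [trVal, he, cycleN]⟩
      · exact Or.inr (Or.inl ⟨j + 1, R, h.sorted.sortedR h.lt, hR, hc, by simp [trVal, he]⟩)
    · refine Or.inr (Or.inr ⟨j + 1, R, h.sorted.sortedR h.lt, ?_, ?_, ?_, ?_⟩)
      · intro r h1 h2 h3; exact h.off (r - 1) (by omega) (by omega)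
      · intro r h1 h2 h3; exact h.new (r - 1) (by omega) (by omega)
      · rcases h.le with h4 | h4
        · exact h4
        · exact absurd h4 he
      · simp only [trVal, if_neg he]; rfl

lemma stat_eq {n : ℕ} {D C : List ℤ} (hD : Dist D) (hl : D.length ≤ C.length)
    {j : ℕ} {R : List ℕ} (h : Tr D (C.take D.length) j R) :
    Nstat n D C = (trVal n D (C.take D.length) j R).1 ∧
    desStat n D C = (trVal n D (C.take D.length) j R).2 := by
  unfold Nstat desStat
  rw [cand_eq hD hl h]
  generalize trVal n D (C.take D.length) j R = x
  obtain ⟨a, b⟩ := x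
  constructor <;> simp [Prod.ext_iff]

lemma Tr.of_cycle {D C : List ℤ} (hD : Dist D) {j : ℕ} (hj : j < D.length) {R : List ℕ}
    (hs : SortedTo R j) (h : C = cycleApply D R (j + 1)) : Tr D C j R := by
  obtain ⟨c1, -, -, -⟩ := cyc_props hD hj R hs le_rfl
  rw [h]
  refine ⟨hs, hj, fun _ _ _ => rfl, fun p hp hj' => ?_, Or.inr rfl⟩
  exact c1 j p (by rw [cyc_length]; exact hj) (by rw [cyc_length]; exact hp) (Ne.symm hj')

lemma cyc_ok {n : ℕ} {D : List ℤ} {j : ℕ} (hj : j < D.length)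
    (hok : ∀ p, p < D.length → Ok n (ent D p)) (R : List ℕ) : SortedTo R j →
    ∀ p, p < D.length → Ok n (ent (cycleApply D R (j + 1)) p) := by
  induction R using List.reverseRecOn with
  | nil => intro _; exact hok
  | append_singleton R r ih =>
    intro hR p hp
    obtain ⟨h1, h2, h3⟩ := hR.snoc
    obtain ⟨r, rfl⟩ : ∃ a, r = a + 1 := ⟨r - 1, by omega⟩
    have ih' := ih (h1.mono (by omega))
    rw [cyc_snoc, ent_neg (by omega) (by rw [cyc_length]; exact hj)]
    split_ifs
    · exact (ih' _ hj).neg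
    · exact (ih' _ (by omega)).neg
    · exact ih' _ hp

/-- Summing over one primed factor, from the column `D` to the column `C`, gives
`t^{N(D,C)} (1-t)^{des(D,C)}`, whatever window `v` extending `C` is reached. -/
lemma trans_P {n : ℕ} {D C : List ℤ} (hd : D.length ≤ n) (hD : Dist D) {j : ℕ} {R : List ℕ}
    (hR : sortedR R (j + 1) D.length) (hC : C = cycleApply D R (j + 1))
    (hrow : ∀ p, p < D.length → sle (ent C p) (ent D p)) (c : ℤ[X]) {v : List ℤ} (hv : Win n v)
    (hvC : v.take C.length = C) :
    push (gammaPrime (j + 1)) (fun u => if u.take D.length = D then c else 0) v =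
      c * X ^ Nstat n D C * (1 - X) ^ desStat n D C := by
  obtain ⟨hs, hj⟩ := sortedR_to hR
  have hlC : C.length = D.length := by rw [hC, cyc_length]
  have htk : C.take D.length = C := by rw [← hlC, List.take_length]
  have ht : Tr D (C.take D.length) j R := Tr.of_cycle hD hj hs (by rw [htk, hC])
  obtain ⟨e1, e2⟩ := stat_eq (n := n) hD hlC.ge ht
  rw [e1, e2, htk]
  have hag := (take_eq_iff hv.length (by omega)).1 hvC
  have hq := push_prime hd hD hj c j le_rfl R hs
    (fun p hp => by
      have := hs.2 _ hp
      rw [← hC]; exact hrow p (by omega)) v hv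
    (fun p hp _ => by rw [← hC]; exact hag p (by omega))
  have : gammaPrime (j + 1) = (List.range j).map (fun r => (r + 1, -((j + 1 : ℕ) : ℤ))) := by
    simp [gammaPrime]
  rw [this, hq, if_pos (by rw [← hC]; exact hag j (by omega))]
  simp [trVal, hC]

/-- The analogue of `trans_P` for an unprimed factor; the column `C` may be higher than `D`. -/
lemma trans_U {n : ℕ} {D C : List ℤ} (hd : D.length ≤ n) (hD : Dist D) {j : ℕ} {R : List ℕ}
    (hok : ∀ p, p < D.length → Ok n (ent D p))
    (hR : sortedR R (j + 1) D.length) (hl : D.length ≤ C.length) (hCn : C.length ≤ n)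
    (hC : unprimedTrans D (C.take D.length) R (j + 1) D.length)
    (hrow : ∀ p, p < D.length → sle (ent C p) (ent D p)) (c : ℤ[X]) {v : List ℤ} (hv : Win n v)
    (hvC : v.take C.length = C) :
    push (gammaJK n (j + 1) D.length) (fun u => if u.take D.length = D then c else 0) v =
      c * X ^ Nstat n D C * (1 - X) ^ desStat n D C := by
  obtain ⟨hs, hj⟩ := sortedR_to hR
  have ht : Tr D (C.take D.length) j R := by
    obtain ⟨h1, h2, h3⟩ := hC
    simp only [ent_def, Nat.add_sub_cancel] at h1 h2 h3
    exact ⟨hs, hj, fun p hp hpj => h1 (p + 1) (by omega) (by omega) (by omega),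
          fun p hp hpj => h2 (p + 1) (by omega) (by omega) (by omega), h3⟩
  obtain ⟨e1, e2⟩ := stat_eq (n := n) hD hl ht
  rw [e1, e2]
  have hag : ∀ p, p < D.length → ent v p = ent (C.take D.length) p := by
    intro p hp
    rw [ent_take _ _ _ hp]
    exact (take_eq_iff hv.length hCn).1 hvC p (by omega)
  set E := cycleApply D R (j + 1) with hE
  have hq : ∀ u, Win n u → Ag D.length j E u →
      push (gammaPrime (j + 1)) (fun u => if u.take D.length = D then c else 0) u =
      if ent u j = ent E j then c * X ^ cycleN n D R (j + 1) * (1 - X) ^ R.length else 0 := by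
    intro u hu hagu
    have : gammaPrime (j + 1) = (List.range j).map (fun r => (r + 1, -((j + 1 : ℕ) : ℤ))) := by
      simp [gammaPrime]
    rw [this]
    refine push_prime hd hD hj c j le_rfl R hs (fun p hp => ?_) u hu hagu
    have hp' := hs.2 _ hp
    rw [← hE, ← ht.off p (by omega) (by omega), ent_take _ _ _ (by omega)]
    exact hrow p (by omega)
  obtain ⟨c1, c2, -, -⟩ := cyc_props hD hj R hs le_rfl
  have hEl : E.length = D.length := cyc_length _ _ _
  have hagE : Ag D.length j E v := fun p hp hpj => by rw [hag p hp, ht.off p hp hpj]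
  have hdl := push_delta hj hd (cyc_ok hj hok R hs j hj)
    (fun p hp hpj => c1 j p (by rw [cyc_length]; exact hj) (by rw [cyc_length]; exact hp)
      (Ne.symm hpj)) hq hv hagE
  have hg : gammaJK n (j + 1) D.length = gammaPrime (j + 1) ++
      (((List.range (n - D.length)).map (fun r => (j + 1, -((D.length + 1 + r : ℕ) : ℤ))) ++
        [(j + 1, -((j + 1 : ℕ) : ℤ))]) ++
      (List.range (n - D.length)).map (fun r => (j + 1, ((n - r : ℕ) : ℤ)))) := by
    simp [gammaJK]
  have hF3 : F3 n j D.length (ent E j) v =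
      Nab (ent (C.take D.length) j) (ent E j) (word D (j + 2) D.length) := by
    unfold word F3
    rw [show D.length + 1 - (j + 2) = D.length - (j + 1) by omega, show j + 2 - 1 = j + 1 by omega,
      Nab_slice _ _ _ _ n _ (by omega) (by omega), hag j hj]
    refine Finset.sum_congr rfl fun m _ => ?_
    by_cases hm : j < m ∧ m < D.length
    · rw [if_pos hm, if_pos (by omega), hag m hm.2, ht.gt hD hm.2 hm.1]
    · rw [if_neg hm, if_neg (by omega)]
  rw [hg, push_append, hdl, hF3, hag j hj]
  by_cases he : ent (C.take D.length) j = ent E j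
  · simp [trVal, ← hE, he]
  · have : slt (ent (C.take D.length) j) (ent E j) := by
      rcases ht.le with h4 | h4
      · exact h4
      · exact absurd h4 he
    rw [if_neg he, if_pos this]
    simp only [trVal, ← hE, if_neg he]
    ring

/-! ### Windows and the summation over the last factors of the chain -/

lemma mem_allWindows {n : ℕ} {v : List ℤ} : v ∈ allWindows n ↔ Win n v := by
  unfold allWindows
  simp only [Finset.mem_image, Finset.mem_univ, true_and, Prod.exists]
  constructor
  · rintro ⟨σ, ε, rfl⟩
    have key : ∀ p (hp : p < n), ent ((List.finRange n).map (fun i =>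
      if ε i then -(((σ i : ℕ) : ℤ) + 1) else ((σ i : ℕ) : ℤ) + 1)) p =
      if ε ⟨p, hp⟩ then -(((σ ⟨p, hp⟩ : ℕ) : ℤ) + 1) else ((σ ⟨p, hp⟩ : ℕ) : ℤ) + 1 := by
      intro p hp
      simp [ent, hp]
    refine ⟨by simp, fun p hp => ?_, fun p hp => ?_, fun p hp => ?_, fun p q hp hq hpq => ?_⟩
    · rw [key p hp]; split_ifs <;> omega
    · rw [key p hp]; have := (σ ⟨p, hp⟩).2; split_ifs <;> omega
    · rw [key p hp]; have := (σ ⟨p, hp⟩).2; split_ifs <;> omega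
    · rw [key p hp, key q hq]
      have : (σ ⟨p, hp⟩ : ℕ) ≠ σ ⟨q, hq⟩ := by
        intro h
        have := σ.injective (Fin.ext h)
        simp at this; omega
      split_ifs <;> omega
  · intro hv
    have hlt : ∀ i : Fin n, (ent v i).natAbs - 1 < n := by
      intro i
      have h1 := hv.lo i i.2
      have h2 := hv.hi i i.2
      have h3 := hv.ne i i.2
      omega
    have hinj : Function.Injective (fun i : Fin n => (⟨(ent v i).natAbs - 1, hlt i⟩ : Fin n)) := by
      intro a b hab
      have hab' : (ent v a).natAbs - 1 = (ent v b).natAbs - 1 := by simpa using hab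
      by_contra hne
      have h := hv.dist a b a.2 b.2 (fun h => hne (Fin.ext h))
      have h1 := hv.ne a a.2
      have h2 := hv.ne b b.2
      omega
    refine ⟨Equiv.ofBijective _ (Finite.injective_iff_bijective.1 hinj),
      fun i => decide (ent v i < 0), ?_⟩
    refine ent_ext (by simp [hv.length]) fun p hp => ?_
    have hp : p < n := by rw [← hv.length]; simpa using hp
    have h3 := hv.ne p hp
    have : ∀ f : Fin n → ℤ, ent ((List.finRange n).map f) p = f ⟨p, hp⟩ := by
      intro f; simp [ent, hp]
    rw [this]
    simp only [Equiv.ofBijective_apply, decide_eq_true_eq]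
    split_ifs <;> omega

lemma sum_refl {n : ℕ} {t : ℕ × ℤ} (ht : GoodR n t) (h : List ℤ → ℤ[X]) :
    ∑ v ∈ allWindows n, h (applyRefl v t) = ∑ v ∈ allWindows n, h v := by
  refine Finset.sum_nbij' (fun v => applyRefl v t) (fun v => applyRefl v t) ?_ ?_ ?_ ?_ ?_
  · intro v hv; exact mem_allWindows.2 ((mem_allWindows.1 hv).refl ht)
  · intro v hv; exact mem_allWindows.2 ((mem_allWindows.1 hv).refl ht)
  · intro v hv; exact applyRefl_invol (mem_allWindows.1 hv).length ht
  · intro v hv; exact applyRefl_invol (mem_allWindows.1 hv).length ht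
  · intro v _; rfl

lemma stat_next {v : List ℤ} {r j : ℕ} (hrj : r ≤ j) (hj : j < v.length) :
    stat v (r + 1) j = stat v r j + if slt (-ent v j) (ent v r) then 1 else 0 := by
  have hs : (((Finset.range v.length) ×ˢ (Finset.range v.length)).filter
    (fun p => p.1 ≤ p.2 ∧ (p.2 + 1 < j + 1 ∨ (p.2 + 1 = j + 1 ∧ p.1 + 1 < r + 1 + 1)) ∧
      slt (-(ent v p.2)) (ent v p.1))) =
    (((Finset.range v.length) ×ˢ (Finset.range v.length)).filter
    (fun p => p.1 ≤ p.2 ∧ (p.2 + 1 < j + 1 ∨ (p.2 + 1 = j + 1 ∧ p.1 + 1 < r + 1)) ∧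
      slt (-(ent v p.2)) (ent v p.1))) ∪
      (if slt (-ent v j) (ent v r) then {(r, j)} else ∅) := by
    ext ⟨p, q⟩
    by_cases hpq : p = r ∧ q = j
    · obtain ⟨rfl, rfl⟩ := hpq
      by_cases h : slt (-ent v q) (ent v p)
      · simp [h]; omega
      · simp [h]
    · have hne : ¬ (p = r ∧ q = j) := hpq
      split_ifs with h
      · simp only [Finset.mem_union, Finset.mem_filter, Finset.mem_product, Finset.mem_range,
          Finset.mem_singleton, Prod.mk.injEq, hne, or_false]
        constructor
        · rintro ⟨a, b, c, d⟩; exact ⟨a, b, by omega, d⟩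
        · rintro ⟨a, b, c, d⟩; exact ⟨a, b, by omega, d⟩
      · simp only [Finset.union_empty, Finset.mem_filter, Finset.mem_product, Finset.mem_range]
        constructor
        · rintro ⟨a, b, c, d⟩; exact ⟨a, b, by omega, d⟩
        · rintro ⟨a, b, c, d⟩; exact ⟨a, b, by omega, d⟩
  have hc : lminusBefore v (r + 1 + 1) (j + 1) = lminusBefore v (r + 1) (j + 1) +
      if slt (-ent v j) (ent v r) then 1 else 0 := by
    refine (congrArg Finset.card hs).trans ?_
    rw [Finset.card_union_of_disjoint]
    · congr 1
      split_ifs <;> simp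
    · split_ifs
      · rw [Finset.disjoint_singleton_right]
        simp
      · simp
  unfold stat
  rw [hc, add_assoc]

lemma stat_wrap {v : List ℤ} (j : ℕ) : stat v 0 (j + 1) = stat v (j + 1) j := by
  unfold stat lminusBefore
  congr 2
  refine Finset.filter_congr fun p hp => ?_
  constructor
  · rintro ⟨a, b, c⟩; exact ⟨a, by omega, c⟩
  · rintro ⟨a, b, c⟩; exact ⟨a, by omega, c⟩

lemma stat_zero (v : List ℤ) : stat v 0 0 = lplus v := by
  unfold stat lminusBefore
  simp

lemma stat_full {n : ℕ} {v : List ℤ} (hv : v.length = n) : stat v 0 n = len v := by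
  unfold stat lminusBefore len lminus
  congr 2
  refine Finset.filter_congr fun p hp => ?_
  simp only [Finset.mem_product, Finset.mem_range] at hp
  constructor
  · rintro ⟨a, b, c⟩; exact ⟨a, c⟩
  · rintro ⟨a, c⟩; exact ⟨a, by omega, c⟩

/-- The operator `Up (r,-j)` compensates the passage from `ℓ₊ + ℓ₋^{rj}` to the next statistic: by
`stat_neg`, a window `u` at which `(r,-j)` decreases the length contributes `g u` times a power of `X`
times `X` (not using the reflection) plus `1 - X` (using it). -/
lemma phi_neg {n r j : ℕ} (hrj : r < j) (hj : j < n) (g : List ℤ → ℤ[X]) :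
    ∑ v ∈ allWindows n, Up (r + 1, -((j + 1 : ℕ) : ℤ)) g v * X ^ stat v (r + 1) j =
    ∑ v ∈ allWindows n, g v * X ^ stat v r j := by
  set t : ℕ × ℤ := (r + 1, -((j + 1 : ℕ) : ℤ)) with ht
  have hgt : GoodR n t := GoodR.neg r j hrj hj
  set h : List ℤ → ℤ[X] := fun u => if slt (-ent u j) (ent u r) then
    (1 - X) * g u * X ^ stat u r j else 0 with hh
  have e1 : ∀ v ∈ allWindows n, Up t g v * X ^ stat v (r + 1) j =
      g v * X ^ stat v r j * (if slt (-ent v j) (ent v r) then X else 1) + h (applyRefl v t) := by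
    intro v hv
    have hv := mem_allWindows.1 hv
    have hE := ent_neg (v := v) hrj (by rw [hv.length]; exact hj)
    have hEr : ent (applyRefl v t) r = - ent v j := by rw [ht, hE, if_pos rfl]
    have hEj : ent (applyRefl v t) j = - ent v r := by
      rw [ht, hE, if_neg (show j ≠ r by omega), if_pos rfl]
    rw [Up_neg g hv hrj hj, stat_next hrj.le (by rw [hv.length]; exact hj), hh]
    simp only [← ht, hEj, hEr, neg_neg]
    by_cases hs : slt (ent v r) (- ent v j)
    · have hs' := slt_asymm hs
      rw [if_pos hs, if_pos hs, if_neg hs', if_neg hs']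
      have := stat_neg (hv.refl hgt) hrj hj (by rw [hEj, hEr, neg_neg]; exact hs)
      rw [← ht, applyRefl_invol hv.length hgt] at this
      rw [this]; ring
    · rw [if_neg hs, if_neg hs]
      split_ifs <;> ring
  rw [Finset.sum_congr rfl e1, Finset.sum_add_distrib, sum_refl hgt, ← Finset.sum_add_distrib]
  refine Finset.sum_congr rfl fun v _ => ?_
  rw [hh]
  dsimp only
  split_ifs <;> ring

lemma phi_bar {n j : ℕ} (hj : j < n) (g : List ℤ → ℤ[X]) :
    ∑ v ∈ allWindows n, Up (j + 1, -((j + 1 : ℕ) : ℤ)) g v * X ^ stat v 0 (j + 1) =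
    ∑ v ∈ allWindows n, g v * X ^ stat v j j := by
  set t : ℕ × ℤ := (j + 1, -((j + 1 : ℕ) : ℤ)) with ht
  have hgt : GoodR n t := GoodR.bar j hj
  set h : List ℤ → ℤ[X] := fun u => if ent u j < 0 then
    (1 - X) * g u * X ^ stat u j j else 0 with hh
  have e1 : ∀ v ∈ allWindows n, Up t g v * X ^ stat v 0 (j + 1) =
      g v * X ^ stat v j j * (if ent v j < 0 then X else 1) + h (applyRefl v t) := by
    intro v hv
    have hv := mem_allWindows.1 hv
    have hE := ent_bar (v := v) (j := j) (by rw [hv.length]; exact hj)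
    have hneg : slt (-ent v j) (ent v j) ↔ ent v j < 0 := by unfold slt; omega
    rw [Up_bar g hv hj, stat_wrap, stat_next le_rfl (by rw [hv.length]; exact hj), hh]
    simp only [hneg, ht]
    rw [hE j, if_pos rfl]
    have hne := hv.ne j hj
    by_cases hs : 0 < ent v j
    · have := stat_bar (hv.refl hgt) hj (by rw [ht, hE j, if_pos rfl]; omega)
      rw [← ht, applyRefl_invol hv.length hgt] at this
      rw [if_pos hs, if_neg (by omega), if_neg (by omega), if_pos (by omega), ← ht, this]; ring
    · rw [if_neg hs, if_pos (by omega), if_pos (by omega), if_neg (by omega)]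
      ring
  rw [Finset.sum_congr rfl e1, Finset.sum_add_distrib, sum_refl hgt, ← Finset.sum_add_distrib]
  refine Finset.sum_congr rfl fun v _ => ?_
  rw [hh]
  dsimp only
  split_ifs <;> ring

lemma phi_block {n j : ℕ} (hj : j < n) (g : List ℤ → ℤ[X]) :
    ∑ v ∈ allWindows n, push (gammaJK n (j + 1) n) g v * X ^ stat v 0 (j + 1) =
    ∑ v ∈ allWindows n, g v * X ^ stat v 0 j := by
  have hg : gammaJK n (j + 1) n =
      (List.range j).map (fun r => (r + 1, -((j + 1 : ℕ) : ℤ))) ++ [(j + 1, -((j + 1 : ℕ) : ℤ))] := by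
    simp [gammaJK, gammaPrime]
  have key : ∀ s, s ≤ j → ∑ v ∈ allWindows n,
      push ((List.range s).map (fun r => (r + 1, -((j + 1 : ℕ) : ℤ)))) g v * X ^ stat v s j =
      ∑ v ∈ allWindows n, g v * X ^ stat v 0 j := by
    intro s
    induction s with
    | zero => intro _; rfl
    | succ s ih =>
      intro hs
      rw [← ih (by omega), ← phi_neg (show s < j by omega) hj, List.range_succ, List.map_append,
        List.map_singleton, push_snoc]
  rw [hg, push_snoc, phi_bar hj, key j le_rfl]

/-- Summing over the last factors `Γ_1(n) ⋯ Γ_n(n)` of the chain and over the final window. -/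
lemma phi_total {n : ℕ} (g : List ℤ → ℤ[X]) :
    ∑ v ∈ allWindows n, push (((List.range n).map (fun r => gammaJK n (r + 1) n)).flatten) g v *
      X ^ len v = ∑ v ∈ allWindows n, g v * X ^ lplus v := by
  have key : ∀ s, s ≤ n → ∑ v ∈ allWindows n,
      push (((List.range s).map (fun r => gammaJK n (r + 1) n)).flatten) g v * X ^ stat v 0 s =
      ∑ v ∈ allWindows n, g v * X ^ lplus v := by
    intro s
    induction s with
    | zero => intro _; simp [stat_zero]
    | succ s ih =>
      intro hs
      rw [← ih (by omega), ← phi_block (show s < n by omega), List.range_succ, List.map_append,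
        List.flatten_append, push_append]
      simp
  rw [← key n le_rfl]
  refine Finset.sum_congr rfl fun v hv => ?_
  rw [stat_full (mem_allWindows.1 hv).length]

/-! ### Summation over admissible subsequences, one reflection at a time -/

/-- Along an admissible sequence `T` the difference `ℓ(w) - ℓ(wT) - |T|` is even and nonnegative, so
that the halved exponent of the formula is exact. -/
lemma dec_parity {n : ℕ} (T : List (ℕ × ℤ)) : ∀ (w : List ℤ), Win n w → (∀ t ∈ T, GoodR n t) →
    decChain w T = true → Win n (applyAll w T) ∧
      ∃ e, len w = len (applyAll w T) + 2 * e + T.length := by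
  induction T with
  | nil => intro w hw _ _; exact ⟨hw, 0, by simp [applyAll]⟩
  | cons t T ih =>
    intro w hw hT hd
    simp only [decChain, Bool.and_eq_true, decide_eq_true_eq] at hd
    have ht := hT t (by simp)
    obtain ⟨h1, e, he⟩ := ih _ (hw.refl ht) (fun s hs => hT s (by simp [hs])) hd.2
    refine ⟨h1, ?_⟩
    obtain ⟨e', he'⟩ := len_parity hw ht
    have : applyAll w (t :: T) = applyAll (applyRefl w t) T := rfl
    refine ⟨e + e', ?_⟩
    rw [this, List.length_cons]
    omega

lemma decChain_snoc (T : List (ℕ × ℤ)) (t : ℕ × ℤ) : ∀ w : List ℤ, decChain w (T ++ [t]) = true ↔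
    decChain w T = true ∧ len (applyRefl (applyAll w T) t) < len (applyAll w T) := by
  induction T with
  | nil => intro w; simp [decChain, applyAll]
  | cons s T ih =>
    intro w
    simp only [List.cons_append, decChain, Bool.and_eq_true, ih, and_assoc]
    rfl

lemma applyAll_snoc (w : List ℤ) (T : List (ℕ × ℤ)) (t : ℕ × ℤ) :
    applyAll w (T ++ [t]) = applyRefl (applyAll w T) t := by simp [applyAll]

lemma selChain_insert (Γ : List (ℕ × ℤ)) {N : ℕ} {J : Finset ℕ} (hJ : J ⊆ Finset.range N) :
    selChain Γ (insert N J) = selChain Γ J ++ [Γ.getD N (0, 0)] := by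
  have : (insert N J).sort (· ≤ ·) = J.sort (· ≤ ·) ++ [N] := by
    refine List.Pairwise.eq_of_mem_iff (r := (· < ·)) (Finset.sortedLT_sort _).pairwise ?_ fun r => ?_
    · rw [List.pairwise_append]
      refine ⟨(Finset.sortedLT_sort _).pairwise, by simp, ?_⟩
      intro a ha b hb
      rw [Finset.mem_sort] at ha
      have := hJ ha
      simp at this hb; omega
    · simp [or_comm]
  unfold selChain
  rw [this]; simp

lemma selChain_good {n : ℕ} {Γ : List (ℕ × ℤ)} (hΓ : ∀ t ∈ Γ, GoodR n t) {N : ℕ}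
    (hN : N ≤ Γ.length) {J : Finset ℕ} (hJ : J ⊆ Finset.range N) :
    ∀ t ∈ selChain Γ J, GoodR n t := by
  intro t ht
  simp only [selChain, List.mem_map, Finset.mem_sort] at ht
  obtain ⟨k, hk, rfl⟩ := ht
  have := hJ hk
  rw [Finset.mem_range] at this
  apply hΓ
  rw [List.getD_eq_getElem _ _ (by omega)]
  exact List.getElem_mem _

/-- The condition that the window obtained after the reflections in positions `< q.1` starts
with the column `q.2`. -/
def Chk (Γ : List (ℕ × ℤ)) (w : List ℤ) (J : Finset ℕ) (q : ℕ × List ℤ) : Prop :=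
  (applyAll w (selChain Γ (J.filter (fun x => x < q.1)))).take q.2.length = q.2

open Classical in
/-- The generating function of the pairs `(w, J)`, with `J` an admissible set of positions `< N`
of `Γ` satisfying the column conditions `Q`, that end at the window `v`. -/
noncomputable def acc (Γ : List (ℕ × ℤ)) (n : ℕ) (Q : List (ℕ × List ℤ)) (N : ℕ) (v : List ℤ) :
    ℤ[X] :=
  ∑ w ∈ allWindows n, ∑ J ∈ (Finset.range N).powerset,
    if decChain w (selChain Γ J) = true ∧ (∀ q ∈ Q, Chk Γ w J q) ∧ applyAll w (selChain Γ J) = v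
    then X ^ ((len w - len v - J.card) / 2) * (1 - X) ^ J.card else 0

lemma selChain_length (Γ : List (ℕ × ℤ)) (J : Finset ℕ) : (selChain Γ J).length = J.card := by
  simp [selChain]

/-- Admissible sets of positions `≤ N` either avoid `N` or use it as their last element. -/
lemma acc_step {n : ℕ} {Γ : List (ℕ × ℤ)} (hΓ : ∀ t ∈ Γ, GoodR n t) {N : ℕ} (hN : N < Γ.length)
    {Q : List (ℕ × List ℤ)} (hQ : ∀ q ∈ Q, q.1 ≤ N) {v : List ℤ} (hv : Win n v) :
    acc Γ n Q (N + 1) v = Up (Γ.getD N (0, 0)) (acc Γ n Q N) v := by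
  classical
  set t := Γ.getD N (0, 0) with ht
  have htg : GoodR n t := by
    apply hΓ
    rw [ht, List.getD_eq_getElem _ _ hN]
    exact List.getElem_mem _
  unfold acc Up
  rw [Finset.range_add_one]
  have hN' : N ∉ Finset.range N := by simp
  simp_rw [Finset.sum_powerset_insert hN', Finset.sum_add_distrib]
  congr 1
  have hchk : ∀ w J, J ⊆ Finset.range N →
      ((∀ q ∈ Q, Chk Γ w (insert N J) q) ↔ ∀ q ∈ Q, Chk Γ w J q) := by
    intro w J hJ
    refine forall₂_congr fun q hq => ?_
    have := hQ q hq
    unfold Chk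
    rw [Finset.filter_insert, if_neg (by omega)]
  by_cases hl : len v < len (applyRefl v t)
  · rw [if_pos hl, Finset.mul_sum]
    refine Finset.sum_congr rfl fun w hw => ?_
    rw [Finset.mul_sum]
    refine Finset.sum_congr rfl fun J hJ => ?_
    rw [Finset.mem_powerset] at hJ
    have hw := mem_allWindows.1 hw
    simp only [selChain_insert Γ hJ, ← ht, decChain_snoc, applyAll_snoc, hchk w J hJ]
    by_cases hd : decChain w (selChain Γ J) = true
    · obtain ⟨hW, e, he⟩ := dec_parity _ w hw (selChain_good hΓ hN.le hJ) hd
      have hiff : applyRefl (applyAll w (selChain Γ J)) t = v ↔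
          applyAll w (selChain Γ J) = applyRefl v t := by
        constructor
        · intro h; rw [← h, applyRefl_invol hW.length htg]
        · intro h; rw [h, applyRefl_invol hv.length htg]
      by_cases hA : applyAll w (selChain Γ J) = applyRefl v t
      · by_cases hq : ∀ q ∈ Q, Chk Γ w J q
        · have hc : (insert N J).card = J.card + 1 :=
            Finset.card_insert_of_notMem fun h => hN' (hJ h)
          obtain ⟨e', he'⟩ := len_parity hv htg
          rw [hA, selChain_length] at he
          rw [if_pos ⟨⟨hd, by rw [hA, applyRefl_invol hv.length htg]; exact hl⟩, hq, hiff.2 hA⟩,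
            if_pos ⟨hd, hq, hA⟩, hc]
          rw [show (len w - len v - (J.card + 1)) / 2 = e + e' by omega,
            show (len (applyRefl v t) - len v - 1) / 2 = e' by omega,
            show (len w - len (applyRefl v t) - J.card) / 2 = e by omega]
          ring
        · rw [if_neg (fun h => hq h.2.1), if_neg (fun h => hq h.2.1), mul_zero]
      · rw [if_neg (fun h => hA (hiff.1 h.2.2)), if_neg (fun h => hA h.2.2), mul_zero]
    · rw [if_neg (fun h => hd h.1.1), if_neg (fun h => hd h.1), mul_zero]
  · rw [if_neg hl]
    refine Finset.sum_eq_zero fun w hw => Finset.sum_eq_zero fun J hJ => ?_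
    rw [Finset.mem_powerset] at hJ
    have hw := mem_allWindows.1 hw
    simp only [selChain_insert Γ hJ, ← ht, decChain_snoc, applyAll_snoc]
    refine if_neg ?_
    rintro ⟨⟨hd, h1⟩, -, h2⟩
    obtain ⟨hW, -⟩ := dec_parity _ w hw (selChain_good hΓ hN.le hJ) hd
    have : applyAll w (selChain Γ J) = applyRefl v t := by
      rw [← h2, applyRefl_invol hW.length htg]
    rw [h2, this] at h1
    exact hl h1

lemma acc_push {n : ℕ} {Γ : List (ℕ × ℤ)} (hΓ : ∀ t ∈ Γ, GoodR n t) (A : List (ℕ × ℤ))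
    {Q : List (ℕ × List ℤ)} (hQ : ∀ q ∈ Q, q.1 ≤ A.length) (B : List (ℕ × ℤ)) :
    ∀ C, Γ = A ++ B ++ C → ∀ v, Win n v →
      acc Γ n Q (A.length + B.length) v = push B (acc Γ n Q A.length) v := by
  induction B using List.reverseRecOn with
  | nil => intro C _ v _; rfl
  | append_singleton B t ih =>
    intro C hC v hv
    have hC' : Γ = A ++ B ++ (t :: C) := by rw [hC]; simp
    have hl : A.length + B.length < Γ.length := by rw [hC']; simp
    have hg : Γ.getD (A.length + B.length) (0, 0) = t := by
      rw [hC', List.getD_append_right _ _ _ _ (by simp)]; simp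
    rw [push_snoc, List.length_append, ← add_assoc, List.length_singleton,
      acc_step hΓ hl (fun q hq => by have := hQ q hq; omega) hv, hg]
    exact Up_congr (hΓ t (by rw [hC']; simp)) (fun u hu => ih _ hC' u hu) hv

lemma acc_check {n : ℕ} (Γ : List (ℕ × ℤ)) (Q : List (ℕ × List ℤ)) (N : ℕ) (c : List ℤ)
    (v : List ℤ) : acc Γ n (Q ++ [(N, c)]) N v =
      if v.take c.length = c then acc Γ n Q N v else 0 := by
  classical
  have hf : ∀ J : Finset ℕ, J ⊆ Finset.range N → J.filter (fun x => x < N) = J := by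
    intro J hJ
    refine Finset.filter_true_of_mem fun x hx => ?_
    simpa using hJ hx
  unfold acc
  split_ifs with h
  · refine Finset.sum_congr rfl fun w _ => Finset.sum_congr rfl fun J hJ => ?_
    rw [Finset.mem_powerset] at hJ
    refine if_congr ?_ rfl rfl
    refine and_congr_right fun _ => ?_
    constructor
    · rintro ⟨h1, h2⟩; exact ⟨fun q hq => h1 q (by simp [hq]), h2⟩
    · rintro ⟨h1, h2⟩
      refine ⟨fun q hq => ?_, h2⟩
      rw [List.mem_append, List.mem_singleton] at hq
      rcases hq with hq | rfl
      · exact h1 q hq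
      · unfold Chk; rw [hf J hJ, h2]; exact h
  · refine Finset.sum_eq_zero fun w _ => Finset.sum_eq_zero fun J hJ => if_neg ?_
    rw [Finset.mem_powerset] at hJ
    rintro ⟨-, h1, h2⟩
    have := h1 (N, c) (by simp)
    unfold Chk at this
    rw [hf J hJ, h2] at this
    exact h this

lemma acc_zero {n : ℕ} (Γ : List (ℕ × ℤ)) {v : List ℤ} (hv : Win n v) : acc Γ n [] 0 v = 1 := by
  classical
  unfold acc
  rw [Finset.sum_eq_single v]
  · simp [selChain, decChain, applyAll]
  · intro w _ hw
    simp [selChain, decChain, applyAll, hw]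
  · intro h; exact absurd (mem_allWindows.2 hv) h

/-! ### Composing the transitions along a filling -/

/-- A column of the filling together with the factor of the chain that follows it. -/
abbrev Item := List (ℕ × ℤ) × List ℤ

/-- The reflections of a list of items. -/
def refls (L : List Item) : List (ℕ × ℤ) := (L.map Prod.fst).flatten

/-- The column conditions imposed by a list of items whose first factor starts at `o`. -/
def checks : ℕ → List Item → List (ℕ × List ℤ)
  | _, [] => []
  | o, x :: L => (o, x.2) :: checks (o + x.1.length) L

@[simp] lemma refls_nil : refls [] = [] := rfl
@[simp] lemma refls_cons (x : Item) (L : List Item) : refls (x :: L) = x.1 ++ refls L := by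
  simp [refls]
lemma refls_append (L M : List Item) : refls (L ++ M) = refls L ++ refls M := by
  simp [refls]

/-- The factor following the column of `x` contributes `t^{N} (1-t)^{des}` when it leads from that
column to the column of `y`. -/
def Step (n : ℕ) (x y : Item) : Prop :=
  ∀ (c : ℤ[X]) (v : List ℤ), Win n v → v.take y.2.length = y.2 →
    push x.1 (fun u => if u.take x.2.length = x.2 then c else 0) v =
      c * X ^ Nstat n x.2 y.2 * (1 - X) ^ desStat n x.2 y.2

/-- After imposing the conditions of the columns up to the last one, the generating function is the
indicator of the last column times the product of the contributions of the transitions. -/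
lemma acc_track {n : ℕ} {Γ : List (ℕ × ℤ)} (hΓ : ∀ t ∈ Γ, GoodR n t) (L : List Item) :
    ∀ (x : Item) (A : List (ℕ × ℤ)) (C : List (ℕ × ℤ)) (Q : List (ℕ × List ℤ)) (c : ℤ[X]),
    (∀ q ∈ Q, q.1 ≤ A.length) → Γ = A ++ refls (x :: L) ++ C →
    List.IsChain (Step n) (x :: L) → (((x :: L).getLast?.map Prod.fst).getD [] = []) →
    (∀ v, Win n v → acc Γ n Q A.length v = if v.take x.2.length = x.2 then c else 0) →
    ∀ v, Win n v → acc Γ n (Q ++ checks (A.length + x.1.length) L)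
      (A.length + (refls (x :: L)).length) v =
      if v.take (((x :: L).map Prod.snd).getLastD []).length = ((x :: L).map Prod.snd).getLastD []
      then c * X ^ adjSumN (Nstat n) ((x :: L).map Prod.snd) *
        (1 - X) ^ adjSumN (desStat n) ((x :: L).map Prod.snd) else 0 := by
  induction L with
  | nil =>
    intro x A C Q c hQ hG hch hl h v hv
    have hx : x.1 = [] := by simpa using hl
    simpa [checks, adjSumN, hx] using h v hv
  | cons y L ih =>
    intro x A C Q c hQ hG hch hl h v hv
    rw [List.isChain_cons_cons] at hch
    have hG' : Γ = A ++ x.1 ++ (refls (y :: L) ++ C) := by rw [hG]; simp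
    have hQ' : ∀ q ∈ Q ++ [(A.length + x.1.length, y.2)], q.1 ≤ (A ++ x.1).length := by
      intro q hq
      rw [List.mem_append, List.mem_singleton] at hq
      rw [List.length_append]
      rcases hq with hq | rfl
      · have := hQ q hq; omega
      · exact le_rfl
    have key := ih y (A ++ x.1) C (Q ++ [(A.length + x.1.length, y.2)])
      (c * X ^ Nstat n x.2 y.2 * (1 - X) ^ desStat n x.2 y.2) hQ' (by rw [hG]; simp) hch.2
      (by simpa [List.getLast?_cons_cons] using hl) (by
        intro u hu
        rw [List.length_append, acc_check]
        by_cases hy : u.take y.2.length = y.2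
        · rw [if_pos hy, if_pos hy, acc_push hΓ A hQ x.1 _ hG' u hu, ← hch.1 c u hu hy]
          refine push_congr (fun t ht => hΓ t ?_) h u hu
          rw [hG']; simp [ht]
        · rw [if_neg hy, if_neg hy]) v hv
    have e1 : Q ++ checks (A.length + x.1.length) (y :: L) =
        Q ++ [(A.length + x.1.length, y.2)] ++ checks ((A ++ x.1).length + y.1.length) L := by
      simp [checks]
    have e2 : A.length + (refls (x :: y :: L)).length =
        (A ++ x.1).length + (refls (y :: L)).length := by simp; omega
    have e3 : ((x :: y :: L).map Prod.snd).getLastD [] = ((y :: L).map Prod.snd).getLastD [] := by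
      simp [List.getLastD_eq_getLast?, List.getLast?_cons_cons]
    rw [e1, e2, e3, key]
    refine if_congr Iff.rfl ?_ rfl
    simp only [List.map_cons, adjSumN]
    ring

open Classical in
/-- The sum over all pairs, graded by the final window. -/
lemma total_sum {n : ℕ} {Γ : List (ℕ × ℤ)} (hΓ : ∀ t ∈ Γ, GoodR n t) (Q : List (ℕ × List ℤ)) :
    ∑ w ∈ allWindows n, ∑ J ∈ (Finset.range Γ.length).powerset,
      (if decChain w (selChain Γ J) = true ∧ (∀ q ∈ Q, Chk Γ w J q) then
        (X : ℤ[X]) ^ ((len w + len (applyAll w (selChain Γ J)) - J.card) / 2) * (1 - X) ^ J.card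
        else 0) =
    ∑ v ∈ allWindows n, acc Γ n Q Γ.length v * X ^ len v := by
  unfold acc
  simp_rw [Finset.sum_mul]
  conv_rhs => rw [Finset.sum_comm]
  refine Finset.sum_congr rfl fun w hw => ?_
  conv_rhs => rw [Finset.sum_comm]
  refine Finset.sum_congr rfl fun J hJ => ?_
  rw [Finset.mem_powerset] at hJ
  have hw := mem_allWindows.1 hw
  by_cases hd : decChain w (selChain Γ J) = true
  · obtain ⟨hW, e, he⟩ := dec_parity _ w hw (selChain_good hΓ le_rfl hJ) hd
    rw [selChain_length] at he
    rw [Finset.sum_eq_single (applyAll w (selChain Γ J))]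
    · by_cases hq : ∀ q ∈ Q, Chk Γ w J q
      · rw [if_pos ⟨hd, hq⟩, if_pos ⟨hd, hq, rfl⟩]
        rw [show (len w + len (applyAll w (selChain Γ J)) - J.card) / 2 =
            e + len (applyAll w (selChain Γ J)) by omega,
          show (len w - len (applyAll w (selChain Γ J)) - J.card) / 2 = e by omega]
        ring
      · rw [if_neg (fun h => hq h.2), if_neg (fun h => hq h.2.1), zero_mul]
    · intro v _ hv
      rw [if_neg (fun h => hv h.2.2.symm), zero_mul]
    · intro h; exact absurd (mem_allWindows.2 hW) h
  · rw [if_neg (fun h => hd h.1)]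
    refine (Finset.sum_eq_zero fun v _ => ?_).symm
    rw [if_neg (fun h => hd h.1), zero_mul]

open Classical in
/-- The compression formula for an abstract chain: the factors and columns are those of `L`,
followed by the factors `Γ_1(n) ⋯ Γ_n(n)`. -/
lemma compress {n : ℕ} {L : List Item} (hL : L ≠ []) {Γ : List (ℕ × ℤ)}
    (hΓ : ∀ t ∈ Γ, GoodR n t)
    (hG : Γ = refls L ++ ((List.range n).map (fun r => gammaJK n (r + 1) n)).flatten)
    (hch : List.IsChain (Step n) L) (hl : (L.getLast?.map Prod.fst).getD [] = [])
    (hwin : Win n ((L.map Prod.snd).getLastD [])) :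
    ∑ w ∈ allWindows n, ∑ J ∈ (Finset.range Γ.length).powerset,
      (if decChain w (selChain Γ J) = true ∧ (∀ q ∈ checks 0 L, Chk Γ w J q) then
        (X : ℤ[X]) ^ ((len w + len (applyAll w (selChain Γ J)) - J.card) / 2) * (1 - X) ^ J.card
        else 0) =
    X ^ (adjSumN (Nstat n) (L.map Prod.snd) + lplus ((L.map Prod.snd).getLastD [])) *
      (1 - X) ^ adjSumN (desStat n) (L.map Prod.snd) := by
  rw [total_sum hΓ]
  obtain ⟨x, L, rfl⟩ := List.exists_cons_of_ne_nil hL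
  have h0 := acc_track hΓ L x [] (((List.range n).map (fun r => gammaJK n (r + 1) n)).flatten)
    [(0, x.2)] 1 (by simp) (by rw [hG]; simp) hch hl
    (by
      intro v hv
      have := acc_check (n := n) Γ [] 0 x.2 v
      rw [List.nil_append, acc_zero Γ hv] at this
      exact this)
  have hck : [(0, x.2)] ++ checks (([] : List (ℕ × ℤ)).length + x.1.length) L =
    checks 0 (x :: L) := by simp [checks]
  rw [hck, List.length_nil, zero_add] at h0
  set M := ((x :: L).map Prod.snd).getLastD [] with hM
  have hQ : ∀ (L : List Item) (o : ℕ), ∀ q ∈ checks o L, q.1 ≤ o + (refls L).length := by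
    intro L
    induction L with
    | nil => intro o q hq; simp [checks] at hq
    | cons y L ih =>
      intro o q hq
      rw [checks, List.mem_cons] at hq
      rw [refls_cons, List.length_append]
      rcases hq with rfl | hq
      · simp
      · have := ih _ q hq; omega
  have e1 : ∀ v ∈ allWindows n, acc Γ n (checks 0 (x :: L)) Γ.length v * X ^ len v =
      push (((List.range n).map (fun r => gammaJK n (r + 1) n)).flatten)
        (fun u => if u.take M.length = M then
          1 * X ^ adjSumN (Nstat n) ((x :: L).map Prod.snd) *
          (1 - X) ^ adjSumN (desStat n) ((x :: L).map Prod.snd) else 0) v * X ^ len v := by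
    intro v hv
    have hv := mem_allWindows.1 hv
    have hlen : Γ.length = (refls (x :: L)).length +
        (((List.range n).map (fun r => gammaJK n (r + 1) n)).flatten).length := by
      rw [hG, List.length_append]
    rw [hlen, acc_push hΓ (refls (x :: L)) (fun q hq => by have := hQ _ _ q hq; omega) _ []
      (by rw [hG]; simp) v hv]
    congr 1
    refine push_congr (fun t ht => hΓ t ?_) h0 v hv
    rw [hG]; exact List.mem_append_right _ ht
  rw [Finset.sum_congr rfl e1, phi_total, Finset.sum_eq_single M]
  · rw [if_pos (List.take_length), pow_add]; ring
  · intro v hv hne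
    have hv := mem_allWindows.1 hv
    rw [if_neg, zero_mul]
    rw [hwin.length, ← hv.length, List.take_length]
    exact hne
  · intro h; exact absurd (mem_allWindows.2 hwin) h

/-! ### The chain and the columns of a filling as a list of items -/

lemma conj_le (n : ℕ) (lam : Fin n → ℕ) (i : ℕ) : conj n lam i ≤ n := by
  unfold conj
  exact (Finset.card_filter_le _ _).trans (by simp)

lemma conj_anti (n : ℕ) (lam : Fin n → ℕ) {i j : ℕ} (h : i ≤ j) : conj n lam j ≤ conj n lam i := by
  unfold conj
  refine Finset.card_le_card fun x hx => ?_
  simp only [Finset.mem_filter, Finset.mem_univ, true_and] at hx ⊢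
  omega

lemma conj_one {n : ℕ} {lam : Fin n → ℕ} (hpos : ∀ i, 0 < lam i) : conj n lam 1 = n := by
  unfold conj
  rw [Finset.filter_true_of_mem (fun x _ => (show 1 ≤ lam x from hpos x))]
  simp

lemma conj_pos {n : ℕ} (hn : 0 < n) {lam : Fin n → ℕ} {i : ℕ} (hi : i ≤ lamOne n lam) :
    1 ≤ conj n lam i := by
  obtain ⟨j, -, hj⟩ := Finset.exists_mem_eq_sup (Finset.univ : Finset (Fin n))
    ⟨⟨0, hn⟩, Finset.mem_univ _⟩ lam
  unfold conj
  rw [Nat.one_le_iff_ne_zero, Finset.card_ne_zero]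
  refine ⟨j, ?_⟩
  simp only [Finset.mem_filter, Finset.mem_univ, true_and]
  rw [← hj]; exact hi

lemma lamOne_pos {n : ℕ} (hn : 0 < n) {lam : Fin n → ℕ} (hpos : ∀ i, 0 < lam i) :
    1 ≤ lamOne n lam :=
  (hpos ⟨0, hn⟩).trans_le (Finset.le_sup (f := lam) (Finset.mem_univ _))

lemma good_prime {n j : ℕ} (hj : j ≤ n) : ∀ t ∈ gammaPrime j, GoodR n t := by
  intro t ht
  simp only [gammaPrime, List.mem_map, List.mem_range] at ht
  obtain ⟨r, hr, rfl⟩ := ht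
  obtain ⟨j, rfl⟩ : ∃ a, j = a + 1 := ⟨j - 1, by omega⟩
  exact GoodR.neg r j (by omega) (by omega)

lemma good_JK {n j k : ℕ} (hj : j < k) (hk : k ≤ n) : ∀ t ∈ gammaJK n (j + 1) k, GoodR n t := by
  intro t ht
  simp only [gammaJK, List.mem_append, List.mem_map, List.mem_range, List.mem_singleton] at ht
  rcases ht with ((ht | ⟨r, hr, rfl⟩) | rfl) | ⟨r, hr, rfl⟩
  · exact good_prime (by omega) t ht
  · have := GoodR.neg (n := n) j (k + r) (by omega) (by omega)
    rwa [show k + r + 1 = k + 1 + r by omega] at this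
  · exact GoodR.bar j (by omega)
  · have := GoodR.pos (n := n) j (n - r - 1) (by omega) (by omega)
    rwa [show n - r - 1 + 1 = n - r by omega] at this

lemma good_chain {n k : ℕ} (hk : k ≤ n) : ∀ t ∈ gammaChain n k, GoodR n t := by
  intro t ht
  simp only [gammaChain, List.mem_append, List.mem_flatten, List.mem_map, List.mem_range] at ht
  rcases ht with ⟨l, ⟨r, hr, rfl⟩, ht⟩ | ⟨l, ⟨r, hr, rfl⟩, ht⟩
  · exact good_prime (by omega) t ht
  · exact good_JK hr hk t ht

lemma good_lambda (n : ℕ) (lam : Fin n → ℕ) : ∀ t ∈ lambdaChain n lam, GoodR n t := by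
  intro t ht
  simp only [lambdaChain, List.mem_flatten, List.mem_map, List.mem_range] at ht
  obtain ⟨l, ⟨r, hr, rfl⟩, ht⟩ := ht
  exact good_chain (conj_le _ _ _) t ht

/-- The items of the block of columns `C^i`; the last column `C_{1,1}` gets an empty factor. -/
def blk (n : ℕ) (lam : Fin n → ℕ) (F : Filling) (i : ℕ) : List Item :=
  (List.range (conj n lam i - 1)).map (fun s => (gammaPrime (s + 2), F.Cp i (s + 2))) ++
    if i = 1 then [([], F.Cu 1 1)]
    else (List.range (conj n lam i)).map
      (fun s => (gammaJK n (s + 1) (conj n lam i), F.Cu i (s + 1)))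

/-- All items of the filling, from left to right. -/
def items (n : ℕ) (lam : Fin n → ℕ) (F : Filling) : List Item :=
  ((List.range (lamOne n lam)).map (fun t => blk n lam F (lamOne n lam - t))).flatten

lemma items_snd (n : ℕ) (lam : Fin n → ℕ) (F : Filling) :
    (items n lam F).map Prod.snd = colList n lam F := by
  unfold items colList
  rw [List.map_flatten, List.map_map]
  congr 1
  refine List.map_congr_left fun t _ => ?_
  simp only [Function.comp, blk, List.map_append, List.map_map]
  congr 1
  split_ifs
  · rfl
  · rw [List.map_map]; rfl

lemma refls_flat {α : Type*} (l : List α) (b : α → List Item) :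
    refls ((l.map b).flatten) = (l.map (fun t => refls (b t))).flatten := by
  induction l with
  | nil => rfl
  | cons a l ih => simp [refls_append, ih]

lemma refls_blk {n : ℕ} {lam : Fin n → ℕ} {F : Filling} {i : ℕ} (hi : i ≠ 1) :
    refls (blk n lam F i) = gammaChain n (conj n lam i) := by
  unfold blk gammaChain
  rw [if_neg hi, refls_append]
  simp only [refls, List.map_map]
  rfl

lemma lambda_eq {n : ℕ} (hn : 0 < n) {lam : Fin n → ℕ} (hpos : ∀ i, 0 < lam i) (F : Filling) :
    lambdaChain n lam = refls (items n lam F) ++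
      ((List.range n).map (fun r => gammaJK n (r + 1) n)).flatten := by
  unfold lambdaChain items
  obtain ⟨m, hm⟩ : ∃ m, lamOne n lam = m + 1 :=
    ⟨lamOne n lam - 1, by have := lamOne_pos hn hpos; omega⟩
  rw [refls_flat, hm, List.range_succ, List.map_append, List.map_append, List.flatten_append,
    List.flatten_append, List.append_assoc]
  congr 1
  · congr 1
    refine List.map_congr_left fun t ht => ?_
    rw [List.mem_range] at ht
    rw [refls_blk (by omega)]
  · simp only [List.map_singleton, show m + 1 - m = 1 by omega, List.flatten_singleton]
    unfold gammaChain blk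
    rw [conj_one hpos, if_pos rfl, refls_append]
    congr 1
    simp [refls, Function.comp_def]

lemma mem_ok {n : ℕ} {D : List ℤ} (h : ∀ a ∈ D, 1 ≤ a.natAbs ∧ a.natAbs ≤ n) :
    ∀ p, p < D.length → Ok n (ent D p) := by
  intro p hp
  have : ent D p ∈ D := by
    rw [ent, List.getD_eq_getElem _ _ hp]; exact List.getElem_mem _
  have := h _ this
  unfold Ok
  omega

section
variable {n : ℕ} {lam : Fin n → ℕ} {F : Filling} {i : ℕ}

lemma CpNxt_length (hF : F ∈ FSet n lam) {i k : ℕ} (hv : validP n lam i k) :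
    (CpNxt n lam F i k).length = conj n lam i := by
  obtain ⟨hP, hU, -⟩ := hF
  obtain ⟨h1, h2, h3, h4⟩ := hv
  unfold CpNxt
  split_ifs with h
  · exact (hP _ _).1 ⟨h1, h2, by omega, by omega⟩
  · exact (hU _ _).1 ⟨h1, h2, by omega, by omega, fun _ => rfl⟩

lemma CuNxt_length (hn : 0 < n) (hF : F ∈ FSet n lam) {i j : ℕ} (hi : 2 ≤ i)
    (hv : validU n lam i j) :
    conj n lam i ≤ (CuNxt n lam F i j).length ∧ (CuNxt n lam F i j).length ≤ n := by
  obtain ⟨hP, hU, -⟩ := hF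
  obtain ⟨h1, h2, h3, h4, h5⟩ := hv
  have hc := conj_anti n lam (show i - 1 ≤ i by omega)
  have hp := conj_pos hn h2
  have hle := conj_le n lam (i - 1)
  unfold CuNxt
  split_ifs with h h'
  · rw [(hU _ _).1 ⟨h1, h2, by omega, by omega, by omega⟩]; exact ⟨le_rfl, conj_le _ _ _⟩
  · rw [(hP _ _).1 ⟨by omega, by omega, by omega, by omega⟩]; exact ⟨hc, hle⟩
  · rw [(hU _ _).1 ⟨by omega, by omega, by omega, by omega, fun _ => rfl⟩]; exact ⟨hc, hle⟩

lemma step_P (hF : F ∈ FSet n lam) {i k : ℕ} (hv : validP n lam i k) {y : Item}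
    (hy : y.2 = CpNxt n lam F i k) : Step n (gammaPrime k, F.Cp i k) y := by
  have hl := CpNxt_length hF hv
  obtain ⟨hP, hU, okP, okU, rowP, rowU, dP, dU, tP, tU⟩ := hF
  have hk := hv.2.2.1
  obtain ⟨j, rfl⟩ : ∃ a, k = a + 1 := ⟨k - 1, by omega⟩
  have hD := (hP _ _).1 hv
  obtain ⟨R, hR, hC⟩ := tP _ _ hv
  intro c v hw hvy
  rw [hy] at hvy ⊢
  refine trans_P (by rw [hD]; exact conj_le _ _ _) (colDistinct_dist (dP _ _ hv))
    (R := R) (by rw [hD]; exact hR) hC (fun p hp => ?_) c hw hvy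
  exact rowP _ _ hv (p + 1) (by omega) (by rw [← hD]; exact hp)

lemma step_U (hn : 0 < n) (hF : F ∈ FSet n lam) {i j : ℕ} (hi : 2 ≤ i) (hv : validU n lam i j)
    {y : Item} (hy : y.2 = CuNxt n lam F i j) :
    Step n (gammaJK n j (conj n lam i), F.Cu i j) y := by
  have hl := CuNxt_length hn hF hi hv
  obtain ⟨hP, hU, okP, okU, rowP, rowU, dP, dU, tP, tU⟩ := hF
  have hk := hv.2.2.1
  obtain ⟨j, rfl⟩ : ∃ a, j = a + 1 := ⟨j - 1, by omega⟩
  have hD := (hU _ _).1 hv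
  obtain ⟨R, hR, hC⟩ := tU _ _ hi hv
  intro c v hw hvy
  rw [hy] at hvy ⊢
  have := trans_U (D := F.Cu i (j + 1)) (C := CuNxt n lam F i (j + 1))
    (by rw [hD]; exact conj_le _ _ _) (colDistinct_dist (dU _ _ hv)) (R := R)
    (mem_ok (okU _ _ hv)) (by rw [hD]; exact hR) (by rw [hD]; exact hl.1) hl.2
    (by rw [hD]; exact hC)
    (fun p hp => rowU _ _ hi hv (p + 1) (by omega) (by rw [← hD]; exact hp)) c hw hvy
  rw [hD] at this
  simp only [hD]
  exact this

/-- The first column of a block. -/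
lemma blk_head (hc : 1 ≤ conj n lam i) {y : Item} (hy : y ∈ (blk n lam F i).head?) :
    y.2 = if 2 ≤ conj n lam i then F.Cp i 2 else F.Cu i 1 := by
  unfold blk at hy
  split_ifs with h
  · obtain ⟨m, hm⟩ : ∃ m, conj n lam i - 1 = m + 1 := ⟨conj n lam i - 2, by omega⟩
    rw [hm, List.range_succ_eq_map] at hy
    simp at hy
    rw [← hy]
  · have h1 : conj n lam i = 1 := by omega
    rw [h1] at hy
    by_cases hi : i = 1
    · subst hi; simp at hy; rw [← hy]
    · simp [hi] at hy; rw [← hy]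

lemma blk_last (hc : 1 ≤ conj n lam i) (hi : i ≠ 1) :
    (blk n lam F i).getLast? = some (gammaJK n (conj n lam i) (conj n lam i),
      F.Cu i (conj n lam i)) := by
  unfold blk
  obtain ⟨m, hm⟩ : ∃ m, conj n lam i = m + 1 := ⟨conj n lam i - 1, by omega⟩
  rw [if_neg hi, hm, List.range_succ, List.map_append]
  simp

lemma blk_ne (hc : 1 ≤ conj n lam i) : blk n lam F i ≠ [] := by
  unfold blk
  split_ifs with h
  · simp
  · intro h'
    simp only [List.append_eq_nil_iff, List.map_eq_nil_iff, List.range_eq_nil] at h'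
    omega

lemma blk_chain (hn : 0 < n) (hF : F ∈ FSet n lam) (hi : 1 ≤ i) (hi' : i ≤ lamOne n lam) :
    List.IsChain (Step n) (blk n lam F i) := by
  have hc := conj_pos hn hi'
  unfold blk
  rw [List.isChain_append]
  refine ⟨?_, ?_, ?_⟩
  · rw [List.isChain_iff_getElem]
    intro s hs
    simp only [List.length_map, List.length_range] at hs
    simp only [List.getElem_map, List.getElem_range]
    refine step_P hF ⟨hi, hi', by omega, by omega⟩ ?_
    unfold CpNxt
    rw [if_pos (by omega)]
  · split_ifs with h
    · simp
    · rw [List.isChain_iff_getElem]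
      intro s hs
      simp only [List.length_map, List.length_range] at hs
      simp only [List.getElem_map, List.getElem_range]
      refine step_U hn hF (by omega) ⟨hi, hi', by omega, by omega, by omega⟩ ?_
      unfold CuNxt
      rw [if_pos (by omega)]
  · intro x hx y hy
    have hy2 : y.2 = F.Cu i 1 := by
      split_ifs at hy with h
      · subst h; simp at hy; rw [← hy]
      · obtain ⟨m, hm⟩ : ∃ m, conj n lam i = m + 1 := ⟨conj n lam i - 1, by omega⟩
        rw [hm, List.range_succ_eq_map] at hy
        simp at hy; rw [← hy]
    rcases Nat.lt_or_ge (conj n lam i) 2 with h2 | h2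
    · rw [show conj n lam i - 1 = 0 by omega] at hx
      simp at hx
    · obtain ⟨m, hm⟩ : ∃ m, conj n lam i - 1 = m + 1 := ⟨conj n lam i - 2, by omega⟩
      rw [hm, List.range_succ, List.map_append] at hx
      simp at hx
      rw [← hx]
      refine step_P hF ⟨hi, hi', by omega, by omega⟩ ?_
      unfold CpNxt
      rw [if_neg (by omega), hy2]

lemma items_chain (hn : 0 < n) (hF : F ∈ FSet n lam) :
    List.IsChain (Step n) (items n lam F) := by
  unfold items
  rw [List.isChain_flatten]
  · constructor
    · intro l hl
      simp only [List.mem_map, List.mem_range] at hl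
      obtain ⟨t, ht, rfl⟩ := hl
      exact blk_chain hn hF (by omega) (by omega)
    · rw [List.isChain_iff_getElem]
      intro s hs
      simp only [List.length_map, List.length_range] at hs
      simp only [List.getElem_map, List.getElem_range]
      intro x hx y hy
      set i := lamOne n lam - s with hi
      have hc := conj_pos (lam := lam) (i := i) hn (by omega)
      have hc' := conj_pos (lam := lam) (i := i - 1) hn (by omega)
      rw [show lamOne n lam - (s + 1) = i - 1 by omega] at hy
      have hy2 := blk_head hc' hy
      rw [blk_last hc (by omega)] at hx
      simp at hx
      rw [← hx]
      refine step_U hn hF (by omega) ⟨by omega, by omega, hc, le_rfl, by omega⟩ ?_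
      unfold CuNxt
      rw [if_neg (by omega), hy2]
  · intro h
    simp only [List.mem_map, List.mem_range] at h
    obtain ⟨t, ht, h⟩ := h
    exact blk_ne (conj_pos hn (by omega)) h

lemma items_last (hn : 0 < n) (hpos : ∀ i, 0 < lam i) :
    (items n lam F).getLast? = some ([], F.Cu 1 1) := by
  unfold items
  obtain ⟨m, hm⟩ : ∃ m, lamOne n lam = m + 1 :=
    ⟨lamOne n lam - 1, by have := lamOne_pos hn hpos; omega⟩
  rw [hm, List.range_succ, List.map_append, List.flatten_append]
  simp [blk]

lemma win_last (hn : 0 < n) (hpos : ∀ i, 0 < lam i) (hF : F ∈ FSet n lam) : Win n (F.Cu 1 1) := by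
  obtain ⟨hP, hU, okP, okU, rowP, rowU, dP, dU, tP, tU⟩ := hF
  have hv : validU n lam 1 1 :=
    ⟨le_rfl, lamOne_pos hn hpos, le_rfl, by rw [conj_one hpos]; omega, fun _ => rfl⟩
  have hl : (F.Cu 1 1).length = n := by rw [(hU _ _).1 hv, conj_one hpos]
  have ok := mem_ok (okU _ _ hv)
  have hd := colDistinct_dist (dU _ _ hv)
  rw [hl] at ok
  refine ⟨hl, fun p hp => (ok p hp).1, fun p hp => (ok p hp).2.1, fun p hp => (ok p hp).2.2, ?_⟩
  intro p q hp hq hpq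
  exact hd p q (by omega) (by omega) hpq

end

/-! ### The column conditions say that the filling map takes the value `F` -/

lemma checks_append (o : ℕ) (A B : List Item) :
    checks o (A ++ B) = checks o A ++ checks (o + (refls A).length) B := by
  induction A generalizing o with
  | nil => simp [checks]
  | cons x A ih => simp [checks, ih, refls_cons, Nat.add_assoc]

lemma refls_map_length (f : ℕ → Item) (m : ℕ) :
    (refls ((List.range m).map f)).length = ∑ r ∈ Finset.range m, (f r).1.length := by
  induction m with
  | zero => simp
  | succ m ih => rw [List.range_succ, List.map_append, refls_append, List.length_append, ih,
      Finset.sum_range_succ]; simp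

lemma refls_flatten_length (b : ℕ → List Item) (m : ℕ) :
    (refls ((List.range m).map b).flatten).length
      = ∑ r ∈ Finset.range m, (refls (b r)).length := by
  induction m with
  | zero => simp
  | succ m ih => rw [List.range_succ, List.map_append, List.flatten_append, refls_append,
      List.length_append, ih, Finset.sum_range_succ]; simp

lemma mem_checks_map (f : ℕ → Item) (m o : ℕ) (q : ℕ × List ℤ) :
    q ∈ checks o ((List.range m).map f) ↔
      ∃ s < m, q = (o + ∑ r ∈ Finset.range s, (f r).1.length, (f s).2) := by
  induction m with
  | zero => simp [checks]
  | succ m ih =>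
    rw [List.range_succ, List.map_append, checks_append, List.mem_append, ih, refls_map_length]
    simp only [List.map_singleton, checks, List.mem_singleton, Nat.lt_succ_iff_lt_or_eq, or_and_right,
      exists_or, exists_eq_left]

lemma mem_checks_flatten (b : ℕ → List Item) (m o : ℕ) (q : ℕ × List ℤ) :
    q ∈ checks o ((List.range m).map b).flatten ↔
      ∃ t < m, q ∈ checks (o + ∑ r ∈ Finset.range t, (refls (b r)).length) (b t) := by
  induction m with
  | zero => simp [checks]
  | succ m ih =>
    rw [List.range_succ, List.map_append, List.flatten_append, checks_append, List.mem_append, ih,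
      refls_flatten_length]
    simp only [List.map_singleton, List.flatten_singleton, Nat.lt_succ_iff_lt_or_eq, or_and_right,
      exists_or, exists_eq_left]

section
variable {n : ℕ} {lam : Fin n → ℕ} {F : Filling}

lemma offsetBlock_eq {t : ℕ} (ht : t < lamOne n lam) :
    ∑ r ∈ Finset.range t, (refls (blk n lam F (lamOne n lam - r))).length
      = offsetBlock n lam (lamOne n lam - t) := by
  unfold offsetBlock
  induction t with
  | zero => simp
  | succ t ih =>
    rw [Finset.sum_range_succ, ih (by omega), refls_blk (by omega),
      Finset.sum_eq_sum_Ico_succ_bot (a := lamOne n lam - (t + 1) + 1) (by omega), Nat.add_comm,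
      show lamOne n lam - (t + 1) + 1 = lamOne n lam - t by omega]

lemma primed_length (c : ℕ) :
    ∑ k ∈ Finset.Ico 2 (c + 1), (gammaPrime k).length
      = ∑ r ∈ Finset.range (c - 1), (gammaPrime (r + 2)).length := by
  rw [Finset.sum_Ico_eq_sum_range, show c + 1 - 2 = c - 1 by omega]
  simp only [Nat.add_comm 2]

/-- The conditions attached to the block `C^i`: one for every column, at the offset of its
factor in the chain. -/
lemma mem_checks_blk {i : ℕ} (hi : 1 ≤ i) (hi' : i ≤ lamOne n lam) (hc : 1 ≤ conj n lam i)
    (q : ℕ × List ℤ) :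
    q ∈ checks (offsetBlock n lam i) (blk n lam F i) ↔
      (∃ k, validP n lam i k ∧ q = (offsetP n lam i k, F.Cp i k)) ∨
      (∃ j, validU n lam i j ∧ q = (offsetU n lam i j, F.Cu i j)) := by
  unfold blk
  rw [checks_append, List.mem_append, mem_checks_map, refls_map_length]
  refine or_congr ?_ ?_
  · constructor
    · rintro ⟨s, hs, rfl⟩
      refine ⟨s + 2, ⟨hi, hi', by omega, by omega⟩, ?_⟩
      unfold offsetP
      rw [Finset.sum_Ico_eq_sum_range]
      simp [Nat.add_comm 2]
    · rintro ⟨k, ⟨-, -, h2, hk⟩, rfl⟩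
      obtain ⟨s, rfl⟩ : ∃ s, k = s + 2 := ⟨k - 2, by omega⟩
      refine ⟨s, by omega, ?_⟩
      unfold offsetP
      rw [Finset.sum_Ico_eq_sum_range]
      simp [Nat.add_comm 2]
  · split_ifs with h1
    · subst h1
      simp only [checks, List.mem_singleton]
      have e : offsetU n lam 1 1 = offsetBlock n lam 1
          + ∑ r ∈ Finset.range (conj n lam 1 - 1), (gammaPrime (r + 2)).length := by
        unfold offsetU; rw [primed_length]; simp
      rw [← e]
      constructor
      · rintro rfl
        exact ⟨1, ⟨le_rfl, hi', le_rfl, hc, fun _ => rfl⟩, rfl⟩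
      · rintro ⟨j, hj, rfl⟩
        rw [hj.2.2.2.2 rfl]
    · rw [mem_checks_map]
      have e : ∀ s, offsetU n lam i (s + 1) = offsetBlock n lam i
          + ∑ r ∈ Finset.range (conj n lam i - 1), (gammaPrime (r + 2)).length
          + ∑ r ∈ Finset.range s, (gammaJK n (r + 1) (conj n lam i)).length := by
        intro s
        unfold offsetU
        rw [primed_length, Finset.sum_Ico_eq_sum_range]
        simp [Nat.add_comm 1]
      constructor
      · rintro ⟨s, hs, rfl⟩
        exact ⟨s + 1, ⟨hi, hi', by omega, by omega, by omega⟩, by rw [e]⟩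
      · rintro ⟨j, ⟨-, -, h2, hk, -⟩, rfl⟩
        obtain ⟨s, rfl⟩ : ∃ s, j = s + 1 := ⟨j - 1, by omega⟩
        exact ⟨s, by omega, by rw [e]⟩

lemma mem_checks_items (hn : 0 < n) (q : ℕ × List ℤ) :
    q ∈ checks 0 (items n lam F) ↔
      (∃ i k, validP n lam i k ∧ q = (offsetP n lam i k, F.Cp i k)) ∨
      (∃ i j, validU n lam i j ∧ q = (offsetU n lam i j, F.Cu i j)) := by
  unfold items
  rw [mem_checks_flatten, ← exists_or]
  constructor
  · rintro ⟨t, ht, hq⟩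
    rw [offsetBlock_eq ht, Nat.zero_add,
      mem_checks_blk (by omega) (by omega) (conj_pos hn (by omega))] at hq
    exact ⟨_, hq⟩
  · rintro ⟨i, hq⟩
    have hi : 1 ≤ i ∧ i ≤ lamOne n lam := by
      rcases hq with ⟨k, hk, -⟩ | ⟨k, hk, -⟩
      · exact ⟨hk.1, hk.2.1⟩
      · exact ⟨hk.1, hk.2.1⟩
    refine ⟨lamOne n lam - i, by omega, ?_⟩
    rw [offsetBlock_eq (by omega), Nat.zero_add,
      show lamOne n lam - (lamOne n lam - i) = i by omega,
      mem_checks_blk (by omega) (by omega) (conj_pos hn (by omega))]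
    exact hq

lemma fMap_eq_iff (hn : 0 < n) (hF : F ∈ FSet n lam) (w : List ℤ) (J : Finset ℕ) :
    fMap n lam w J = F ↔ ∀ q ∈ checks 0 (items n lam F), Chk (lambdaChain n lam) w J q := by
  obtain ⟨hP, hU, -⟩ := hF
  simp only [mem_checks_items hn]
  constructor
  · rintro h q (⟨i, k, hv, rfl⟩ | ⟨i, j, hv, rfl⟩)
    · have := congrArg (fun G : Filling => G.Cp i k) h
      simp only [fMap, if_pos hv] at this
      simp only [Chk, (hP i k).1 hv]
      exact this
    · have := congrArg (fun G : Filling => G.Cu i j) h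
      simp only [fMap, if_pos hv] at this
      simp only [Chk, (hU i j).1 hv]
      exact this
  · intro h
    obtain ⟨Cp, Cu⟩ := F
    unfold fMap
    congr 1
    · funext i k
      split_ifs with hv
      · have := h _ (Or.inl ⟨i, k, hv, rfl⟩)
        simp only [Chk, (hP i k).1 hv] at this
        exact this
      · exact ((hP i k).2 hv).symm
    · funext i j
      split_ifs with hv
      · have := h _ (Or.inr ⟨i, j, hv, rfl⟩)
        simp only [Chk, (hU i j).1 hv] at this
        exact this
      · exact ((hU i j).2 hv).symm

end

end

/-- Theorem 4.5 (3): the compression formula: for every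
filling `σ ∈ F(λ)`, the sum of `t^{(ℓ(w)+ℓ(wT)-|T|)/2}(1-t)^{|T|}` over the
fiber `f^{-1}(σ)` in `A(λ)` equals `t^{N(σ)}(1-t)^{des(σ)}`. -/
theorem compression_formula (n : ℕ) (hn : 2 ≤ n) (lam : Fin n → ℕ)
    (hstrict : ∀ i j : Fin n, i < j → lam j < lam i) (hpos : ∀ i, 0 < lam i)
    (F : Filling) (hF : F ∈ FSet n lam) :
    (∑ᶠ (p : List ℤ × Finset ℕ)
        (_ : p ∈ ASet n lam ∧ fMap n lam p.1 p.2 = F),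
      (Polynomial.X : Polynomial ℤ) ^
          ((len p.1 + len (applyAll p.1 (selChain (lambdaChain n lam) p.2)) - p.2.card) / 2) *
        (1 - Polynomial.X) ^ p.2.card)
    = (Polynomial.X : Polynomial ℤ) ^ Nsigma n lam F *
        (1 - Polynomial.X) ^ desSigma n lam F := by
  classical
  have hn0 : 0 < n := by omega
  have hlast := items_last (F := F) hn0 hpos
  have hlast' : ((items n lam F).map Prod.snd).getLastD [] = F.Cu 1 1 := by
    rw [List.getLastD_eq_getLast?, List.getLast?_map, hlast]; rfl
  have key := compress (n := n) (L := items n lam F) (Γ := lambdaChain n lam)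
    (by intro h; rw [h] at hlast; simp at hlast)
    (good_lambda n lam) (lambda_eq hn0 hpos F) (items_chain hn0 hF)
    (by rw [hlast]; rfl) (by rw [hlast']; exact win_last hn0 hpos hF)
  rw [items_snd] at key
  unfold Nsigma desSigma
  rw [← key, ← Finset.sum_product' (s := allWindows n)
    (t := (Finset.range (lambdaChain n lam).length).powerset), ← Finset.sum_filter]
  -- the index set of the fibre sum is the support of the finite double sum
  rw [← finsum_mem_coe_finset]
  refine finsum_congr fun p => ?_
  refine finsum_congr_Prop ?_ fun _ => rfl
  rw [Finset.mem_coe, Finset.mem_filter, Finset.mem_product, Finset.mem_powerset,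
    ← fMap_eq_iff hn0 hF]
  simp only [ASet, Set.mem_ofPred_eq, and_assoc]
end HL
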